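/- There exist a finite alphabet α, a state B ∈ α, and a cellular automaton Φ : α^ℤ → α^ℤ with quiescent state B such that Φ is uniquely ergodic but not asymptotically nilpotent in density. -/

import Mathlib

open MeasureTheory Filter

/-- The Besicovitch pseudometric on `α^ℤ`:
`d_B(x,y) = limsup_{n→∞} |{i ∈ [-n,n] : x_i ≠ y_i}| / (2n+1)`. -/
noncomputable def besicovitchDist {α : Type} [DecidableEq α] (x y : ℤ → α) : ℝ :=
  Filter.limsup (fun n : ℕ =>
      (((Finset.Icc (-(n : ℤ)) (n : ℤ)).filter fun i => x i ≠ y i).card : ℝ) /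
        (2 * (n : ℝ) + 1))
    Filter.atTop

/-!
The automaton is partitioned: in each step a cell sends at most one message to itself and to each
of its two neighbours. Each message carries a tag, namely the address of its cell in a block of `N`
cells and its age modulo `T = N ^ 2`. Messages whose tags belong to the same phase form blocks, and
each block simulates, once every `T` steps, one cell of the very same automaton: the letters that
arrive spell the messages received by the simulated cell, and in each slot of `N` steps a head
passes along the block and executes one instruction of a program which evaluates the local rule. A
tag consists of three numbers below `N`, so the block can hold it in unary, and the local rule
depends on the program only through single bits of instruction codes, so the program can evaluate
itself. A block that does not encode a legal state is destroyed when the head checks it.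

Between the check and the launch of its results a block spends some slots dancing: pairs of cells
share a place, so that every cell is vacant for a while. Hence the messages of level `k + 1` of the
hierarchy of simulations account for those of level `k` with a factor less than `1`, and iterating
over the levels shows that every cell is occupied with density `0`, uniformly in the initial
configuration. Every invariant measure therefore gives measure `0` to the configurations in which a
given cell is occupied, which leaves only the Dirac measure at the empty configuration.

On the other hand, a configuration with consistent tags and no empty cell can be encoded, with `N`
cells for each of its cells, by another such configuration whose evolution simulates it `T` times
slower. Repeating this `n` times, we find configurations without empty cells at time `T ^ n`, and
thus images without empty cells at arbitrarily late times.
-/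

namespace SelfSimulatingCA

/-! ### Unique ergodicity from vanishing occupation densities -/

section Ergodic

theorem measure_eq_zero_of_sum_indicator_le {X : Type*} [MeasurableSpace X] {μ : Measure X}
    [IsFiniteMeasure μ] {f : X → X} (hf : MeasurePreserving f μ μ) {A : Set X}
    (hA : MeasurableSet A)
    (hd : ∀ ε : ℝ, 0 < ε → ∃ C : ℝ, ∀ (x : X) (W : ℕ),
      ∑ t ∈ Finset.range W, A.indicator (1 : X → ℝ) (f^[t] x) ≤ ε * W + C) :
    μ A = 0 := by
  have hintegral : ∀ t, ∫ x, A.indicator (1 : X → ℝ) (f^[t] x) ∂μ = μ.real A := fun t => by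
    have hpre : (fun x => A.indicator (1 : X → ℝ) (f^[t] x)) = (f^[t] ⁻¹' A).indicator 1 := rfl
    rw [hpre, integral_indicator_one ((hf.iterate t).measurable hA),
      (hf.iterate t).measureReal_preimage hA.nullMeasurableSet]
  have hintegrable : ∀ t, Integrable (fun x => A.indicator (1 : X → ℝ) (f^[t] x)) μ := fun t =>
    (integrable_const (1 : ℝ)).indicator ((hf.iterate t).measurable hA)
  have hsum : ∀ ε : ℝ, 0 < ε → ∃ C : ℝ, ∀ W : ℕ,
      (W : ℝ) * μ.real A ≤ (ε * W + C) * μ.real Set.univ := fun ε hε => by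
    obtain ⟨C, hC⟩ := hd ε hε
    refine ⟨C, fun W => ?_⟩
    calc (W : ℝ) * μ.real A
        = ∑ t ∈ Finset.range W, ∫ x, A.indicator (1 : X → ℝ) (f^[t] x) ∂μ := by simp [hintegral]
      _ = ∫ x, ∑ t ∈ Finset.range W, A.indicator (1 : X → ℝ) (f^[t] x) ∂μ :=
          (integral_finsetSum _ fun t _ => hintegrable t).symm
      _ ≤ ∫ _, (ε * W + C) ∂μ :=
          integral_mono (integrable_finsetSum _ fun t _ => hintegrable t) (integrable_const _)
            fun x => hC x W
      _ = (ε * W + C) * μ.real Set.univ := by rw [integral_const, smul_eq_mul, mul_comm]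
  rw [← measureReal_eq_zero_iff]
  by_contra hne
  have hpos : 0 < μ.real A := lt_of_le_of_ne measureReal_nonneg (Ne.symm hne)
  have : 0 ≤ μ.real Set.univ := measureReal_nonneg
  set ε := μ.real A / (2 * (μ.real Set.univ + 1)) with hε
  have hε_mul : ε * μ.real Set.univ ≤ μ.real A / 2 := by
    rw [hε, div_mul_eq_mul_div, div_le_div_iff₀ (by positivity) two_pos]
    nlinarith
  obtain ⟨C, hC⟩ := hsum ε (by positivity)
  obtain ⟨W, hW⟩ := exists_nat_gt (C * μ.real Set.univ / (μ.real A / 2))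
  rw [div_lt_iff₀ (by positivity)] at hW
  have hmul := mul_le_mul_of_nonneg_left hε_mul (Nat.cast_nonneg (α := ℝ) W)
  linarith [hC W]

theorem eq_dirac_of_ae_eq {X : Type*} [MeasurableSpace X] {μ : Measure X} [IsProbabilityMeasure μ]
    {a : X} (h : ∀ᵐ x ∂μ, x = a) : μ = Measure.dirac a :=
  calc μ = μ.map id := Measure.map_id.symm
    _ = μ.map fun _ => a := Measure.map_congr h
    _ = Measure.dirac a := by rw [Measure.map_const, measure_univ, one_smul]

theorem existsUnique_invariant_of_sum_indicator_le {ι α : Type*} [Countable ι] [MeasurableSpace α]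
    [MeasurableSingletonClass α] {Φ : (ι → α) → (ι → α)} (hΦ : Measurable Φ) {b : ι → α}
    (hb : Φ b = b)
    (hd : ∀ i, ∀ ε : ℝ, 0 < ε → ∃ C : ℝ, ∀ (x : ι → α) (W : ℕ),
      ∑ t ∈ Finset.range W, {y : ι → α | y i ≠ b i}.indicator (1 : (ι → α) → ℝ) (Φ^[t] x)
        ≤ ε * W + C) :
    ∃! μ : Measure (ι → α), IsProbabilityMeasure μ ∧
      ∀ A : Set (ι → α), MeasurableSet A → μ (Φ ⁻¹' A) = μ A := by
  refine ⟨Measure.dirac b, ⟨inferInstance, fun A hA => ?_⟩, ?_⟩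
  · rw [← Measure.map_apply hΦ hA, Measure.map_dirac' hΦ, hb]
  · rintro μ ⟨_, hinv⟩
    have hpres : MeasurePreserving Φ μ μ :=
      ⟨hΦ, Measure.ext fun A hA => (Measure.map_apply hΦ hA).trans (hinv A hA)⟩
    refine eq_dirac_of_ae_eq ?_
    have hmeas : ∀ i, MeasurableSet {y : ι → α | y i ≠ b i} := fun i =>
      (measurableSet_singleton (b i)).compl.preimage (measurable_pi_apply i)
    have hcoord : ∀ i, ∀ᵐ x ∂μ, x i = b i := fun i =>
      measure_eq_zero_of_sum_indicator_le hpres (hmeas i) (hd i)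
    filter_upwards [ae_all_iff.2 hcoord] with x hx using funext hx

end Ergodic

theorem besicovitchDist_eq_one_of_forall_ne {α : Type} [DecidableEq α] {x y : ℤ → α}
    (h : ∀ j, x j ≠ y j) : besicovitchDist x y = 1 := by
  have hconst : ∀ n : ℕ, (((Finset.Icc (-(n : ℤ)) (n : ℤ)).filter fun i => x i ≠ y i).card : ℝ) /
      (2 * (n : ℝ) + 1) = 1 := fun n => by
    rw [Finset.filter_true_of_mem fun i _ => h i, Int.card_Icc,
      show ((n : ℤ) + 1 - -(n : ℤ)).toNat = 2 * n + 1 by omega]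
    push_cast
    exact div_self (by positivity)
  simp only [besicovitchDist, hconst, limsup_const]

/-! ### Hierarchies of simulations -/

/-- The direction in which a message travels: to the left neighbour, to the sending cell itself,
or to the right neighbour. -/
inductive Dir | L | C | R
deriving DecidableEq

instance : Fintype Dir := ⟨{.L, .C, .R}, by intro d; cases d <;> decide⟩

/-- The displacement of a message travelling in a given direction. -/
def Dir.offset : Dir → ℤ
  | .L => -1
  | .C => 0
  | .R => 1

theorem Dir.abs_offset_le_one (d : Dir) : |d.offset| ≤ 1 := by cases d <;> simp [Dir.offset]

/-- A message is tagged with the address of its cell inside a block of `N` cells and with its age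
inside a period of `T` steps. -/
abbrev Tag (N T : ℕ) := ZMod N × ZMod T

/-- The state of a cell of a partitioned automaton: for each direction at most one message, made of
a tag and a payload in `Y`, that has just arrived from that direction. -/
abbrev CellState (N T : ℕ) (Y : Type) := Dir → Option (Tag N T × Y)

/-- Space-time diagrams: `z t j` is the state of cell `j` at time `t`. -/
abbrev Diagram (N T : ℕ) (Y : Type) := ℕ → ℤ → CellState N T Y

open Classical in
/-- The Iverson bracket. -/
noncomputable def iverson (P : Prop) : ℕ := if P then 1 else 0

section Messages

variable {N T : ℕ} {Y : Type}

/-- Space-time diagrams of the partitioned automaton with local rule `out` in which messages may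
get lost but are never created. -/
def IsLossyOrbit (out : CellState N T Y → CellState N T Y) (z : Diagram N T Y) : Prop :=
  ∀ t j d m, z (t + 1) j d = some m → out (z t (j - d.offset)) d = some m

/-- Cell `j` holds a message at time `t`. -/
def Occupied (z : Diagram N T Y) (t : ℕ) (j : ℤ) : Prop := ∃ d m, z t j d = some m

/-- The phase of a tag seen at `(t, j)`: the origin, modulo `N` and `T`, of the block that the tag
claims to belong to. Messages of one phase form an independent layer. -/
def phase (t : ℕ) (j : ℤ) (g : Tag N T) : Tag N T := ((j : ZMod N) - g.1, (t : ZMod T) - g.2)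

/-- Cell `j` holds a message of phase `p` at time `t`. -/
def OccupiedIn (p : Tag N T) (z : Diagram N T Y) (t : ℕ) (j : ℤ) : Prop :=
  ∃ d m, z t j d = some m ∧ phase t j m.1 = p

/-- Some message sent by cell `j` at time `t` arrives. -/
def Emits (z : Diagram N T Y) (t : ℕ) (j : ℤ) : Prop := ∃ d m, z (t + 1) (j + d.offset) d = some m

/-- Some message of phase `p` sent by cell `j` at time `t` arrives. -/
def EmitsIn (p : Tag N T) (z : Diagram N T Y) (t : ℕ) (j : ℤ) : Prop :=
  ∃ d m, z (t + 1) (j + d.offset) d = some m ∧ phase (t + 1) (j + d.offset) m.1 = p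

theorem OccupiedIn.occupied {p : Tag N T} {z : Diagram N T Y} {t : ℕ} {j : ℤ}
    (h : OccupiedIn p z t j) : Occupied z t j :=
  let ⟨d, m, hm, _⟩ := h
  ⟨d, m, hm⟩

theorem EmitsIn.emits {p : Tag N T} {z : Diagram N T Y} {t : ℕ} {j : ℤ}
    (h : EmitsIn p z t j) : Emits z t j :=
  let ⟨d, m, hm, _⟩ := h
  ⟨d, m, hm⟩

/-- The number of time steps before `W` at which cell `j` holds a message. -/
noncomputable def occupationTime (z : Diagram N T Y) (j : ℤ) (W : ℕ) : ℕ :=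
  ∑ t ∈ Finset.range W, iverson (Occupied z t j)

theorem iverson_le_one (P : Prop) : iverson P ≤ 1 := by
  unfold iverson
  split_ifs <;> omega

theorem occupationTime_le_sum_phases [NeZero N] [NeZero T] (z : Diagram N T Y) (j : ℤ) (W : ℕ) :
    occupationTime z j W ≤
      ∑ p : Tag N T, ∑ t ∈ Finset.range W, iverson (OccupiedIn p z t j) := by
  rw [occupationTime, Finset.sum_comm]
  refine Finset.sum_le_sum fun t _ => ?_
  by_cases h : Occupied z t j
  · obtain ⟨d, m, hm⟩ := h
    have hphase : iverson (OccupiedIn (phase t j m.1) z t j) = 1 := if_pos ⟨d, m, hm, rfl⟩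
    calc iverson (Occupied z t j) ≤ 1 := iverson_le_one _
      _ = iverson (OccupiedIn (phase t j m.1) z t j) := hphase.symm
      _ ≤ _ := Finset.single_le_sum (f := fun p => iverson (OccupiedIn p z t j))
        (fun _ _ => Nat.zero_le _) (Finset.mem_univ _)
  · simp [iverson, h]

end Messages

/-- The partitioned automaton `out` simulates itself, with losses, on blocks of `N` cells and `T`
steps: `decode p z` is the simulated diagram carried by the messages of phase `p` of the diagram
`z`. In each period of an occupied simulated cell, each of its `N` cells is vacant at least `V`
times, up to an error of at most `Q` for each neighbouring occupied simulated cell. -/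
structure SelfSimulation (N T V Q : ℕ) {Y : Type} (out : CellState N T Y → CellState N T Y)
    (decode : Tag N T → Diagram N T Y → Diagram N T Y) : Prop where
  sixteen_le : 16 ≤ N
  four_dvd : 4 ∣ N
  two_dvd_period : 2 ∣ T
  two_mul_le_period : 2 * N ≤ T
  vacancy_le : V ≤ T
  six_mul_lt_vacancy : 6 * Q < V
  tag_eq_add : ∀ s d m, out s d = some m →
    (∃ d' m', s d' = some m') ∧
      ∀ d' m', s d' = some m' → m.1 = m'.1 + ((d.offset : ZMod N), 1)
  isLossyOrbit_decode : ∀ p z, IsLossyOrbit out z → IsLossyOrbit out (decode p z)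
  occupiedIn_of_decode : ∀ p z θ X, Occupied (decode p z) θ X → ∀ a : ℕ, a < N →
    OccupiedIn p z (p.2.val + T * θ) (p.1.val + N * X + a)
  exists_emitsIn_block : ∀ p z, IsLossyOrbit out z → ∀ θ X, Emits (decode p z) θ X → ∀ τ < T,
    ∃ j, p.1.val + N * (X - 1) ≤ j ∧ j < p.1.val + N * (X + 2) ∧
      EmitsIn p z (p.2.val + T * θ + τ) j
  exists_emitsIn_near : ∀ p z, IsLossyOrbit out z → ∀ θ X, Emits (decode p z) θ X →
    ∀ τ < T - N, ∀ a : ℕ, a < N →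
      ∃ j, |j - (p.1.val + N * X + a)| ≤ 1 ∧ EmitsIn p z (p.2.val + T * θ + τ) j
  sum_occupiedIn_le : ∀ p z, IsLossyOrbit out z → ∀ θ X, ∀ a : ℕ, a < N →
    ∑ τ ∈ Finset.range T,
        iverson (OccupiedIn p z (p.2.val + T * (θ + 1) + τ) (p.1.val + N * X + a)) ≤
      (T - V) * iverson (Occupied (decode p z) (θ + 1) X) +
        Q * ∑ d : Dir, (iverson (Occupied (decode p z) (θ + 1) (X + d.offset)) +
          iverson (Occupied (decode p z) θ (X + d.offset)))

/-- The cells of the `k`-fold simulated automaton: `inside p o` is the cell which is seen at `o`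
after decoding phase `p`. -/
inductive Node (N T : ℕ) : ℕ → Type
  | event (t : ℕ) (j : ℤ) : Node N T 0
  | inside {k : ℕ} (p : Tag N T) (o : Node N T k) : Node N T (k + 1)

namespace Node

variable {N T : ℕ} {Y : Type}

/-- The first time step of the region of the original diagram which represents a node. -/
def time : {k : ℕ} → Node N T k → ℕ
  | _, event t _ => t
  | _, inside p o => p.2.val + T * o.time

/-- The leftmost cell of the region of the original diagram which represents a node. -/
def pos : {k : ℕ} → Node N T k → ℤ
  | _, event _ j => j
  | _, inside p o => p.1.val + N * o.pos

/-- The node holds a message after decoding. -/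
def Occupied (decode : Tag N T → Diagram N T Y → Diagram N T Y) :
    {k : ℕ} → Diagram N T Y → Node N T k → Prop
  | _, z, event t j => SelfSimulatingCA.Occupied z t j
  | _, z, inside p o => o.Occupied decode (decode p z)

/-- The node sends a message that arrives, after decoding. -/
def Emits (decode : Tag N T → Diagram N T Y → Diagram N T Y) :
    {k : ℕ} → Diagram N T Y → Node N T k → Prop
  | _, z, event t j => SelfSimulatingCA.Emits z t j
  | _, z, inside p o => o.Emits decode (decode p z)

/-- The region of the node starts after one full period, at time `W` at the latest, and at
distance less than `3 * N ^ k` from column `j`. -/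
def InWindow (j : ℤ) (W : ℕ) {k : ℕ} (o : Node N T k) : Prop :=
  T ^ k ≤ o.time ∧ o.time ≤ W ∧ |o.pos - j| ≤ 3 * (N : ℤ) ^ k - 3

/-- The node reached by a message sent in direction `d`. -/
def child (d : Dir) : {k : ℕ} → Node N T k → Node N T k
  | _, event t j => event (t + 1) (j + d.offset)
  | _, inside p o => inside p (o.child d)

theorem InWindow.inside {k : ℕ} {o : Node N T k} {p : Tag N T} {d : Dir} {j : ℤ}
    {W B : ℕ} (hN : 16 ≤ N) (hp : p.2.val < T)
    (h : o.InWindow ((j - p.1.val) / N + d.offset) (W / T + 1 + B)) :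
    (inside p o).InWindow j (W + (T + T * B + T)) := by
  obtain ⟨hstart, hend, hdist⟩ := h
  refine ⟨?_, ?_, ?_⟩
  · simp only [time, pow_succ']
    have hmul := Nat.mul_le_mul_left T hstart
    omega
  · simp only [time]
    have hmul := Nat.mul_le_mul_left T hend
    have hdiv := Nat.mul_div_le W T
    have hdistrib : T * (W / T + 1 + B) = T * (W / T) + T + T * B := by ring
    omega
  · have hN' : (16 : ℤ) ≤ N := by exact_mod_cast hN
    simp only [pos, pow_succ]
    have hle := Int.mul_ediv_self_le (x := j - p.1.val) (k := N) (by omega)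
    have hlt := Int.lt_mul_ediv_self_add (x := j - p.1.val) (k := N) (by omega)
    have hd := d.abs_offset_le_one
    rw [abs_le] at hdist hd ⊢
    constructor <;> nlinarith

theorem exists_child_eq [NeZero N] [NeZero T]
    {decode : Tag N T → Diagram N T Y → Diagram N T Y} {k : ℕ} {z : Diagram N T Y}
    {o : Node N T k} (h : o.Occupied decode z) (htime : T ^ k ≤ o.time) :
    ∃ (e : Node N T k) (d : Dir), e.child d = o ∧ e.Emits decode z ∧ e.time ≤ o.time ∧
      |e.pos - o.pos| ≤ (N : ℤ) ^ k := by
  induction o generalizing z with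
  | event t j =>
    obtain ⟨t, rfl⟩ : ∃ s, t = s + 1 := ⟨t - 1, by simp only [time, pow_zero] at htime; omega⟩
    obtain ⟨d, m, hm⟩ := h
    refine ⟨event t (j - d.offset), d, ?_, ⟨d, m, ?_⟩, Nat.le_succ t, ?_⟩
    · simp only [child, sub_add_cancel]
    · rwa [sub_add_cancel]
    · simpa [pos] using d.abs_offset_le_one
  | @inside k p o ih =>
    have hT : 0 < T := NeZero.pos T
    have htime' : T ^ k ≤ o.time := by
      have hp : p.2.val < T := ZMod.val_lt _
      rw [time, pow_succ'] at htime
      by_contra! hlt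
      have hmul := Nat.mul_le_mul_left T (Nat.succ_le_of_lt hlt)
      rw [Nat.mul_succ] at hmul
      omega
    obtain ⟨e, d, rfl, hemit, he_time, he_pos⟩ := ih h htime'
    refine ⟨inside p e, d, rfl, hemit, ?_, ?_⟩
    · simp only [time]
      gcongr
    · have hN : (0 : ℤ) < N := by exact_mod_cast NeZero.pos N
      simp only [pos, add_sub_add_left_eq_sub, ← mul_sub, abs_mul, abs_of_pos hN, pow_succ']
      gcongr

end Node

theorem exists_int_digit {N : ℕ} {b x X L : ℤ} (hN : 0 < N) (hle : b + N * X ≤ x)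
    (hlt : x < b + N * X + N * L) :
    ∃ (X' : ℤ) (a : ℕ), a < N ∧ X ≤ X' ∧ X' < X + L ∧ x = b + N * X' + a := by
  have hN' : (0 : ℤ) < N := by exact_mod_cast hN
  have hdiv := Int.mul_ediv_add_emod (x - b) N
  have hmod_nonneg := Int.emod_nonneg (x - b) hN'.ne'
  have hmod_lt := Int.emod_lt_of_pos (x - b) hN'
  refine ⟨(x - b) / N, ((x - b) % N).toNat, by omega, ?_, ?_, by omega⟩
  · exact (Int.le_ediv_iff_mul_le hN').2 (by linarith)
  · exact (Int.ediv_lt_iff_lt_mul hN').2 (by linarith)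

theorem exists_nat_digit {T b t t₀ L : ℕ} (hT : 0 < T) (hle : b + T * t₀ ≤ t)
    (hlt : 2 * t < 2 * (b + T * t₀) + T * L) :
    ∃ t' τ, τ < T ∧ t₀ ≤ t' ∧ 2 * t' < 2 * t₀ + L ∧ t = b + T * t' + τ := by
  have hdiv := Nat.div_add_mod (t - b) T
  refine ⟨(t - b) / T, (t - b) % T, Nat.mod_lt _ hT, ?_, ?_, by omega⟩
  · rw [Nat.le_div_iff_mul_le hT, mul_comm]
    omega
  · refine Nat.lt_of_mul_lt_mul_left (a := T) ?_
    calc T * (2 * ((t - b) / T)) = 2 * (T * ((t - b) / T)) := by ring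
      _ < 2 * (T * t₀) + T * L := by omega
      _ = T * (2 * t₀ + L) := by ring

theorem abs_sub_lt_of_ediv_eq_ediv {a b h : ℤ} (hh : 0 < h) (heq : a / h = b / h) :
    |a - b| < h := by
  have ha := Int.mul_ediv_add_emod a h
  have hb := Int.mul_ediv_add_emod b h
  rw [heq] at ha
  have ha_nonneg := Int.emod_nonneg a hh.ne'
  have hb_nonneg := Int.emod_nonneg b hh.ne'
  have ha_lt := Int.emod_lt_of_pos a hh
  have hb_lt := Int.emod_lt_of_pos b hh
  rw [abs_lt]
  constructor <;> linarith

theorem sum_range_le_sum_blocks {f : ℕ → ℕ} (hf : ∀ t, f t ≤ 1) {b T : ℕ} (hb : b < T) (W : ℕ) :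
    ∑ t ∈ Finset.range W, f t ≤ 2 * T +
      ∑ θ ∈ Finset.range (W / T), ∑ τ ∈ Finset.range T, f (b + T * (θ + 1) + τ) := by
  have hblocks (n : ℕ) : ∑ t ∈ Finset.range (b + T + T * n), f t =
      ∑ t ∈ Finset.range (b + T), f t +
        ∑ θ ∈ Finset.range n, ∑ τ ∈ Finset.range T, f (b + T * (θ + 1) + τ) := by
    induction n with
    | zero => simp
    | succ n ih =>
      rw [Nat.mul_succ, ← add_assoc, Finset.sum_range_add, ih, Finset.sum_range_succ, add_assoc]
      simp only [Nat.mul_succ, add_assoc, add_comm T]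
  have hhead : ∑ t ∈ Finset.range (b + T), f t ≤ b + T := by
    simpa using Finset.sum_le_card_nsmul (Finset.range (b + T)) f 1 fun t _ => hf t
  have hW : W ≤ b + T + T * (W / T) := by
    have hlt := Nat.lt_mul_div_succ W (b.zero_le.trans_lt hb)
    rw [Nat.mul_succ] at hlt
    omega
  calc ∑ t ∈ Finset.range W, f t
      ≤ ∑ t ∈ Finset.range (b + T + T * (W / T)), f t :=
        Finset.sum_le_sum_of_subset (Finset.range_mono hW)
    _ ≤ _ := by rw [hblocks]; omega

namespace SelfSimulation

variable {N T V Q : ℕ} {Y : Type} {out : CellState N T Y → CellState N T Y}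
  {decode : Tag N T → Diagram N T Y → Diagram N T Y} {k : ℕ} {z : Diagram N T Y}

theorem phase_unique (H : SelfSimulation N T V Q out decode) (hz : IsLossyOrbit out z)
    {p p' : Tag N T} {t : ℕ} {j : ℤ} (h : EmitsIn p z t j) (h' : OccupiedIn p' z t j) :
    p = p' := by
  obtain ⟨d, m, hm, rfl⟩ := h
  obtain ⟨d', m', hm', rfl⟩ := h'
  have htag := (H.tag_eq_add _ _ _ (hz t _ d m hm)).2 d' m' (by simpa using hm')
  simp only [phase, htag, Prod.fst_add, Prod.snd_add]
  ext <;> push_cast <;> ring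

theorem occupied_of_emits (H : SelfSimulation N T V Q out decode) (hz : IsLossyOrbit out z)
    {o : Node N T k} (h : o.Emits decode z) : o.Occupied decode z := by
  induction o generalizing z with
  | event t j =>
    obtain ⟨d, m, hm⟩ := h
    have hsource := (H.tag_eq_add _ _ _ (hz t _ d m hm)).1
    rwa [add_sub_cancel_right] at hsource
  | inside p o ih => exact ih (H.isLossyOrbit_decode p z hz) h

theorem occupiedIn_inside (H : SelfSimulation N T V Q out decode) {p : Tag N T} {o : Node N T k}
    (hocc : ∀ X, o.pos ≤ X → X < o.pos + (N : ℤ) ^ k → Occupied (decode p z) o.time X) {x : ℤ}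
    (hle : (Node.inside p o).pos ≤ x) (hlt : x < (Node.inside p o).pos + (N : ℤ) ^ (k + 1)) :
    OccupiedIn p z (Node.inside p o).time x := by
  have hN : 0 < N := by have := H.sixteen_le; omega
  rw [pow_succ'] at hlt
  obtain ⟨X, a, ha, hX_le, hX_lt, rfl⟩ := exists_int_digit hN hle hlt
  exact H.occupiedIn_of_decode p z _ X (hocc X hX_le hX_lt) a ha

theorem occupied_of_node_occupied (H : SelfSimulation N T V Q out decode) {o : Node N T k}
    (h : o.Occupied decode z) {x : ℤ} (hle : o.pos ≤ x) (hlt : x < o.pos + (N : ℤ) ^ k) :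
    Occupied z o.time x := by
  induction o generalizing z x with
  | event t j =>
    rw [pow_zero] at hlt
    obtain rfl : x = j := le_antisymm (Int.lt_add_one_iff.1 hlt) hle
    exact h
  | inside p o ih => exact (H.occupiedIn_inside (fun X => ih h) hle hlt).occupied

theorem exists_emitsIn_of_emits_inside {k : ℕ} {z : Diagram N T Y}
    (H : SelfSimulation N T V Q out decode) (hz : IsLossyOrbit out z) {p : Tag N T} {o : Node N T k}
    (h : (Node.inside p o).Emits decode z) {t : ℕ} (ht_le : (Node.inside p o).time ≤ t)
    (ht_lt : 2 * t < 2 * (Node.inside p o).time + T ^ (k + 1)) {x : ℤ}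
    (hx_le : (Node.inside p o).pos ≤ x)
    (hx_lt : x < (Node.inside p o).pos + (N : ℤ) ^ (k + 1)) :
    ∃ j, |j - x| ≤ 4 * (N : ℤ) ^ k - 3 ∧ EmitsIn p z t j := by
  have hN16 : (16 : ℤ) ≤ N := by exact_mod_cast H.sixteen_le
  have hTN := H.two_mul_le_period
  rw [pow_succ'] at ht_lt hx_lt
  obtain ⟨X, a, ha, hX_le, hX_lt, rfl⟩ := exists_int_digit (by omega) hx_le hx_lt
  obtain ⟨θ, τ, hτ, hθ_le, hθ_lt, rfl⟩ := exists_nat_digit (by omega) ht_le ht_lt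
  cases o with
  | event t j =>
    simp only [Node.pos, Node.time, pow_zero] at hX_le hX_lt hθ_le hθ_lt
    obtain rfl : X = j := by omega
    obtain rfl : θ = t := by omega
    simp only [Node.time, pow_zero, mul_one] at ht_lt
    simpa using H.exists_emitsIn_near p z hz θ X h τ (by omega) a ha
  | @inside k p' o =>
    obtain ⟨j', hj', hemit⟩ := exists_emitsIn_of_emits_inside H
      (H.isLossyOrbit_decode p z hz) h hθ_le hθ_lt hX_le hX_lt
    obtain ⟨j, hj_le, hj_lt, hj⟩ := H.exists_emitsIn_block p z hz θ j' hemit.emits τ hτ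
    refine ⟨j, ?_, hj⟩
    rw [abs_le] at hj' ⊢
    rw [pow_succ]
    constructor <;> nlinarith

theorem phase_eq_of_emits_inside (H : SelfSimulation N T V Q out decode) (hz : IsLossyOrbit out z)
    {p p' : Tag N T} {o o' : Node N T k} (h : (Node.inside p o).Emits decode z)
    (h' : (Node.inside p' o').Emits decode z)
    (hle : (Node.inside p o).time ≤ (Node.inside p' o').time)
    (htime : 2 * (Node.inside p' o').time < 2 * (Node.inside p o).time + T ^ (k + 1))
    (hpos : 2 * |(Node.inside p o).pos - (Node.inside p' o').pos| < (N : ℤ) ^ (k + 1)) :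
    p = p' := by
  have hN : (16 : ℤ) ≤ N := by exact_mod_cast H.sixteen_le
  obtain ⟨c, hc⟩ : (4 : ℤ) ∣ (N : ℤ) ^ (k + 1) :=
    dvd_pow (by exact_mod_cast H.four_dvd) k.succ_ne_zero
  have hpow : (0 : ℤ) < (N : ℤ) ^ k := by positivity
  have hNc : 4 * (N : ℤ) ^ k ≤ c := by
    have hsucc : (N : ℤ) ^ (k + 1) = N ^ k * N := pow_succ _ _
    nlinarith
  set x := (Node.inside p o).pos
  set x' := (Node.inside p' o').pos
  rw [hc] at hpos
  have hlt : |x - x'| < 2 * c := by linarith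
  rw [abs_lt] at hlt
  -- a cell of the first region that lies deep inside the second one
  obtain ⟨y, hy_le, hy_lt, hy_le', hy_lt'⟩ :
      ∃ y, x ≤ y ∧ y < x + 4 * c ∧ x' + c ≤ y ∧ y ≤ x' + 3 * c := by
    rcases le_total x x' with hxx | hxx
    · exact ⟨x + 3 * c, by linarith, by linarith, by linarith, by linarith⟩
    · exact ⟨x + c, by linarith, by linarith, by linarith, by linarith⟩
  obtain ⟨j, hj, hemit⟩ := H.exists_emitsIn_of_emits_inside hz h hle htime hy_le
    (by rwa [hc])
  rw [abs_le] at hj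
  have hocc' := H.occupied_of_emits (H.isLossyOrbit_decode p' z hz) h'
  have hocc := H.occupiedIn_inside (fun X => H.occupied_of_node_occupied hocc') (x := j)
    (by linarith) (by linarith)
  exact H.phase_unique hz hemit hocc

theorem emits_injOn (H : SelfSimulation N T V Q out decode) (hz : IsLossyOrbit out z)
    {o o' : Node N T k} (h : o.Emits decode z) (h' : o'.Emits decode z)
    (htime : 2 * |(o.time : ℤ) - o'.time| < (T : ℤ) ^ k)
    (hpos : 2 * |o.pos - o'.pos| < (N : ℤ) ^ k) : o = o' := by
  induction o generalizing z with
  | event t j =>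
    cases o' with | event t' j' =>
    simp only [Node.time, Node.pos, pow_zero] at htime hpos
    have ht := abs_nonneg ((t : ℤ) - t')
    have hj := abs_nonneg (j - j')
    obtain rfl : t = t' := by
      exact_mod_cast sub_eq_zero.1 (abs_eq_zero.1 (show |(t : ℤ) - t'| = 0 by omega))
    obtain rfl : j = j' := sub_eq_zero.1 (abs_eq_zero.1 (show |j - j'| = 0 by omega))
    rfl
  | @inside k p o ih =>
    cases o' with | inside p' o' =>
    have hN : (0 : ℤ) < N := by have := H.sixteen_le; omega
    have hT : (0 : ℤ) < T := by have := H.two_mul_le_period; omega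
    have hTk : ((T ^ (k + 1) : ℕ) : ℤ) = (T : ℤ) ^ (k + 1) := Nat.cast_pow _ _
    obtain rfl : p = p' := by
      rcases le_total (Node.inside p o).time (Node.inside p' o').time with hle | hle
      · refine H.phase_eq_of_emits_inside hz h h' hle ?_ hpos
        rw [abs_sub_comm, abs_of_nonneg (by omega)] at htime
        omega
      · refine (H.phase_eq_of_emits_inside hz h' h hle ?_ (by rwa [abs_sub_comm])).symm
        rw [abs_of_nonneg (by omega)] at htime
        omega
    congr 1
    refine ih (H.isLossyOrbit_decode p z hz) h h' ?_ ?_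
    · simp only [Node.time, Nat.cast_add, Nat.cast_mul, add_sub_add_left_eq_sub, ← mul_sub,
        abs_mul, abs_of_pos hT, pow_succ] at htime
      nlinarith
    · simp only [Node.pos, add_sub_add_left_eq_sub, ← mul_sub, abs_mul, abs_of_pos hN,
        pow_succ] at hpos
      nlinarith

theorem sum_occupiedIn_column_le [NeZero T] (H : SelfSimulation N T V Q out decode)
    (hz : IsLossyOrbit out z) (p : Tag N T) (j : ℤ) (W : ℕ) :
    ∑ t ∈ Finset.range W, iverson (OccupiedIn p z t j) ≤ 2 * T +
      ((T - V) * occupationTime (decode p z) ((j - p.1.val) / N) (W / T + 1) +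
      2 * Q * ∑ d : Dir,
        occupationTime (decode p z) ((j - p.1.val) / N + d.offset) (W / T + 1)) := by
  have hN : 0 < N := by have := H.sixteen_le; omega
  have hN' : (0 : ℤ) < N := by exact_mod_cast hN
  obtain ⟨a, ha, hj⟩ : ∃ a : ℕ, a < N ∧ j = p.1.val + N * ((j - p.1.val) / N) + a := by
    have hdiv := Int.mul_ediv_add_emod (j - p.1.val) N
    have hnonneg := Int.emod_nonneg (j - p.1.val) hN'.ne'
    have hlt := Int.emod_lt_of_pos (j - p.1.val) hN'
    exact ⟨((j - p.1.val) % N).toNat, by omega, by omega⟩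
  set X := (j - p.1.val) / (N : ℤ)
  let live (θ : ℕ) (x : ℤ) : ℕ := iverson (Occupied (decode p z) θ x)
  have hnext (x : ℤ) : ∑ θ ∈ Finset.range (W / T), live (θ + 1) x ≤
      occupationTime (decode p z) x (W / T + 1) := by
    rw [occupationTime, Finset.sum_range_succ']
    exact Nat.le_add_right _ _
  have hcur (x : ℤ) : ∑ θ ∈ Finset.range (W / T), live θ x ≤
      occupationTime (decode p z) x (W / T + 1) := by
    rw [occupationTime, Finset.sum_range_succ]
    exact Nat.le_add_right _ _
  calc ∑ t ∈ Finset.range W, iverson (OccupiedIn p z t j)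
      ≤ 2 * T + ∑ θ ∈ Finset.range (W / T), ∑ τ ∈ Finset.range T,
          iverson (OccupiedIn p z (p.2.val + T * (θ + 1) + τ) j) :=
        sum_range_le_sum_blocks (fun _ => iverson_le_one _) (ZMod.val_lt _) W
    _ ≤ 2 * T + ∑ θ ∈ Finset.range (W / T), ((T - V) * live (θ + 1) X +
          Q * ∑ d : Dir, (live (θ + 1) (X + d.offset) + live θ (X + d.offset))) := by
        gcongr with θ
        rw [hj]
        exact H.sum_occupiedIn_le p z hz θ X a ha
    _ = 2 * T + ((T - V) * ∑ θ ∈ Finset.range (W / T), live (θ + 1) X +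
          Q * ∑ d : Dir, (∑ θ ∈ Finset.range (W / T), live (θ + 1) (X + d.offset) +
            ∑ θ ∈ Finset.range (W / T), live θ (X + d.offset))) := by
        rw [Finset.sum_add_distrib, ← Finset.mul_sum, ← Finset.mul_sum, Finset.sum_comm]
        simp only [Finset.sum_add_distrib]
    _ ≤ 2 * T + ((T - V) * occupationTime (decode p z) X (W / T + 1) +
          Q * ∑ d : Dir, 2 * occupationTime (decode p z) (X + d.offset) (W / T + 1)) := by
        gcongr with d
        · exact hnext X
        · rw [two_mul]
          exact add_le_add (hnext _) (hcur _)
    _ = _ := by rw [← Finset.mul_sum, ← mul_assoc, mul_comm Q]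

theorem exists_finset_occupied_zero (z : Diagram N T Y) (j : ℤ) (W : ℕ) :
    ∃ F : Finset (Node N T 0), (∀ o ∈ F, o.Occupied decode z ∧ o.InWindow j W) ∧
      occupationTime z j W ≤ F.card + 1 := by
  classical
  let S := (Finset.range W).filter fun t => Occupied z t j
  have hinj : Function.Injective fun t : ℕ => (Node.event t j : Node N T 0) :=
    fun _ _ h => (Node.event.inj h).1
  refine ⟨(S.erase 0).map ⟨_, hinj⟩, ?_, ?_⟩
  · simp only [Finset.mem_map, Finset.mem_erase, Function.Embedding.coeFn_mk, S,
      Finset.mem_filter, Finset.mem_range]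
    rintro o ⟨t, ⟨ht, htW, hocc⟩, rfl⟩
    refine ⟨hocc, ?_, htW.le, by simp [Node.pos]⟩
    rw [pow_zero]
    exact Nat.one_le_iff_ne_zero.2 ht
  · have hcard : occupationTime z j W = S.card := by
      simp only [occupationTime, iverson, S, Finset.card_filter]
    rw [Finset.card_map, hcard]
    exact Nat.le_add_of_sub_le Finset.pred_card_le_card_erase

theorem exists_finset_occupied_succ [NeZero N] [NeZero T] (H : SelfSimulation N T V Q out decode)
    (hz : IsLossyOrbit out z) {C B : ℕ}
    (ih : ∀ p j W, ∃ F : Finset (Node N T k),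
      (∀ o ∈ F, o.Occupied decode (decode p z) ∧ o.InWindow j (W + B)) ∧
        occupationTime (decode p z) j W ≤ (T - V + 6 * Q) ^ k * F.card + C) (j : ℤ) (W : ℕ) :
    ∃ F : Finset (Node N T (k + 1)),
      (∀ o ∈ F, o.Occupied decode z ∧ o.InWindow j (W + (T + T * B + T))) ∧
        occupationTime z j W ≤ (T - V + 6 * Q) ^ (k + 1) * F.card +
          ∑ _p : Tag N T, (2 * T + (T - V + 6 * Q) * C) := by
  classical
  choose F hF hF_card using
    fun (p : Tag N T) (d : Dir) => ih p ((j - p.1.val) / N + d.offset) (W / T + 1)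
  let G (p : Tag N T) : Finset (Node N T k) := Finset.univ.biUnion (F p)
  have hinj : Function.Injective
      fun o : (_ : Tag N T) × Node N T k => Node.inside o.1 o.2 := by
    rintro ⟨p, o⟩ ⟨p', o'⟩ h
    obtain ⟨rfl, rfl⟩ := Node.inside.inj h
    rfl
  refine ⟨(Finset.univ.sigma G).map ⟨_, hinj⟩, ?_, ?_⟩
  · simp only [Finset.mem_map, Finset.mem_sigma, Finset.mem_univ, true_and,
      Function.Embedding.coeFn_mk, G, Finset.mem_biUnion]
    rintro o ⟨⟨p, o⟩, ⟨d, ho⟩, rfl⟩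
    exact ⟨(hF p d o ho).1, (hF p d o ho).2.inside H.sixteen_le (ZMod.val_lt _)⟩
  · rw [Finset.card_map, Finset.card_sigma, Finset.mul_sum, ← Finset.sum_add_distrib]
    refine (occupationTime_le_sum_phases z j W).trans (Finset.sum_le_sum fun p _ => ?_)
    set X := (j - p.1.val) / (N : ℤ)
    set c := (T - V + 6 * Q) ^ k * (G p).card + C
    have hbound (d : Dir) : occupationTime (decode p z) (X + d.offset) (W / T + 1) ≤ c := by
      have hcard : (F p d).card ≤ (G p).card :=
        Finset.card_le_card (Finset.subset_biUnion_of_mem (F p) (Finset.mem_univ d))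
      exact (hF_card p d).trans (Nat.add_le_add_right (Nat.mul_le_mul_left _ hcard) C)
    have hcentre : occupationTime (decode p z) X (W / T + 1) ≤ c := by
      simpa [Dir.offset] using hbound .C
    have hsum : ∑ d : Dir, occupationTime (decode p z) (X + d.offset) (W / T + 1) ≤ 3 * c :=
      (Finset.sum_le_card_nsmul _ _ c fun d _ => hbound d).trans_eq (smul_eq_mul 3 c)
    calc ∑ t ∈ Finset.range W, iverson (OccupiedIn p z t j)
        ≤ 2 * T + ((T - V) * occupationTime (decode p z) X (W / T + 1) +
          2 * Q * ∑ d : Dir, occupationTime (decode p z) (X + d.offset) (W / T + 1)) :=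
          H.sum_occupiedIn_column_le hz p j W
      _ ≤ 2 * T + ((T - V) * c + 2 * Q * (3 * c)) := by gcongr
      _ = _ := by ring

theorem exists_finset_occupied [NeZero N] [NeZero T] (H : SelfSimulation N T V Q out decode)
    (k : ℕ) : ∃ C B : ℕ, ∀ z, IsLossyOrbit out z → ∀ j W, ∃ F : Finset (Node N T k),
      (∀ o ∈ F, o.Occupied decode z ∧ o.InWindow j (W + B)) ∧
        occupationTime z j W ≤ (T - V + 6 * Q) ^ k * F.card + C := by
  induction k with
  | zero => exact ⟨1, 0, fun z _ j W => by simpa using exists_finset_occupied_zero z j W⟩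
  | succ k ih =>
    obtain ⟨C, B, ih⟩ := ih
    exact ⟨_, _, fun z hz => H.exists_finset_occupied_succ hz
      fun p => ih (decode p z) (H.isLossyOrbit_decode p z hz)⟩

theorem exists_finset_emits [NeZero N] [NeZero T] (H : SelfSimulation N T V Q out decode)
    (k : ℕ) : ∃ C B : ℕ, ∀ z, IsLossyOrbit out z → ∀ j W, ∃ F : Finset (Node N T k),
      (∀ e ∈ F, e.Emits decode z ∧ e.time ≤ W + B ∧ |e.pos - j| ≤ 4 * (N : ℤ) ^ k) ∧
        occupationTime z j W ≤ (T - V + 6 * Q) ^ k * (3 * F.card) + C := by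
  classical
  obtain ⟨C, B, h⟩ := H.exists_finset_occupied k
  refine ⟨C, B, fun z hz j W => ?_⟩
  obtain ⟨F, hF, hcard⟩ := h z hz j W
  choose e d he hemit htime hpos using
    fun o : F => Node.exists_child_eq (hF o.1 o.2).1 (hF o.1 o.2).2.1
  refine ⟨Finset.univ.image e, ?_, hcard.trans ?_⟩
  · simp only [Finset.mem_image, Finset.mem_univ, true_and]
    rintro _ ⟨o, rfl⟩
    obtain ⟨_, hend, hdist⟩ := (hF o.1 o.2).2
    refine ⟨hemit o, (htime o).trans hend, ?_⟩
    calc |(e o).pos - j| ≤ |(e o).pos - o.1.pos| + |o.1.pos - j| := abs_sub_le _ _ _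
      _ ≤ 4 * (N : ℤ) ^ k := by linarith [hpos o]
  · have hsub : F ⊆ ((Finset.univ : Finset Dir) ×ˢ Finset.univ.image e).image
        fun q => q.2.child q.1 := fun o ho =>
      Finset.mem_image.2 ⟨(d ⟨o, ho⟩, e ⟨o, ho⟩), by simp, he ⟨o, ho⟩⟩
    have hle := (Finset.card_le_card hsub).trans Finset.card_image_le
    rw [Finset.card_product, Finset.card_univ] at hle
    exact Nat.add_le_add_right (Nat.mul_le_mul_left _ hle) C

theorem card_emits_le [NeZero N] [NeZero T] (H : SelfSimulation N T V Q out decode) (hk : k ≠ 0)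
    (hz : IsLossyOrbit out z) {j : ℤ} {W : ℕ} {F : Finset (Node N T k)}
    (hF : ∀ e ∈ F, e.Emits decode z ∧ e.time ≤ W ∧ |e.pos - j| ≤ 4 * (N : ℤ) ^ k) :
    F.card ≤ (W / (T ^ k / 2) + 1) * 17 := by
  obtain ⟨h, hh⟩ : 2 ∣ T ^ k := dvd_pow H.two_dvd_period hk
  obtain ⟨n, hn⟩ : (2 : ℤ) ∣ (N : ℤ) ^ k :=
    dvd_pow (dvd_trans (by norm_num) (by exact_mod_cast H.four_dvd : (4 : ℤ) ∣ N)) hk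
  have hT : 0 < T ^ k := pow_pos (NeZero.pos T) k
  have hN : (0 : ℤ) < (N : ℤ) ^ k := pow_pos (by exact_mod_cast NeZero.pos N) k
  have hh_pos : 0 < h := by omega
  have hn_pos : 0 < n := by omega
  rw [hh, Nat.mul_div_cancel_left h two_pos]
  have hcard : F.card ≤ (Finset.range (W / h + 1) ×ˢ Finset.Icc (0 : ℤ) 16).card := by
    refine Finset.card_le_card_of_injOn
      (fun e => (e.time / h, (e.pos - (j - 4 * (N : ℤ) ^ k)) / n)) (fun e he => ?_) ?_
    · obtain ⟨_, htime, hpos⟩ := hF e he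
      rw [abs_le] at hpos
      simp only [Finset.coe_product, Set.mem_prod, Finset.mem_coe, Finset.mem_range,
        Finset.mem_Icc]
      exact ⟨Nat.lt_succ_of_le (Nat.div_le_div_right htime),
        Int.ediv_nonneg (by linarith) hn_pos.le, Int.ediv_le_of_le_mul hn_pos (by linarith)⟩
    · intro e he e' he' heq
      obtain ⟨htime, hpos⟩ := Prod.mk.inj heq
      have htime' := abs_sub_lt_of_ediv_eq_ediv (a := e.time) (b := e'.time) (h := h)
        (by exact_mod_cast hh_pos) (by exact_mod_cast htime)
      have hpos' := abs_sub_lt_of_ediv_eq_ediv hn_pos hpos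
      rw [sub_sub_sub_cancel_right] at hpos'
      have : (T : ℤ) ^ k = 2 * h := by exact_mod_cast hh
      exact H.emits_injOn hz (hF e he).1 (hF e' he').1 (by linarith) (by linarith)
  simpa [Finset.card_product] using hcard

theorem exists_pow_lt (H : SelfSimulation N T V Q out decode) {ε : ℝ} (hε : 0 < ε) :
    ∃ k ≠ 0, (((T - V + 6 * Q : ℕ) : ℝ) / T) ^ k < ε := by
  have hlt : T - V + 6 * Q < T := by
    have := H.vacancy_le
    have := H.six_mul_lt_vacancy
    omega
  have hT : (0 : ℝ) < T := by exact_mod_cast Nat.zero_lt_of_lt hlt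
  have hratio : ((T - V + 6 * Q : ℕ) : ℝ) / T < 1 := (div_lt_one hT).2 (by exact_mod_cast hlt)
  obtain ⟨k, hk⟩ := exists_pow_lt_of_lt_one hε hratio
  exact ⟨k + 1, k.succ_ne_zero,
    (pow_le_pow_of_le_one (by positivity) hratio.le k.le_succ).trans_lt hk⟩

theorem exists_occupationTime_le [NeZero N] [NeZero T] (H : SelfSimulation N T V Q out decode)
    {ε : ℝ} (hε : 0 < ε) : ∃ C : ℝ, ∀ z, IsLossyOrbit out z → ∀ j W,
      (occupationTime z j W : ℝ) ≤ ε * W + C := by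
  set l : ℕ := T - V + 6 * Q with hl
  obtain ⟨k, hk₀, hk⟩ := H.exists_pow_lt (ε := ε / 102) (by positivity)
  rw [← hl] at hk
  obtain ⟨C, B, h⟩ := H.exists_finset_emits k
  refine ⟨102 * (l / T) ^ k * B + 51 * l ^ k + C, fun z hz j W => ?_⟩
  obtain ⟨F, hF, hocc⟩ := h z hz j W
  have hT : (0 : ℝ) < T := by exact_mod_cast NeZero.pos T
  have hF_card : (F.card : ℝ) ≤ ((W + B) / (T ^ k / 2) + 1) * 17 := by
    have hle : (F.card : ℝ) ≤ (((W + B) / (T ^ k / 2) : ℕ) + 1) * 17 := by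
      exact_mod_cast H.card_emits_le hk₀ hz hF
    have hdiv : (((W + B) / (T ^ k / 2) : ℕ) : ℝ) ≤ (W + B) / (T ^ k / 2) := by
      refine Nat.cast_div_le.trans_eq ?_
      rw [Nat.cast_div (dvd_pow H.two_dvd_period hk₀) two_ne_zero]
      push_cast
      rfl
    linarith
  calc (occupationTime z j W : ℝ) ≤ l ^ k * (3 * F.card) + C := by exact_mod_cast hocc
    _ ≤ l ^ k * (3 * (((W + B) / (T ^ k / 2) + 1) * 17)) + C := by gcongr
    _ = 102 * (l / T) ^ k * W + (102 * (l / T) ^ k * B + 51 * l ^ k + C) := by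
        rw [div_pow]
        field_simp
        ring
    _ ≤ 102 * (ε / 102) * W + (102 * (l / T) ^ k * B + 51 * l ^ k + C) := by gcongr
    _ = ε * W + (102 * (l / T) ^ k * B + 51 * l ^ k + C) := by ring

end SelfSimulation

/-! ### The machine -/

/-- The tracks of a block that a pass of the head can read: three unary tracks marking the address
`A`, the slot `E` and the head position `W` encoded in the tag of the simulated message, and for
each direction a unary track marking the code of the payload that came from there. -/
inductive InputTrack | A | E | W | I (d : Dir)
deriving DecidableEq, Fintype

/-- The unary tracks of a block that hold the next tag. The address has one copy per direction,
since it depends on where the message is going. -/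
inductive OutputTrack | A (d : Dir) | E | W
deriving DecidableEq, Fintype

/-- The content of a cell of a working block: one bit per track, the directions from which the
simulated cell received a message (`arrived`), and those to which it is going to send one
(`outPresent`), with the bit of the payload (`outPayload`). -/
@[ext] structure CellContent where
  arrived : Dir → Bool
  track : InputTrack → Bool
  outTag : OutputTrack → Bool
  outPresent : Dir → Bool
  outPayload : Dir → Bool
deriving DecidableEq

noncomputable instance : Fintype CellContent := by
  classical
  exact Fintype.ofInjective
    (fun c : CellContent => (((c.arrived, c.track), (c.outTag, c.outPresent)), c.outPayload))
    (by rintro ⟨⟩ ⟨⟩ h; simp only [Prod.mk.injEq] at h; simp [h])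

/-- The memory of the travelling head: `flag` says whether all tests since the last reset
succeeded, `carry` holds a bit being moved to another cell, and `arrived` and `seen` serve to check
the block, as a copy of the first arrival pattern and as the set of tracks already found marked. -/
structure Register where
  flag : Bool
  carry : Bool
  arrived : Dir → Bool
  seen : InputTrack → Bool
deriving DecidableEq, Fintype

/-- The information about one cell of a block which is launched towards a neighbouring block: a bit
of each unary track. -/
structure Letter where
  A : Bool
  E : Bool
  W : Bool
  Y : Bool
deriving DecidableEq, Fintype

/-- A cell content, possibly accompanied by the head. -/
abbrev Body := CellContent × Option Register

/-- The payloads of the messages: a body, two bodies sharing a cell, the head on its way to the next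
cell, or a letter in transit between blocks. -/
inductive Payload
  | body (q : Body)
  | pair (g o : Body)
  | head (r : Register)
  | letter (l : Letter)
deriving DecidableEq

noncomputable instance : Fintype Payload := by
  classical
  exact Fintype.ofInjective (fun y : Payload => match y with
    | .body q => (.inl q : Body ⊕ ((Body × Body) ⊕ (Register ⊕ Letter)))
    | .pair g o => .inr (.inl (g, o))
    | .head r => .inr (.inr (.inl r))
    | .letter l => .inr (.inr (.inr l)))
    (by intro a b h; cases a <;> cases b <;> simp_all)

/-- The number of payloads. -/
noncomputable def payloadCount : ℕ := Fintype.card Payload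

/-- An enumeration of the payloads: a payload is written on a block in unary, by marking the cell
whose address is its code. -/
noncomputable def payloadCode (y : Payload) : ℕ := Fintype.equivFin Payload y

theorem payloadCode_injective : Function.Injective payloadCode :=
  Fin.val_injective.comp (Fintype.equivFin Payload).injective

theorem payloadCode_lt (y : Payload) : payloadCode y < payloadCount :=
  (Fintype.equivFin Payload y).2

theorem exists_payloadCode_eq {k : ℕ} (hk : k < payloadCount) : ∃ y, payloadCode y = k :=
  ⟨(Fintype.equivFin Payload).symm ⟨k, hk⟩, by simp [payloadCode]⟩

theorem payloadCount_pos : 0 < payloadCount :=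
  Fintype.card_pos_iff.2 ⟨.letter ⟨true, true, true, true⟩⟩

/-- What the local rule may know about a number `a < N`: the truncation of `a` to
`[0, payloadCount]`, whether `a` is `N - 1`, and `a` modulo 4. -/
abbrev Position := Fin (payloadCount + 1) × Bool × Fin 4

/-- The number is `0`. -/
def Position.isFirst (q : Position) : Bool := q.1.val = 0

/-- The number is `N - 1`. -/
def Position.isLast (q : Position) : Bool := q.2.1

/-- The number is odd. -/
def Position.isOdd (q : Position) : Bool := q.2.2.val % 2 = 1

/-- The position of `a` in a block of `N` cells. -/
noncomputable def posOf (N a : ℕ) : Position :=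
  (⟨min a payloadCount, by omega⟩, decide (a + 1 = N), ⟨a % 4, Nat.mod_lt _ (by norm_num)⟩)

/-- The part of the input of the local rule that a single instruction can test: the positions `a`,
`e`, `w` of address, slot and head, whether the head is at the address, and the payloads `y`. -/
structure LocalView where
  a : Position
  e : Position
  w : Position
  atHead : Bool
  y : Dir → Option Payload

noncomputable instance : Fintype LocalView := by
  classical
  exact Fintype.ofInjective
    (fun q : LocalView => ((q.a, q.e, q.w, q.atHead, q.y) :
      Position × Position × Position × Bool × (Dir → Option Payload)))
    (by rintro ⟨⟩ ⟨⟩ h; simp only [Prod.mk.injEq] at h; simp [h])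

/-- The instructions that do not refer to instruction codes. One instruction is executed in each
slot of `N` steps. The first four are carried out by all cells together, the others by a pass of the
head along the block. -/
inductive BaseInstr
  | start | dance | idle | launch | chk | nop | reset
  | test (q : LocalView)
  | testEdge (b f : Bool)
  | emit (f : Dir → Option Payload)
  | shift (k : OutputTrack)
  | drop (k : OutputTrack)

noncomputable instance : Fintype BaseInstr := by
  classical
  exact Fintype.ofInjective (fun i : BaseInstr => match i with
    | .start => (.inl 0 : Fin 7 ⊕
        (LocalView ⊕ ((Bool × Bool) ⊕ ((Dir → Option Payload) ⊕ (OutputTrack ⊕ OutputTrack)))))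
    | .dance => .inl 1
    | .idle => .inl 2
    | .launch => .inl 3
    | .chk => .inl 4
    | .nop => .inl 5
    | .reset => .inl 6
    | .test q => .inr (.inl q)
    | .testEdge b f => .inr (.inr (.inl (b, f)))
    | .emit f => .inr (.inr (.inr (.inl f)))
    | .shift k => .inr (.inr (.inr (.inr (.inl k))))
    | .drop k => .inr (.inr (.inr (.inr (.inr k)))))
    (by intro a b h; cases a <;> cases b <;> simp_all)

/- Instructions that test a bit of the code of an instruction are instructions themselves, so that
the number `n` of code bits has to satisfy `card BaseInstr + 4 n ≤ 2 ^ n`. -/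
theorem exists_instrCode : ∃ (n : ℕ) (f : (BaseInstr ⊕ (Bool × Fin n × Bool)) → (Fin n → Bool)),
    Function.Injective f := by
  obtain ⟨n, hn⟩ : ∃ n : ℕ, Fintype.card BaseInstr + 4 * n ≤ 2 ^ n := by
    refine ⟨Fintype.card BaseInstr + 8, ?_⟩
    generalize Fintype.card BaseInstr = b
    induction b with
    | zero => norm_num
    | succ b ih => rw [show b + 1 + 8 = (b + 8) + 1 by ring, pow_succ]; omega
  have hcard : Fintype.card (BaseInstr ⊕ (Bool × Fin n × Bool)) ≤ Fintype.card (Fin n → Bool) := by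
    simp only [Fintype.card_sum, Fintype.card_prod, Fintype.card_bool, Fintype.card_fin,
      Fintype.card_fun]
    omega
  obtain ⟨f⟩ := Function.Embedding.nonempty_of_card_le hcard
  exact ⟨n, f, f.injective⟩

/-- The number of bits of an instruction code. -/
noncomputable def instrBits : ℕ := exists_instrCode.choose

/-- Instructions. Besides the base instructions, `(k, j, v)` tests whether the `j`-th code bit of
the instruction at the encoded address (`k = false`) or of the encoded slot (`k = true`) is `v`. -/
abbrev Instr := BaseInstr ⊕ (Bool × Fin instrBits × Bool)

/-- A binary code of the instructions. -/
noncomputable def instrCode : Instr → Fin instrBits → Bool := exists_instrCode.choose_spec.choose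

theorem instrCode_injective : Function.Injective instrCode :=
  exists_instrCode.choose_spec.choose_spec

/-- The input of the local rule: a view, the instruction whose number is the address of the cell,
and the instruction of the current slot. -/
structure RuleInput where
  view : LocalView
  addrInstr : Instr
  slotInstr : Instr

noncomputable instance : Fintype RuleInput := by
  classical
  exact Fintype.ofInjective
    (fun k : RuleInput => ((k.view, k.addrInstr, k.slotInstr) : LocalView × Instr × Instr))
    (by rintro ⟨⟩ ⟨⟩ h; simp only [Prod.mk.injEq] at h; simp [h])

/-- The body of a payload, if it is one. -/
def bodyOf : Option Payload → Option Body
  | some (.body q) => some q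
  | _ => none

/-- The two bodies of a payload, if it is a pair. -/
def pairOf : Option Payload → Option (Body × Body)
  | some (.pair g o) => some (g, o)
  | _ => none

/-- The register of a payload, if it is a head. -/
def headOf : Option Payload → Option Register
  | some (.head r) => some r
  | _ => none

/-- The letter of a payload, if it is one. -/
def letterOf : Option Payload → Option Letter
  | some (.letter l) => some l
  | _ => none

/-- The test that the marks in a cell do not contradict the view `q`. If each track has exactly one
mark, all cells of the block pass the test if and only if the block encodes `q`. -/
noncomputable def viewTest (q : LocalView) (pa : Position) (c : CellContent) : Bool :=
  decide ((c.track .A = true → pa = q.a ∧ c.track .W = q.atHead) ∧ (c.track .E = true → pa = q.e) ∧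
    (c.track .W = true → pa = q.w) ∧
    ∀ d, (q.y d = none → c.arrived d = false) ∧
      ∀ y, q.y d = some y → pa.1.val = payloadCode y → c.track (.I d) = true)

/-- The test that the encoded slot is odd (`b`) or even (`!b`), and that the encoded head position
is (`f`) or is not (`!f`) the last one of a pass in such a slot. -/
noncomputable def edgeTest (b f : Bool) (pa : Position) (c : CellContent) : Bool :=
  decide ((c.track .E = true → pa.isOdd = b) ∧
    (c.track .W = true → (if b = true then pa.isFirst else pa.isLast) = f))

/-- The test of a bit of the code of the instruction at the encoded slot or address. -/
noncomputable def bitTest (k : Bool) (j : Fin instrBits) (v : Bool) (ia : Instr)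
    (c : CellContent) : Bool :=
  decide (c.track (if k = true then .E else .A) = true → instrCode ia j = v)

/-- The condition under which the head passes a cell while checking the block: the arrival pattern
is the one of the first cell, and no track has a second mark, a payload mark beyond the range of the
codes or, at the last cell, no mark at all. -/
def CheckOk (pa : Position) (fin : Bool) (r : Register) (c : CellContent) : Prop :=
  c.arrived = r.arrived ∧ (∀ k, c.track k = true → r.seen k = false) ∧
    (∀ d, c.track (.I d) = true → pa.1.val < payloadCount) ∧
    (fin = true → ∀ k, r.seen k = true ∨ c.track k = true)

/-- The effect on register and cell of a visit of the head, except for the instruction `chk`. Here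
`pa` is the address, `ia` the instruction whose number is the address, and `fin` says whether this
is the last cell of the pass. -/
noncomputable def stepTotal (pa : Position) (ia : Instr) (fin : Bool) (i : Instr) (r : Register)
    (c : CellContent) : Register × CellContent :=
  match i with
  | .inl .reset => ({ r with flag := true, carry := false }, c)
  | .inl (.test q) => ({ r with flag := r.flag && viewTest q pa c }, c)
  | .inl (.testEdge b f) => ({ r with flag := r.flag && edgeTest b f pa c }, c)
  | .inl (.emit f) => (r, if r.flag = true then
      { c with
        outPresent := fun d => c.outPresent d || (f d).isSome
        outPayload := fun d => match f d with
          | some y => decide (pa.1.val = payloadCode y)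
          | none => c.outPayload d } else c)
  | .inl (.shift k) => if r.flag = true then
      ({ r with carry := c.outTag k }, { c with outTag := Function.update c.outTag k r.carry })
      else (r, c)
  | .inl (.drop k) => (r, if r.flag = true ∧ fin = true then
      { c with outTag := Function.update c.outTag k (c.outTag k || r.carry) } else c)
  | .inr (k, j, v) => ({ r with flag := r.flag && bitTest k j v ia c }, c)
  | _ => (r, c)

open Classical in
/-- The effect of a visit of the head. A failed check destroys the cell and the head. -/
noncomputable def headStep (pa : Position) (ia : Instr) (fin : Bool) (i : Instr) (r : Register)
    (c : CellContent) : Option (Register × CellContent) :=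
  if i = .inl .chk then
    (if CheckOk pa fin r c then
      some ({ r with seen := fun k => r.seen k || c.track k }, c) else none)
  else some (stepTotal pa ia fin i r c)

/-- The rule that keeps a body in place and discards everything else. -/
def stay (y : Dir → Option Payload) (d : Dir) : Option Payload :=
  if d = .C then (bodyOf (y .C)).map Payload.body else none

/-- The incoming payloads `y` are letters which agree with `l` except for the payload bit. -/
def IsReading (y : Dir → Option Payload) (l : Letter) : Prop :=
  (∃ d y', y d = some y') ∧
    ∀ d y', y d = some y' → ∃ b, y' = .letter { l with Y := b }

/-- The content of a cell which has received the payloads `y` reading `l`. -/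
noncomputable def initialContent (y : Dir → Option Payload) (l : Letter) : CellContent where
  arrived d := (y d).isSome
  track k := match k with
    | .A => l.A
    | .E => l.E
    | .W => l.W
    | .I d => decide (y d = some (.letter { l with Y := true }))
  outTag k := match k with
    | .A _ => l.A
    | .E => l.E
    | .W => l.W
  outPresent _ := false
  outPayload _ := false

/-- The register of the head created at a cell which has received the payloads `y`. Tracks of
directions without a message count as marked. -/
def initialRegister (y : Dir → Option Payload) : Register where
  flag := false
  carry := false
  arrived d := (y d).isSome
  seen k := match k with
    | .I d => !(y d).isSome
    | _ => false

open Classical in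
/-- The rule that turns letters into a body, with a head in the last cell of the block. -/
noncomputable def startOut (q : LocalView) (d : Dir) : Option Payload :=
  if d = .C then
    (if h : ∃ l, IsReading q.y l then
      some (.body (initialContent q.y h.choose,
        if q.a.isLast = true then some (initialRegister q.y) else none)) else none)
  else none

/-- The rule that makes the bodies of an even cell and of the following odd cell share first the odd
and then the even cell and return home, in a cycle of four steps, so that both cells get vacant. -/
def danceOut (q : LocalView) (d : Dir) : Option Payload :=
  if q.w.2.2 = 0 then
    (if q.a.isOdd = true then stay q.y d else
      if d = .R then (bodyOf (q.y .C)).map Payload.body else none)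
  else if q.w.2.2 = 1 then
    (if q.a.isOdd = true ∧ d = .L then
      (bodyOf (q.y .R)).bind fun g => (bodyOf (q.y .C)).map fun o => .pair g o else none)
  else if q.w.2.2 = 2 then
    (if q.a.isOdd = true then none else
      if d = .C then (pairOf (q.y .L)).map fun go => .body go.1 else
      if d = .R then (pairOf (q.y .L)).map fun go => .body go.2 else none)
  else
    (if q.a.isOdd = true then
      (if d = .C then (bodyOf (q.y .R)).map Payload.body else none)
      else stay q.y d)

/-- The letter that a cell launches in a given direction. -/
def launchLetter (c : CellContent) (d : Dir) : Option Payload :=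
  if c.outPresent d = true then
    some (.letter ⟨c.outTag (.A d), c.outTag .E, c.outTag .W, c.outPayload d⟩) else none

/-- The rule that launches the letters in the step where the head position is last, and then lets
them travel for the remaining steps of the slot. -/
def launchOut (q : LocalView) (d : Dir) : Option Payload :=
  if q.w.isLast = true then (bodyOf (q.y .C)).bind fun b => launchLetter b.1 d
  else (letterOf (q.y d)).map Payload.letter

/-- The head position `q` is the first one of a pass in slot `e`. -/
def isPassStart (e q : Position) : Bool := if e.isOdd = true then q.isLast else q.isFirst

/-- The head position `q` is the last one of a pass in slot `e`. -/
def isPassEnd (e q : Position) : Bool := if e.isOdd = true then q.isFirst else q.isLast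

/-- The direction of the passes in slot `e`. -/
def passDir (e : Position) : Dir := if e.isOdd = true then .L else .R

/-- The register and the cell content after the visit of the head. -/
noncomputable def passResult (k : RuleInput) : Option (Register × CellContent) :=
  (bodyOf (k.view.y .C)).bind fun b =>
    (if isPassStart k.view.e k.view.w = true then b.2
      else headOf (k.view.y (passDir k.view.e))).bind fun r =>
      headStep k.view.a k.addrInstr (isPassEnd k.view.e k.view.w) k.slotInstr r b.1

/-- The rule of a slot in which the head passes along the block. -/
noncomputable def passOut (k : RuleInput) (d : Dir) : Option Payload :=
  if k.view.atHead = false then stay k.view.y d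
  else if d = .C then
    (passResult k).map fun rc =>
      .body (rc.2, if isPassEnd k.view.e k.view.w = true then some rc.1 else none)
  else if d = passDir k.view.e ∧ isPassEnd k.view.e k.view.w = false then
    (passResult k).map fun rc => .head rc.1
  else none

/-- The local rule for payloads. -/
noncomputable def localRule (k : RuleInput) (d : Dir) : Option Payload :=
  match k.slotInstr with
  | .inl .start => if k.view.w.isFirst = true then startOut k.view d else stay k.view.y d
  | .inl .dance => danceOut k.view d
  | .inl .idle => stay k.view.y d
  | .inl .launch => launchOut k.view d
  | _ => passOut k d

/-- The instructions executed by a pass of the head. -/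
def IsPass (i : Instr) : Prop :=
  i ≠ .inl .start ∧ i ≠ .inl .dance ∧ i ≠ .inl .idle ∧ i ≠ .inl .launch

theorem localRule_of_isPass {k : RuleInput} (h : IsPass k.slotInstr) (d : Dir) :
    localRule k d = passOut k d := by
  unfold localRule
  split <;> simp_all [IsPass]

/-! ### The program -/

/-- A program: pairs of instructions for an odd slot (a pass to the left) and the following even
slot (a pass to the right). -/
abbrev Program := List (Instr × Instr)

/-- An instruction executed in a pass to the right. -/
def single (i : Instr) : Instr × Instr := (.inl .nop, i)

/-- Moves all marks of an output track one cell to the right, cyclically. -/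
def rotateRight (k : OutputTrack) : Program :=
  [(.inl .nop, .inl (.shift k)), (.inl (.drop k), .inl .nop)]

/-- Moves all marks of an output track one cell to the left, cyclically. -/
def rotateLeft (k : OutputTrack) : Program := [(.inl (.shift k), .inl (.drop k))]

/-- Computes the addresses of the messages to the two neighbours. -/
def addressProgram : Program :=
  (single (.inl .reset) :: rotateRight (.A .R)) ++ (single (.inl .reset) :: rotateLeft (.A .L))

/-- Computes the next head position: it moves to the right in even and to the left in odd slots,
unless it is at the end. -/
def headProgram : Program :=
  (single (.inl .reset) :: single (.inl (.testEdge false false)) :: rotateRight .W) ++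
  (single (.inl .reset) :: single (.inl (.testEdge true false)) :: rotateLeft .W)

/-- Computes the next slot: it advances if the head is at the end. -/
def slotProgram : Program :=
  (single (.inl .reset) :: single (.inl (.testEdge false true)) :: rotateRight .E) ++
  (single (.inl .reset) :: single (.inl (.testEdge true true)) :: rotateRight .E)

/-- Computes the next tags. -/
def tagProgram : Program := addressProgram ++ headProgram ++ slotProgram

/-- The tests that together are passed if and only if the block encodes the rule input `k`. -/
noncomputable def lookupTests (k : RuleInput) : List Instr :=
  .inl (.test k.view) :: (List.finRange instrBits).flatMap fun j =>
    [.inr (false, j, instrCode k.addrInstr j), .inr (true, j, instrCode k.slotInstr j)]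

/-- Emits the output of the local rule on `k` if the block encodes the rule input `k`. -/
noncomputable def lookupProgram (k : RuleInput) : Program :=
  single (.inl .reset) :: ((lookupTests k).map single ++ [single (.inl (.emit (localRule k)))])

/-- The program after the check. -/
noncomputable def mainProgram : Program :=
  tagProgram ++ (Finset.univ : Finset RuleInput).toList.flatMap lookupProgram

/-- The program: check the block, compute the next tag, and look up the local rule. -/
noncomputable def program : Program := (.inl .chk, .inl .nop) :: mainProgram

/-- The instruction of slot `e` of a period: after the start and the program, idle and dancing slots
alternate until the launch. -/
noncomputable def instrAt (N e : ℕ) : Instr :=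
  if e = 0 then .inl .start
  else if e + 1 = N then .inl .launch
  else match program[(e - 1) / 2]? with
    | some lr => if e % 2 = 1 then lr.1 else lr.2
    | none => if e % 2 = 1 then .inl .idle else .inl .dance

/-- The rule input of the cell with address `a` in slot `e` when the head is at `w`. -/
noncomputable def ruleInput (N a e w : ℕ) (y : Dir → Option Payload) : RuleInput :=
  ⟨⟨posOf N a, posOf N e, posOf N w, decide (a = w), y⟩, instrAt N a, instrAt N e⟩

/-- The position of the head at step `s` of slot `e`. -/
def headPos (N e s : ℕ) : ℕ := if e % 2 = 1 then N - 1 - s else s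

/-- The local rule for payloads in a cell with address `a` at step `s` of slot `e`. -/
noncomputable def slotRule (N a e s : ℕ) (y : Dir → Option Payload) (d : Dir) : Option Payload :=
  localRule (ruleInput N a e (headPos N e s) y) d

/-- The local rule for payloads in a cell with address `a` at step `τ` of a period. -/
noncomputable def blockRule (N a τ : ℕ) (y : Dir → Option Payload) (d : Dir) : Option Payload :=
  slotRule N a (τ / N) (τ % N) y d

/-- The requirements on the block length `N`: every payload code is an address, and the period of
`N` slots has room for the program and for enough dancing. -/
structure IsAdmissible (N : ℕ) : Prop where
  four_dvd : 4 ∣ N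
  payloadCount_lt : payloadCount < N
  length_le : 2 * program.length + 210 ≤ N

/-! ### Positions and instructions -/

theorem posOf_isFirst (N a : ℕ) : (posOf N a).isFirst = true ↔ a = 0 := by
  have := payloadCount_pos
  simp only [Position.isFirst, decide_eq_true_eq]
  change min a payloadCount = 0 ↔ _
  omega

theorem posOf_isLast (N a : ℕ) : (posOf N a).isLast = true ↔ a + 1 = N := by
  simp only [Position.isLast, posOf, decide_eq_true_eq]

theorem posOf_isOdd (N a : ℕ) : (posOf N a).isOdd = true ↔ a % 2 = 1 := by
  simp only [Position.isOdd, decide_eq_true_eq]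
  change a % 4 % 2 = 1 ↔ _
  omega

theorem posOf_eq_payloadCode (N a : ℕ) (y : Payload) :
    (posOf N a).1.val = payloadCode y ↔ a = payloadCode y := by
  have := payloadCode_lt y
  simp only [posOf]
  omega

theorem posOf_lt_payloadCount (N a : ℕ) :
    (posOf N a).1.val < payloadCount ↔ a < payloadCount := by
  simp only [posOf]
  omega

theorem instrAt_zero (N : ℕ) : instrAt N 0 = .inl .start := by simp [instrAt]

theorem instrAt_last {N e : ℕ} (he : e ≠ 0) (h : e + 1 = N) : instrAt N e = .inl .launch := by
  simp [instrAt, he, h]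

theorem instrAt_odd {N i : ℕ} (hN : IsAdmissible N) (hi : i < program.length) :
    instrAt N (2 * i + 1) = program[i].1 := by
  have := hN.length_le
  rw [instrAt, if_neg (by omega), if_neg (by omega), show (2 * i + 1 - 1) / 2 = i by omega,
    List.getElem?_eq_getElem hi]
  exact if_pos (by omega)

theorem instrAt_even {N i : ℕ} (hN : IsAdmissible N) (hi : i < program.length) :
    instrAt N (2 * i + 2) = program[i].2 := by
  have := hN.length_le
  rw [instrAt, if_neg (by omega), if_neg (by omega), show (2 * i + 2 - 1) / 2 = i by omega,
    List.getElem?_eq_getElem hi]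
  exact if_neg (by omega)

theorem instrAt_idle {N e : ℕ} (hprog : 2 * program.length < e) (hlast : e + 1 < N)
    (hodd : e % 2 = 1) : instrAt N e = .inl .idle := by
  rw [instrAt, if_neg (by omega), if_neg (by omega), List.getElem?_eq_none (by omega)]
  exact if_pos hodd

theorem instrAt_dance {N e : ℕ} (hprog : 2 * program.length < e) (hlast : e + 1 < N)
    (heven : e % 2 = 0) : instrAt N e = .inl .dance := by
  rw [instrAt, if_neg (by omega), if_neg (by omega), List.getElem?_eq_none (by omega)]
  exact if_neg (by omega)

/-- Tests are the instructions whose only effect is to clear the flag when they fail. -/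
def IsTest : Instr → Prop
  | .inl (.test _) => True
  | .inl (.testEdge _ _) => True
  | .inr _ => True
  | _ => False

theorem IsTest.isPass {i : Instr} (h : IsTest i) : IsPass i := by
  rcases i with (_ | _ | _ | _ | _ | _ | _ | _ | _ | _ | _ | _) | _ <;> simp_all [IsTest, IsPass]

theorem IsTest.ne_chk {i : Instr} (h : IsTest i) : i ≠ .inl .chk := by
  rintro rfl
  exact h

theorem isTest_of_mem_lookupTests {k : RuleInput} {i : Instr} (h : i ∈ lookupTests k) :
    IsTest i := by
  simp only [lookupTests, List.mem_cons, List.mem_flatMap, List.not_mem_nil, or_false] at h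
  rcases h with rfl | ⟨j, _, rfl | rfl⟩ <;> trivial

theorem isPass_and_ne_chk_of_mem_mainProgram {lr : Instr × Instr} (h : lr ∈ mainProgram) :
    (IsPass lr.1 ∧ lr.1 ≠ .inl .chk) ∧ (IsPass lr.2 ∧ lr.2 ≠ .inl .chk) := by
  rcases List.mem_append.1 h with h | h
  · simp only [tagProgram, addressProgram, headProgram, slotProgram, rotateRight, rotateLeft,
      single, List.mem_append, List.mem_cons, List.not_mem_nil, or_false] at h
    rcases h with ((h | h) | (h | h)) | (h | h) <;>
      (repeat' (first | subst h | rcases h with h | h)) <;> simp [IsPass]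
  · simp only [lookupProgram, single, List.mem_flatMap, List.mem_cons, List.mem_append,
      List.mem_map, List.not_mem_nil, or_false] at h
    obtain ⟨k, _, rfl | ⟨i, hi, rfl⟩ | rfl⟩ := h
    · simp [IsPass]
    · have htest := isTest_of_mem_lookupTests hi
      exact ⟨by simp [IsPass], htest.isPass, htest.ne_chk⟩
    · simp [IsPass]

theorem isPass_of_mem_program {lr : Instr × Instr} (h : lr ∈ program) :
    IsPass lr.1 ∧ IsPass lr.2 := by
  rcases List.mem_cons.1 h with rfl | h
  · simp [IsPass]
  · obtain ⟨⟨hleft, _⟩, hright, _⟩ := isPass_and_ne_chk_of_mem_mainProgram h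
    exact ⟨hleft, hright⟩

theorem isPass_instrAt {N e : ℕ} (hN : IsAdmissible N) (hpos : 0 < e)
    (he : e ≤ 2 * program.length) : IsPass (instrAt N e) := by
  rcases Nat.even_or_odd' e with ⟨i, rfl | rfl⟩
  · obtain ⟨k, rfl⟩ : ∃ k, i = k + 1 := ⟨i - 1, by omega⟩
    have hk : k < program.length := by omega
    rw [show 2 * (k + 1) = 2 * k + 2 by ring, instrAt_even hN hk]
    exact (isPass_of_mem_program (List.getElem_mem hk)).2
  · have hi : i < program.length := by omega
    rw [instrAt_odd hN hi]
    exact (isPass_of_mem_program (List.getElem_mem hi)).1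

theorem slot_cases {N e : ℕ} (hN : IsAdmissible N) (he : e < N) :
    e = 0 ∨ (0 < e ∧ e ≤ 2 * program.length ∧ IsPass (instrAt N e)) ∨
    (2 * program.length < e ∧ e + 1 < N ∧ e % 2 = 1 ∧ instrAt N e = .inl .idle) ∨
    (2 * program.length < e ∧ e + 1 < N ∧ e % 2 = 0 ∧ instrAt N e = .inl .dance) ∨
    (e + 1 = N ∧ instrAt N e = .inl .launch) := by
  have := hN.length_le
  by_cases h0 : e = 0
  · exact .inl h0
  by_cases h1 : e ≤ 2 * program.length
  · exact .inr (.inl ⟨by omega, h1, isPass_instrAt hN (by omega) h1⟩)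
  by_cases h2 : e + 1 = N
  · exact .inr (.inr (.inr (.inr ⟨h2, instrAt_last h0 h2⟩)))
  rcases Nat.mod_two_eq_zero_or_one e with h3 | h3
  · exact .inr (.inr (.inr (.inl ⟨by omega, by omega, h3, instrAt_dance (by omega) (by omega) h3⟩)))
  · exact .inr (.inr (.inl ⟨by omega, by omega, h3, instrAt_idle (by omega) (by omega) h3⟩))

theorem eq_zero_of_instrAt_eq_start {N e : ℕ} (hN : IsAdmissible N) (he : e < N)
    (h : instrAt N e = .inl .start) : e = 0 := by
  rcases slot_cases hN he with h0 | ⟨_, _, hp⟩ | ⟨_, _, _, hi⟩ | ⟨_, _, _, hi⟩ | ⟨_, hi⟩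
  · exact h0
  · exact absurd h hp.1
  all_goals
    rw [hi] at h
    cases h

/-! ### The dynamics of payloads -/

/-- Configurations of payloads, regardless of tags. -/
abbrev PayloadConfig := ℤ → Dir → Option Payload

/-- The payloads in a block of cells, by address. Only the addresses `a < N` matter. -/
abbrev Block := ℕ → Dir → Option Payload

/-- Equality of blocks of `N` cells. -/
def BlockEq (N : ℕ) (b b' : Block) : Prop := ∀ a < N, ∀ d, b a d = b' a d

/-- Step `τ` of a period, in blocks of `N` cells. -/
noncomputable def payloadStep (N τ : ℕ) (c : PayloadConfig) : PayloadConfig := fun j d =>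
  blockRule N (((j - d.offset) % N).toNat) τ (c (j - d.offset)) d

/-- The first `n` steps of a period. -/
noncomputable def payloadRun (N : ℕ) : ℕ → PayloadConfig → PayloadConfig
  | 0, c => c
  | n + 1, c => payloadStep N n (payloadRun N n c)

/-- Step `s` of slot `e` in an isolated block. -/
noncomputable def blockStep (N e s : ℕ) (b : Block) : Block := fun a d =>
  match d with
  | .C => slotRule N a e s (b a) .C
  | .R => if a = 0 then none else slotRule N (a - 1) e s (b (a - 1)) .R
  | .L => if a + 1 = N then none else slotRule N (a + 1) e s (b (a + 1)) .L

/-- The first `s` steps of slot `e` in an isolated block. -/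
noncomputable def blockRun (N e : ℕ) : ℕ → Block → Block
  | 0, b => b
  | s + 1, b => blockStep N e s (blockRun N e s b)

/-- The block of `N` cells number `X` of a configuration. -/
def blockAt (N : ℕ) (c : PayloadConfig) (X : ℤ) : Block := fun a d => c (N * X + a) d

theorem div_slot {N e s : ℕ} (hs : s < N) : (e * N + s) / N = e := by
  rw [mul_comm, Nat.mul_add_div (by omega), Nat.div_eq_of_lt hs, add_zero]

theorem mod_slot {N e s : ℕ} (hs : s < N) : (e * N + s) % N = s := by
  rw [mul_comm, Nat.mul_add_mod, Nat.mod_eq_of_lt hs]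

theorem blockRule_eq_slotRule {N a e s : ℕ} (hs : s < N) (y : Dir → Option Payload) (d : Dir) :
    blockRule N a (e * N + s) y d = slotRule N a e s y d := by
  rw [blockRule, div_slot hs, mod_slot hs]

theorem stay_C {y : Dir → Option Payload} : stay y .C = (bodyOf (y .C)).map .body := rfl

theorem stay_of_ne_C {y : Dir → Option Payload} {d : Dir} (h : d ≠ .C) : stay y d = none :=
  if_neg h

/-! ### Monotonicity -/

/-- Every payload of `y` is also present in `y'`. -/
def IsSubview (y y' : Dir → Option Payload) : Prop := ∀ d v, y d = some v → y' d = some v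

/-- Every payload of `c` is also present in `c'`. -/
def IsSubconfig (c c' : PayloadConfig) : Prop := ∀ j, IsSubview (c j) (c' j)

section Monotonicity

variable {y y' : Dir → Option Payload}

theorem IsSubview.apply {β : Type} (h : IsSubview y y') {f : Option Payload → Option β}
    (hf : f none = none) {d : Dir} {q : β} (hq : f (y d) = some q) : f (y' d) = some q := by
  cases hy : y d with
  | none => simp [hy, hf] at hq
  | some v => rwa [h d v hy, ← hy]

theorem IsSubview.bodyOf (h : IsSubview y y') {d : Dir} {q : Body}
    (hq : bodyOf (y d) = some q) : bodyOf (y' d) = some q := h.apply rfl hq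

theorem IsSubview.stay (h : IsSubview y y') {d : Dir} {v : Payload}
    (hv : stay y d = some v) : stay y' d = some v := by
  unfold SelfSimulatingCA.stay at *
  split_ifs at * with hd
  obtain ⟨q, hq, hqv⟩ := Option.map_eq_some_iff.1 hv
  exact Option.map_eq_some_iff.2 ⟨q, h.bodyOf hq, hqv⟩

theorem passResult_mono {q : LocalView} {ia ie : Instr} (h : IsSubview q.y y')
    {v : Register × CellContent} (hv : passResult ⟨q, ia, ie⟩ = some v) :
    passResult ⟨{ q with y := y' }, ia, ie⟩ = some v := by
  simp only [passResult, Option.bind_eq_some_iff] at *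
  obtain ⟨b, hb, r, hr, hstep⟩ := hv
  refine ⟨b, h.bodyOf hb, r, ?_, hstep⟩
  split_ifs at * with hstart
  · exact hr
  · exact h.apply rfl hr

theorem passOut_mono {q : LocalView} {ia ie : Instr} (h : IsSubview q.y y') {d : Dir} {v : Payload}
    (hv : passOut ⟨q, ia, ie⟩ d = some v) : passOut ⟨{ q with y := y' }, ia, ie⟩ d = some v := by
  simp only [passOut] at *
  split_ifs at * with h1 h2 h3
  · exact h.stay hv
  all_goals
    obtain ⟨a, ha, hav⟩ := Option.map_eq_some_iff.1 hv
    exact Option.map_eq_some_iff.2 ⟨a, passResult_mono h ha, hav⟩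

theorem danceOut_mono {q : LocalView} (h : IsSubview q.y y') {d : Dir} {v : Payload}
    (hv : danceOut q d = some v) : danceOut { q with y := y' } d = some v := by
  simp only [danceOut] at *
  split_ifs at * with h1 h2 h3 h4
  any_goals exact h.stay hv
  all_goals first
    | (obtain ⟨a, ha, hav⟩ := Option.map_eq_some_iff.1 hv
       exact Option.map_eq_some_iff.2 ⟨a, h.apply rfl ha, hav⟩)
    | (obtain ⟨g, hg, hv⟩ := Option.bind_eq_some_iff.1 hv
       obtain ⟨o, ho, hov⟩ := Option.map_eq_some_iff.1 hv
       exact Option.bind_eq_some_iff.2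
        ⟨g, h.bodyOf hg, Option.map_eq_some_iff.2 ⟨o, h.bodyOf ho, hov⟩⟩)

theorem launchOut_mono {q : LocalView} (h : IsSubview q.y y') {d : Dir} {v : Payload}
    (hv : launchOut q d = some v) : launchOut { q with y := y' } d = some v := by
  simp only [launchOut] at *
  split_ifs at * with hlast
  · obtain ⟨a, ha, hav⟩ := Option.bind_eq_some_iff.1 hv
    exact Option.bind_eq_some_iff.2 ⟨a, h.bodyOf ha, hav⟩
  · obtain ⟨a, ha, hav⟩ := Option.map_eq_some_iff.1 hv
    exact Option.map_eq_some_iff.2 ⟨a, h.apply rfl ha, hav⟩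

/- Reading letters is not monotone: an additional letter may contradict the others. -/
theorem localRule_mono {q : LocalView} {ia ie : Instr} (h : IsSubview q.y y')
    (hs : ie = .inl .start → q.w.isFirst = false) {d : Dir} {v : Payload}
    (hv : localRule ⟨q, ia, ie⟩ d = some v) :
    localRule ⟨{ q with y := y' }, ia, ie⟩ d = some v := by
  by_cases hp : IsPass ie
  · rw [localRule_of_isPass hp] at *
    exact passOut_mono h hv
  · simp only [IsPass, ← not_or, not_not] at hp
    rcases hp with rfl | rfl | rfl | rfl
    · simp only [localRule, hs rfl] at *
      exact h.stay hv
    · exact danceOut_mono h hv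
    · exact h.stay hv
    · exact launchOut_mono h hv

theorem payloadStep_mono {N τ : ℕ} (hN : IsAdmissible N) (hτ : τ ≠ 0) (hT : τ < N * N)
    {c c' : PayloadConfig} (h : IsSubconfig c c') :
    IsSubconfig (payloadStep N τ c) (payloadStep N τ c') := by
  intro j d v hv
  refine localRule_mono (h _) (fun hstart => ?_) hv
  have he : τ / N = 0 :=
    eq_zero_of_instrAt_eq_start hN (Nat.div_lt_of_lt_mul hT) hstart
  have hlt : τ < N := ((Nat.div_eq_zero_iff.1 he).resolve_left
    (by have := hN.payloadCount_lt; omega))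
  rw [← Bool.not_eq_true]
  change ¬ (posOf N (headPos N (τ / N) (τ % N))).isFirst = true
  rwa [posOf_isFirst, he, headPos, Nat.mod_eq_of_lt hlt, if_neg (by norm_num)]

end Monotonicity

theorem localRule_none {q : LocalView} {ia ie : Instr} (h : ∀ d, q.y d = none) (d : Dir) :
    localRule ⟨q, ia, ie⟩ d = none := by
  have hbody (d : Dir) : bodyOf (q.y d) = none := by rw [h]; rfl
  by_cases hp : IsPass ie
  · rw [localRule_of_isPass hp]
    simp [passOut, stay, passResult, hbody]
  · simp only [IsPass, ← not_or, not_not] at hp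
    rcases hp with rfl | rfl | rfl | rfl
    · have hread : ¬ ∃ l, IsReading q.y l := by
        rintro ⟨l, ⟨d, y, hy⟩, _⟩
        rw [h] at hy
        cases hy
      simp [localRule, startOut, hread, stay, hbody]
    · simp [localRule, danceOut, stay, h, bodyOf, pairOf]
    · simp [localRule, stay, hbody]
    · simp [localRule, launchOut, h, bodyOf, letterOf]

theorem slotRule_none {N a e s : ℕ} {y : Dir → Option Payload} (h : ∀ d, y d = none) (d : Dir) :
    slotRule N a e s y d = none := localRule_none h d

/-! ### Isolation of the blocks before the launch -/

theorem passOut_eq_none_of_isPassEnd {k : RuleInput} {d : Dir} (hd : d ≠ .C)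
    (hend : k.view.atHead = true → d = passDir k.view.e → isPassEnd k.view.e k.view.w = true) :
    passOut k d = none := by
  unfold passOut
  rw [if_neg hd]
  split_ifs with hhead hout
  · exact stay_of_ne_C hd
  · rw [hend (by simpa using hhead) hout.1] at hout
    exact absurd hout.2 (by simp)
  · rfl

theorem slotRule_last_R {N e s : ℕ} (hN : IsAdmissible N) (he : e + 1 < N)
    (y : Dir → Option Payload) : slotRule N (N - 1) e s y .R = none := by
  have := hN.length_le
  have hodd : (posOf N (N - 1)).isOdd = true := by
    have := hN.four_dvd
    rw [posOf_isOdd]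
    omega
  have hstay : stay y .R = none := stay_of_ne_C (by simp)
  rcases slot_cases hN (show e < N by omega) with
    rfl | ⟨_, _, hp⟩ | ⟨_, _, _, hi⟩ | ⟨_, _, _, hi⟩ | ⟨hlast, _⟩
  · simp [slotRule, localRule, ruleInput, instrAt_zero, startOut, hstay]
  · rw [slotRule, localRule_of_isPass (by exact hp)]
    refine passOut_eq_none_of_isPassEnd (by simp) fun hhead hdir => ?_
    have hw : N - 1 = headPos N e s := of_decide_eq_true hhead
    simp only [ruleInput, passDir, isPassEnd, ← hw] at hdir ⊢
    split_ifs at hdir ⊢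
    exact (posOf_isLast N _).2 (by omega)
  · simp [slotRule, localRule, ruleInput, hi, hstay]
  · simp [slotRule, localRule, ruleInput, hi, danceOut, hodd, hstay]
  · omega

theorem slotRule_first_L {N e s : ℕ} (hN : IsAdmissible N) (he : e + 1 < N)
    (y : Dir → Option Payload) : slotRule N 0 e s y .L = none := by
  have hodd : ¬ (posOf N 0).isOdd = true := by simp [posOf_isOdd]
  have hstay : stay y .L = none := stay_of_ne_C (by simp)
  rcases slot_cases hN (show e < N by omega) with
    rfl | ⟨_, _, hp⟩ | ⟨_, _, _, hi⟩ | ⟨_, _, _, hi⟩ | ⟨hlast, _⟩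
  · simp [slotRule, localRule, ruleInput, instrAt_zero, startOut, hstay]
  · rw [slotRule, localRule_of_isPass (by exact hp)]
    refine passOut_eq_none_of_isPassEnd (by simp) fun hhead hdir => ?_
    have hw : 0 = headPos N e s := of_decide_eq_true hhead
    simp only [ruleInput, passDir, isPassEnd, ← hw] at hdir ⊢
    split_ifs at hdir ⊢
    exact (posOf_isFirst N _).2 rfl
  · simp [slotRule, localRule, ruleInput, hi, hstay]
  · simp [slotRule, localRule, ruleInput, hi, danceOut, hodd, hstay]
  · omega

theorem toNat_emod_block {N a : ℕ} (ha : a < N) (X : ℤ) : (((N : ℤ) * X + a) % N).toNat = a := by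
  rw [Int.mul_add_emod_self_left, Int.emod_eq_of_lt (by omega) (by omega)]
  simp

theorem blockAt_payloadStep {N e s : ℕ} (hN : IsAdmissible N) (he : e + 1 < N) (hs : s < N)
    (c : PayloadConfig) (X : ℤ) :
    BlockEq N (blockAt N (payloadStep N (e * N + s) c) X) (blockStep N e s (blockAt N c X)) := by
  intro a ha d
  simp only [blockAt, payloadStep, blockRule_eq_slotRule hs]
  cases d with
  | C =>
    simp only [Dir.offset, sub_zero, toNat_emod_block ha, blockStep]
    rfl
  | R =>
    simp only [Dir.offset, blockStep]
    split_ifs with h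
    · subst h
      have hcell : (N : ℤ) * X + (0 : ℕ) - 1 = N * (X - 1) + (N - 1 : ℕ) := by
        push_cast [show 1 ≤ N by omega]; ring
      rw [hcell, toNat_emod_block (by omega)]
      exact slotRule_last_R hN he _
    · have hcell : (N : ℤ) * X + a - 1 = N * X + (a - 1 : ℕ) := by
        push_cast [show 1 ≤ a by omega]; ring
      rw [hcell, toNat_emod_block (by omega)]
      rfl
  | L =>
    simp only [Dir.offset, blockStep]
    split_ifs with h
    · have hcell : (N : ℤ) * X + a - (-1) = N * (X + 1) + (0 : ℕ) := by
        have : (N : ℤ) = a + 1 := by exact_mod_cast h.symm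
        rw [this]; push_cast; ring
      rw [hcell, toNat_emod_block (by omega)]
      exact slotRule_first_L hN he _
    · have hcell : (N : ℤ) * X + a - (-1) = N * X + (a + 1 : ℕ) := by
        push_cast; ring
      rw [hcell, toNat_emod_block (by omega)]
      rfl

theorem blockStep_congr {N e s : ℕ} {b b' : Block} (h : BlockEq N b b') :
    BlockEq N (blockStep N e s b) (blockStep N e s b') := by
  intro a ha d
  have h' : ∀ a < N, b a = b' a := fun a ha => funext (h a ha)
  cases d with
  | C => simp only [blockStep, h' a ha]
  | R => simp only [blockStep, h' (a - 1) (by omega)]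
  | L =>
    simp only [blockStep]
    split_ifs
    · rfl
    · rw [h' (a + 1) (by omega)]

theorem blockRun_congr {N e : ℕ} {b b' : Block} (h : BlockEq N b b') :
    ∀ s, BlockEq N (blockRun N e s b) (blockRun N e s b')
  | 0 => h
  | s + 1 => blockStep_congr (blockRun_congr h s)

theorem blockAt_payloadRun {N e : ℕ} (hN : IsAdmissible N) (he : e + 1 < N) (c : PayloadConfig)
    (X : ℤ) : ∀ s ≤ N, BlockEq N (blockAt N (payloadRun N (e * N + s) c) X)
      (blockRun N e s (blockAt N (payloadRun N (e * N) c) X))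
  | 0, _ => fun _ _ _ => rfl
  | s + 1, hs => fun a ha d => by
    have ih := blockAt_payloadRun hN he c X s (by omega)
    rw [← add_assoc, payloadRun, blockAt_payloadStep hN he (by omega) _ X a ha d, blockRun]
    exact blockStep_congr ih a ha d

theorem blockRun_none {N e : ℕ} {b : Block} (h : BlockEq N b fun _ _ => none) :
    ∀ s, BlockEq N (blockRun N e s b) fun _ _ => none
  | 0 => h
  | s + 1 => fun a ha d => by
    have ih := blockRun_none (e := e) h s
    rw [blockRun, blockStep_congr ih a ha d]
    cases d <;> simp [blockStep, slotRule_none]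

/-! ### Passes of the head -/

/-- The direction of the head in slot `e`. -/
def slotDir (e : ℕ) : Dir := if e % 2 = 1 then .L else .R

theorem slotDir_ne_C (e : ℕ) : slotDir e ≠ .C := by
  unfold slotDir
  split_ifs <;> simp

theorem headPos_lt {N e s : ℕ} (hs : s < N) : headPos N e s < N := by
  unfold headPos
  split_ifs <;> omega

theorem headPos_headPos {N e s : ℕ} (hs : s < N) : headPos N e (headPos N e s) = s := by
  unfold headPos
  split_ifs <;> omega

theorem eq_headPos_iff {N e s a : ℕ} (hs : s < N) (ha : a < N) :
    a = headPos N e s ↔ headPos N e a = s := by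
  constructor
  · rintro rfl
    exact headPos_headPos hs
  · rintro rfl
    exact (headPos_headPos ha).symm

theorem headPos_succ_zero {N e : ℕ} : headPos N (e + 1) 0 = headPos N e (N - 1) := by
  unfold headPos
  split_ifs <;> omega

/-- The value of `passResult` in the cell `a` at step `s` of slot `e`, if the head is there. -/
noncomputable def passResultAt (N e a s : ℕ) (y : Dir → Option Payload) :
    Option (Register × CellContent) :=
  (bodyOf (y .C)).bind fun b =>
    (if s = 0 then b.2 else headOf (y (slotDir e))).bind fun r =>
      headStep (posOf N a) (instrAt N a) (decide (s + 1 = N)) (instrAt N e) r b.1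

theorem isPassStart_headPos {N e s : ℕ} (hs : s < N) :
    isPassStart (posOf N e) (posOf N (headPos N e s)) = decide (s = 0) := by
  rw [Bool.eq_iff_iff, decide_eq_true_eq, isPassStart]
  by_cases h : e % 2 = 1
  · rw [if_pos ((posOf_isOdd N e).2 h), posOf_isLast, headPos, if_pos h]
    omega
  · rw [if_neg (mt (posOf_isOdd N e).1 h), posOf_isFirst, headPos, if_neg h]

theorem isPassEnd_headPos {N e s : ℕ} (hs : s < N) :
    isPassEnd (posOf N e) (posOf N (headPos N e s)) = decide (s + 1 = N) := by
  rw [Bool.eq_iff_iff, decide_eq_true_eq, isPassEnd]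
  by_cases h : e % 2 = 1
  · rw [if_pos ((posOf_isOdd N e).2 h), posOf_isFirst, headPos, if_pos h]
    omega
  · rw [if_neg (mt (posOf_isOdd N e).1 h), posOf_isLast, headPos, if_neg h]

theorem passDir_posOf (N e : ℕ) : passDir (posOf N e) = slotDir e := by
  rw [passDir, slotDir]
  by_cases h : e % 2 = 1
  · rw [if_pos ((posOf_isOdd N e).2 h), if_pos h]
  · rw [if_neg (mt (posOf_isOdd N e).1 h), if_neg h]

theorem slotRule_of_ne_headPos {N a e s : ℕ} (hp : IsPass (instrAt N e)) (h : a ≠ headPos N e s)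
    (y : Dir → Option Payload) (d : Dir) : slotRule N a e s y d = stay y d := by
  rw [slotRule, localRule_of_isPass hp, passOut, if_pos (by simpa [ruleInput] using h)]
  rfl

theorem slotRule_headPos {N a e s : ℕ} (hs : s < N) (hp : IsPass (instrAt N e))
    (h : a = headPos N e s) (y : Dir → Option Payload) (d : Dir) : slotRule N a e s y d =
      if d = .C then (passResultAt N e a s y).map fun rc =>
          .body (rc.2, if s + 1 = N then some rc.1 else none)
      else if d = slotDir e ∧ s + 1 ≠ N then (passResultAt N e a s y).map fun rc => .head rc.1
      else none := by
  have hresult : passResult (ruleInput N a e (headPos N e s) y) = passResultAt N e a s y := by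
    simp only [passResult, passResultAt, ruleInput, isPassStart_headPos hs, isPassEnd_headPos hs,
      passDir_posOf, decide_eq_true_eq]
  rw [slotRule, localRule_of_isPass hp, passOut, if_neg (by simp [ruleInput, h]), hresult]
  simp only [ruleInput, isPassEnd_headPos hs, passDir_posOf, decide_eq_true_eq,
    decide_eq_false_iff_not, ne_eq]

section Pass

variable {N e : ℕ} (v : ℕ → Option CellContent) (r : Option Register)

/-- The register of the head after `s` steps of a pass through the contents `v` which starts with
the register `r`. A missing cell destroys the head. -/
noncomputable def registerAt (N e : ℕ) (v : ℕ → Option CellContent) (r : Option Register) :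
    ℕ → Option Register
  | 0 => r
  | s + 1 => (v (headPos N e s)).bind fun c => (registerAt N e v r s).bind fun r =>
      (headStep (posOf N (headPos N e s)) (instrAt N (headPos N e s)) (decide (s + 1 = N))
        (instrAt N e) r c).map Prod.fst

/-- The content of cell `a` after the pass of slot `e` through the contents `v` which starts with
the register `r`. -/
noncomputable def contentAfter (N e : ℕ) (v : ℕ → Option CellContent) (r : Option Register)
    (a : ℕ) : Option CellContent :=
  (v a).bind fun c => (registerAt N e v r (headPos N e a)).bind fun r =>
    (headStep (posOf N a) (instrAt N a) (decide (headPos N e a + 1 = N)) (instrAt N e) r c).map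
      Prod.snd

/-- The block after `s` steps of a pass. -/
noncomputable def passBlock (N e : ℕ) (v : ℕ → Option CellContent) (r : Option Register) (s : ℕ) :
    Block := fun a d =>
  if d = .C then
    (if headPos N e a < s then (contentAfter N e v r a).map fun c =>
        .body (c, if headPos N e a + 1 = N then registerAt N e v r N else none)
      else (v a).map fun c => .body (c, if headPos N e a = 0 then r else none))
  else if d = slotDir e ∧ 0 < s ∧ s < N ∧ headPos N e a = s then (registerAt N e v r s).map .head
  else none

/-- A block with contents `v`, and with a head in cell `q` if `r` is a register. -/
noncomputable def bodyBlock (q : ℕ) (v : ℕ → Option CellContent) (r : Option Register) : Block :=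
  fun a d => if d = .C then (v a).map fun c => .body (c, if a = q then r else none) else none

theorem map_body_bodyOf_passBlock (s a : ℕ) :
    (bodyOf (passBlock N e v r s a .C)).map Payload.body = passBlock N e v r s a .C := by
  simp only [passBlock, if_true]
  by_cases h : headPos N e a < s
  · rw [if_pos h]
    cases contentAfter N e v r a <;> rfl
  · rw [if_neg h]
    cases v a <;> rfl

theorem passResultAt_passBlock {s : ℕ} (hs : s < N) :
    passResultAt N e (headPos N e s) s (passBlock N e v r s (headPos N e s)) =
    (v (headPos N e s)).bind fun c => (registerAt N e v r s).bind fun r =>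
      headStep (posOf N (headPos N e s)) (instrAt N (headPos N e s)) (decide (s + 1 = N))
        (instrAt N e) r c := by
  have hcell : headPos N e (headPos N e s) = s := headPos_headPos hs
  have hbody : passBlock N e v r s (headPos N e s) .C =
      (v (headPos N e s)).map fun c => .body (c, if s = 0 then r else none) := by
    simp [passBlock, hcell]
  rw [passResultAt, hbody]
  cases v (headPos N e s) with
  | none => rfl
  | some c =>
    simp only [Option.map_some, bodyOf, Option.bind_some]
    by_cases h0 : s = 0
    · subst h0
      simp [registerAt]
    · have hhead : passBlock N e v r s (headPos N e s) (slotDir e) =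
          (registerAt N e v r s).map .head := by
        simp only [passBlock, if_neg (slotDir_ne_C e)]
        rw [if_pos ⟨trivial, by omega, hs, hcell⟩]
      rw [hhead, if_neg h0]
      congr 1
      cases registerAt N e v r s <;> rfl

theorem map_passResultAt_snd {s : ℕ} (hs : s < N) :
    ((passResultAt N e (headPos N e s) s (passBlock N e v r s (headPos N e s))).map fun rc =>
      (Payload.body (rc.2, if s + 1 = N then some rc.1 else none))) =
    (contentAfter N e v r (headPos N e s)).map fun c =>
      .body (c, if s + 1 = N then registerAt N e v r N else none) := by
  rw [passResultAt_passBlock v r hs, contentAfter, headPos_headPos hs]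
  cases hv : v (headPos N e s) with
  | none => rfl
  | some c =>
    cases hr : registerAt N e v r s with
    | none => rfl
    | some r' =>
      simp only [Option.bind_some]
      cases hstep : headStep (posOf N (headPos N e s)) (instrAt N (headPos N e s))
        (decide (s + 1 = N)) (instrAt N e) r' c with
      | none => rfl
      | some rc =>
        simp only [Option.map_some]
        split_ifs with hlast
        · have hend : registerAt N e v r (s + 1) = some rc.1 := by
            rw [registerAt, hv, hr, Option.bind_some, Option.bind_some, hstep, Option.map_some]
          rw [← hend, hlast]
        · rfl

theorem map_passResultAt_fst {s : ℕ} (hs : s < N) :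
    (passResultAt N e (headPos N e s) s (passBlock N e v r s (headPos N e s))).map Prod.fst =
      registerAt N e v r (s + 1) := by
  rw [passResultAt_passBlock v r hs, registerAt]
  cases v (headPos N e s) with
  | none => rfl
  | some c => cases registerAt N e v r s <;> rfl

theorem slotRule_passBlock_C {s : ℕ} (hs : s < N) (hp : IsPass (instrAt N e)) {a : ℕ}
    (ha : a < N) : slotRule N a e s (passBlock N e v r s a) .C = passBlock N e v r
      (s + 1) a .C := by
  by_cases h : a = headPos N e s
  · rw [slotRule_headPos hs hp h, if_pos rfl, h, map_passResultAt_snd v r hs]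
    simp only [passBlock, if_true, headPos_headPos hs, Nat.lt_succ_self]
  · rw [slotRule_of_ne_headPos hp h, stay_C, map_body_bodyOf_passBlock]
    have hne : headPos N e a ≠ s := fun h' => h ((eq_headPos_iff hs ha).2 h')
    have hlt : headPos N e a < s ↔ headPos N e a < s + 1 := by omega
    simp only [passBlock, if_true, hlt]

theorem slotRule_passBlock_of_ne_C {s : ℕ} (hs : s < N) (hp : IsPass (instrAt N e)) (a : ℕ)
    {d : Dir} (hd : d ≠ .C) : slotRule N a e s (passBlock N e v r s a) d =
      if a = headPos N e s ∧ d = slotDir e ∧ s + 1 ≠ N then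
        (registerAt N e v r (s + 1)).map .head else none := by
  by_cases h : a = headPos N e s
  · rw [slotRule_headPos hs hp h, if_neg hd, h, ← map_passResultAt_fst v r hs, Option.map_map]
    simp only [true_and]
    rfl
  · rw [slotRule_of_ne_headPos hp h, stay_of_ne_C hd, if_neg fun h' => h h'.1]

theorem blockStep_passBlock {s : ℕ} (hs : s < N) (hp : IsPass (instrAt N e)) :
    BlockEq N (blockStep N e s (passBlock N e v r s)) (passBlock N e v r (s + 1)) := by
  intro a ha d
  cases d with
  | C => exact slotRule_passBlock_C v r hs hp ha
  | R =>
    simp only [blockStep, slotRule_passBlock_of_ne_C v r hs hp _ (d := .R) (by simp), passBlock,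
      slotDir, headPos]
    grind
  | L =>
    simp only [blockStep, slotRule_passBlock_of_ne_C v r hs hp _ (d := .L) (by simp), passBlock,
      slotDir, headPos]
    grind

variable {b : Block}

theorem blockRun_passBlock (hp : IsPass (instrAt N e))
    (hb : BlockEq N b (bodyBlock (headPos N e 0) v r)) :
    ∀ s ≤ N, BlockEq N (blockRun N e s b) (passBlock N e v r s)
  | 0, _ => fun a ha d => by
    rw [blockRun, hb a ha, bodyBlock, passBlock]
    simp only [Nat.not_lt_zero, if_false, eq_headPos_iff (show 0 < N by omega) ha]
    simp
  | s + 1, hs => fun a ha d => by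
    rw [blockRun, ← blockStep_passBlock v r (by omega) hp a ha d]
    exact blockStep_congr (blockRun_passBlock hp hb s (by omega)) a ha d

theorem blockRun_pass_end (hp : IsPass (instrAt N e))
    (hb : BlockEq N b (bodyBlock (headPos N e 0) v r)) :
    BlockEq N (blockRun N e N b)
      (bodyBlock (headPos N (e + 1) 0) (contentAfter N e v r) (registerAt N e v r N)) := by
  intro a ha d
  have hlast : a = headPos N e (N - 1) ↔ headPos N e a + 1 = N := by
    rw [eq_headPos_iff (by omega) ha]
    omega
  rw [blockRun_passBlock v r hp hb N le_rfl a ha d, passBlock, bodyBlock, headPos_succ_zero]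
  simp only [lt_irrefl, false_and, and_false, if_false, if_pos (headPos_lt ha), hlast]

end Pass

/-! ### Passes without a check -/

/-- The state of a block during the program: the register of the head and the contents of the
cells. -/
abbrev MachineState := Register × (ℕ → CellContent)

/-- The register after `s` steps of a pass that executes `i` in a slot of the parity of `p`. -/
noncomputable def sweepRegister (N p : ℕ) (i : Instr) (st : MachineState) : ℕ → Register
  | 0 => st.1
  | s + 1 => (stepTotal (posOf N (headPos N p s)) (instrAt N (headPos N p s)) (decide (s + 1 = N)) i
      (sweepRegister N p i st s) (st.2 (headPos N p s))).1

/-- The state after a pass that executes `i` in a slot of the parity of `p`. -/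
noncomputable def sweep (N p : ℕ) (i : Instr) (st : MachineState) : MachineState :=
  (sweepRegister N p i st N, fun a =>
    (stepTotal (posOf N a) (instrAt N a) (decide (headPos N p a + 1 = N)) i
      (sweepRegister N p i st (headPos N p a)) (st.2 a)).2)

/-- A block in state `st`, with the head in cell `q`. -/
noncomputable def stateBlock (q : ℕ) (st : MachineState) : Block :=
  bodyBlock q (fun a => some (st.2 a)) (some st.1)

theorem bodyBlock_congr {N q : ℕ} {v v' : ℕ → Option CellContent} (h : ∀ a < N, v a = v' a)
    (r : Option Register) : BlockEq N (bodyBlock q v r) (bodyBlock q v' r) := by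
  intro a ha d
  simp only [bodyBlock, h a ha]

theorem headPos_congr_parity {N e p : ℕ} (h : e % 2 = p % 2) : headPos N e = headPos N p := by
  funext s
  simp only [headPos, h]

theorem sweep_congr_parity {N e p : ℕ} (h : e % 2 = p % 2) (i : Instr) (st : MachineState) :
    sweep N e i st = sweep N p i st := by
  have hregister : sweepRegister N e i st = sweepRegister N p i st := by
    funext s
    induction s with
    | zero => rfl
    | succ s ih => rw [sweepRegister, sweepRegister, ih, headPos_congr_parity h]
  simp only [sweep, hregister, headPos_congr_parity h]

theorem sweep_of_fst_eq {i : Instr} {st : MachineState}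
    (h : ∀ pa ia fin c, (stepTotal pa ia fin i st.1 c).1 = st.1) (N p : ℕ) :
    sweep N p i st = (st.1, fun a =>
      (stepTotal (posOf N a) (instrAt N a) (decide (headPos N p a + 1 = N)) i st.1
        (st.2 a)).2) := by
  have hregister (s : ℕ) : sweepRegister N p i st s = st.1 := by
    induction s with
    | zero => rfl
    | succ s ih => rw [sweepRegister, ih, h]
  simp only [sweep, hregister]

theorem sweep_nop (N p : ℕ) (st : MachineState) : sweep N p (.inl .nop) st = st :=
  sweep_of_fst_eq (fun _ _ _ _ => rfl) N p

theorem registerAt_eq_sweepRegister {N e : ℕ} (hc : instrAt N e ≠ .inl .chk) (st : MachineState) :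
    ∀ s ≤ N, registerAt N e (fun a => some (st.2 a)) (some st.1) s =
      some (sweepRegister N e (instrAt N e) st s)
  | 0, _ => rfl
  | s + 1, hs => by
    rw [registerAt, registerAt_eq_sweepRegister hc st s (by omega), Option.bind_some,
      Option.bind_some, headStep, if_neg hc]
    rfl

theorem blockRun_stateBlock {N e : ℕ} (hp : IsPass (instrAt N e)) (hc : instrAt N e ≠ .inl .chk)
    {st : MachineState} {b : Block} (hb : BlockEq N b (stateBlock (headPos N e 0) st)) :
    BlockEq N (blockRun N e N b)
      (stateBlock (headPos N (e + 1) 0) (sweep N e (instrAt N e) st)) := by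
  intro a ha d
  have hregister := registerAt_eq_sweepRegister hc st
  rw [blockRun_pass_end _ _ hp hb a ha d, hregister N le_rfl]
  refine bodyBlock_congr (fun a ha => ?_) _ a ha d
  rw [contentAfter, hregister _ (headPos_lt ha).le, Option.bind_some, Option.bind_some, headStep,
    if_neg hc]
  rfl

/-! ### The start slot -/

/-- The content of cell `a` after the start slot. -/
noncomputable def startContent (b : Block) (a : ℕ) : Option CellContent :=
  open Classical in
  if h : ∃ l, IsReading (b a) l then some (initialContent (b a) h.choose) else none

theorem stay_bodyBlock (q : ℕ) (v : ℕ → Option CellContent) (r : Option Register) (a : ℕ)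
    (d : Dir) : stay (bodyBlock q v r a) d = bodyBlock q v r a d := by
  by_cases h : d = .C
  · subst h
    simp only [stay, bodyBlock, if_true]
    cases v a <;> rfl
  · simp [stay, bodyBlock, h]

theorem blockStep_of_stay {N e s : ℕ} (hstay : ∀ a < N, ∀ y d, slotRule N a e s y d = stay y d)
    {b : Block} {q : ℕ} {v : ℕ → Option CellContent} {r : Option Register}
    (hb : BlockEq N b (bodyBlock q v r)) : BlockEq N (blockStep N e s b) (bodyBlock q v r) := by
  intro a ha d
  rw [blockStep_congr hb a ha d]
  cases d with
  | C => simp only [blockStep, hstay a ha, stay_bodyBlock]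
  | R =>
    simp only [blockStep, hstay (a - 1) (by omega), stay_bodyBlock]
    simp [bodyBlock]
  | L =>
    simp only [blockStep]
    split_ifs with h
    · simp [bodyBlock]
    · rw [hstay _ (by omega), stay_bodyBlock]
      simp [bodyBlock]

theorem slotRule_start (N a : ℕ) (y : Dir → Option Payload) (d : Dir) :
    slotRule N a 0 0 y d = startOut (ruleInput N a 0 0 y).view d := by
  have hfirst : (posOf N (headPos N 0 0)).isFirst = true := by
    rw [posOf_isFirst]
    rfl
  simp only [slotRule, localRule, ruleInput, instrAt_zero, hfirst, if_true]
  rfl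

theorem slotRule_start_C {N a : ℕ} (ha : a < N) (b : Block) :
    slotRule N a 0 0 (b a) .C =
      bodyBlock (headPos N 1 0) (startContent b) (some (initialRegister (b (N - 1)))) a .C := by
  rw [slotRule_start, startOut, if_pos rfl]
  by_cases h : ∃ l, IsReading (b a) l
  · have hlast : (posOf N a).isLast = true ↔ a + 1 = N := posOf_isLast N a
    rw [dif_pos (show ∃ l, IsReading (ruleInput N a 0 0 (b a)).view.y l from h), bodyBlock,
      if_pos rfl, startContent, dif_pos h, Option.map_some]
    simp only [ruleInput, hlast, headPos]
    grind
  · rw [dif_neg (show ¬ ∃ l, IsReading (ruleInput N a 0 0 (b a)).view.y l from h), bodyBlock,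
      if_pos rfl, startContent, dif_neg h, Option.map_none]

theorem blockStep_start {N : ℕ} (b : Block) : BlockEq N (blockStep N 0 0 b)
    (bodyBlock (headPos N 1 0) (startContent b) (some (initialRegister (b (N - 1))))) := by
  intro a ha d
  cases d with
  | C => exact slotRule_start_C ha b
  | R => simp [blockStep, bodyBlock, slotRule_start, startOut]
  | L => simp [blockStep, bodyBlock, slotRule_start, startOut]

theorem slotRule_start_succ (N a s : ℕ) (y : Dir → Option Payload) (d : Dir) :
    slotRule N a 0 (s + 1) y d = stay y d := by
  have hfirst : ¬ (posOf N (headPos N 0 (s + 1))).isFirst = true := by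
    rw [posOf_isFirst]
    simp [headPos]
  simp only [slotRule, localRule, ruleInput, instrAt_zero, hfirst, if_false, Bool.false_eq_true]

theorem blockRun_start {N : ℕ} (b : Block) : ∀ s, BlockEq N (blockRun N 0 (s + 1) b)
    (bodyBlock (headPos N 1 0) (startContent b) (some (initialRegister (b (N - 1)))))
  | 0 => blockStep_start b
  | s + 1 => blockStep_of_stay (fun a _ y d => slotRule_start_succ N a s y d) (blockRun_start b s)

/-! ### The check -/

theorem program_length_pos : 0 < program.length := by simp [program]

theorem instrAt_one {N : ℕ} (hN : IsAdmissible N) : instrAt N 1 = .inl .chk := by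
  simpa [program] using instrAt_odd hN program_length_pos

theorem instrAt_two {N : ℕ} (hN : IsAdmissible N) : instrAt N 2 = .inl .nop := by
  simpa [program] using instrAt_even hN program_length_pos

section Check

variable {N : ℕ} {c : ℕ → CellContent} {r : Register}

/-- The tracks seen during the first `s` steps of the check of the contents `c`, including those
which the register `r` counts as seen from the beginning. -/
def seenBefore (N : ℕ) (c : ℕ → CellContent) (r : Register) : ℕ → InputTrack → Bool
  | 0, k => r.seen k
  | s + 1, k => seenBefore N c r s k || (c (headPos N 1 s)).track k

/-- The first `s` steps of the check succeed on the contents `c`. -/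
def PassesCheckTo (N : ℕ) (c : ℕ → CellContent) (r : Register) (s : ℕ) : Prop :=
  ∀ i < s, CheckOk (posOf N (headPos N 1 i)) (decide (i + 1 = N))
    { r with seen := seenBefore N c r i } (c (headPos N 1 i))

/-- What the check verifies: all arrival patterns agree, and each track which does not count as seen
from the beginning has exactly one mark, at the code of a payload if it is a payload track. -/
structure IsConsistent (N : ℕ) (c : ℕ → CellContent) (r : Register) : Prop where
  arrived_eq : ∀ a < N, (c a).arrived = r.arrived
  eq_of_track : ∀ k, ∀ a < N, ∀ a' < N, (c a).track k = true → (c a').track k = true → a = a'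
  seen_eq_false : ∀ k, ∀ a < N, (c a).track k = true → r.seen k = false
  lt_payloadCount : ∀ d, ∀ a < N, (c a).track (.I d) = true → a < payloadCount
  seen_or_exists : ∀ k, r.seen k = true ∨ ∃ a < N, (c a).track k = true

theorem seenBefore_eq_true_iff {k : InputTrack} : ∀ {s : ℕ}, seenBefore N c r s k = true ↔
    r.seen k = true ∨ ∃ i < s, (c (headPos N 1 i)).track k = true
  | 0 => by simp [seenBefore]
  | s + 1 => by
    rw [seenBefore, Bool.or_eq_true, seenBefore_eq_true_iff, or_assoc, Nat.exists_lt_succ_right]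

theorem headStep_chk (pa : Position) (ia : Instr) (fin : Bool) (r : Register) (c : CellContent) :
    headStep pa ia fin (.inl .chk) r c = open Classical in
      if CheckOk pa fin r c then
        some ({ r with seen := fun k => r.seen k || c.track k }, c) else none := by
  simp [headStep]

theorem passesCheckTo_succ {s : ℕ} : PassesCheckTo N c r (s + 1) ↔ PassesCheckTo N c r s ∧
    CheckOk (posOf N (headPos N 1 s)) (decide (s + 1 = N)) { r with seen := seenBefore N c r s }
      (c (headPos N 1 s)) :=
  Nat.forall_lt_succ_right

open Classical in
theorem registerAt_chk (hN : IsAdmissible N) {v : ℕ → Option CellContent}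
    (hv : ∀ a < N, v a = some (c a)) : ∀ s ≤ N, registerAt N 1 v (some r) s =
      if PassesCheckTo N c r s then some { r with seen := seenBefore N c r s } else none
  | 0, _ => by
    rw [registerAt, if_pos (by simp [PassesCheckTo])]
    rfl
  | s + 1, hs => by
    rw [registerAt, hv _ (headPos_lt (by omega)), registerAt_chk hN hv s (by omega),
      Option.bind_some, instrAt_one hN]
    simp only [passesCheckTo_succ, headStep_chk]
    by_cases hto : PassesCheckTo N c r s
    · rw [if_pos hto, Option.bind_some]
      simp only [hto, true_and]
      split_ifs <;> rfl
    · simp [hto]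

theorem PassesCheckTo.checkOk (h : PassesCheckTo N c r N) {a : ℕ} (ha : a < N) :
    CheckOk (posOf N a) (decide (headPos N 1 a + 1 = N))
      { r with seen := seenBefore N c r (headPos N 1 a) } (c a) := by
  have hvisit := h (headPos N 1 a) (headPos_lt ha)
  rwa [headPos_headPos ha] at hvisit

theorem PassesCheckTo.isConsistent (hN : 0 < N) (h : PassesCheckTo N c r N) :
    IsConsistent N c r where
  arrived_eq a ha := (h.checkOk ha).1
  eq_of_track k a ha a' ha' hk hk' := by
    have hnot_lt {a a' : ℕ} (ha : a < N) (ha' : a' < N) (hk : (c a).track k = true)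
        (hk' : (c a').track k = true) : ¬ headPos N 1 a < headPos N 1 a' := fun hlt => by
      have hunseen := (h.checkOk ha').2.1 k hk'
      rw [← Bool.not_eq_true, seenBefore_eq_true_iff] at hunseen
      exact hunseen (.inr ⟨headPos N 1 a, hlt, by rwa [headPos_headPos ha]⟩)
    have heq : headPos N 1 a = headPos N 1 a' :=
      le_antisymm (not_lt.1 (hnot_lt ha' ha hk' hk)) (not_lt.1 (hnot_lt ha ha' hk hk'))
    rw [← headPos_headPos (e := 1) ha, heq, headPos_headPos ha']
  seen_eq_false k a ha hk := by
    have hunseen := (h.checkOk ha).2.1 k hk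
    rw [← Bool.not_eq_true, seenBefore_eq_true_iff, not_or] at hunseen
    simpa using hunseen.1
  lt_payloadCount d a ha hk := (posOf_lt_payloadCount N a).1 ((h.checkOk ha).2.2.1 d hk)
  seen_or_exists k := by
    have hfin := (h.checkOk hN).2.2.2 (by simp [headPos]; omega) k
    simp only [seenBefore_eq_true_iff] at hfin
    rcases hfin with (hk | ⟨i, hi, hk⟩) | hk
    · exact .inl hk
    · exact .inr ⟨headPos N 1 i, headPos_lt (hi.trans (headPos_lt hN)), hk⟩
    · exact .inr ⟨0, hN, hk⟩

theorem IsConsistent.passesCheckTo (h : IsConsistent N c r) : PassesCheckTo N c r N := by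
  intro i hi
  have hcell := headPos_lt (e := 1) hi
  refine ⟨h.arrived_eq _ hcell, fun k hk => ?_, fun d hk => ?_, fun hfin k => ?_⟩
  · simp only
    rw [← Bool.not_eq_true, seenBefore_eq_true_iff, not_or]
    refine ⟨by simp [h.seen_eq_false k _ hcell hk], ?_⟩
    rintro ⟨i', hi', hk'⟩
    have hsame := congrArg (headPos N 1)
      (h.eq_of_track k _ hcell _ (headPos_lt (hi'.trans hi)) hk hk')
    rw [headPos_headPos hi, headPos_headPos (hi'.trans hi)] at hsame
    omega
  · exact (posOf_lt_payloadCount _ _).2 (h.lt_payloadCount d _ hcell hk)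
  · rw [decide_eq_true_eq] at hfin
    simp only [seenBefore_eq_true_iff]
    rcases h.seen_or_exists k with hk | ⟨a, ha, hk⟩
    · exact .inl (.inl hk)
    · have hstep : headPos N 1 a < N := headPos_lt ha
      by_cases heq : headPos N 1 a = i
      · exact .inr (by rwa [← heq, headPos_headPos ha])
      · exact .inl (.inr ⟨headPos N 1 a, by omega, by rwa [headPos_headPos ha]⟩)

end Check

theorem registerAt_none {N e : ℕ} {v : ℕ → Option CellContent} :
    ∀ s, registerAt N e v none s = none
  | 0 => rfl
  | s + 1 => by
    rw [registerAt, registerAt_none s]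
    cases v (headPos N e s) <;> rfl

theorem exists_content_of_registerAt {N e : ℕ} {v : ℕ → Option CellContent}
    {r₀ : Option Register} :
    ∀ {s r}, registerAt N e v r₀ s = some r → ∀ i < s, ∃ c, v (headPos N e i) = some c
  | 0, _, _, i, hi => absurd hi (Nat.not_lt_zero i)
  | s + 1, _, h, i, hi => by
    obtain ⟨c, hc, h⟩ := Option.bind_eq_some_iff.1 h
    obtain ⟨r', hr', _⟩ := Option.bind_eq_some_iff.1 h
    rcases Nat.lt_succ_iff_lt_or_eq.1 hi with hlt | rfl
    · exact exists_content_of_registerAt hr' i hlt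
    · exact ⟨c, hc⟩

/-- The block after the start slot and the two slots of the check. -/
noncomputable def checkedBlock (N : ℕ) (b : Block) : Block :=
  blockRun N 2 N (blockRun N 1 N (blockRun N 0 N b))

section CheckedBlock

variable {N : ℕ} {b : Block}

theorem blockRun_chk (hN : IsAdmissible N) (b : Block) :
    BlockEq N (blockRun N 1 N (blockRun N 0 N b)) (bodyBlock (headPos N 2 0)
      (contentAfter N 1 (startContent b) (some (initialRegister (b (N - 1)))))
      (registerAt N 1 (startContent b) (some (initialRegister (b (N - 1)))) N)) := by
  have hlen := hN.length_le
  have hstart := blockRun_start (N := N) b (N - 1)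
  rw [show N - 1 + 1 = N by omega] at hstart
  exact blockRun_pass_end _ _ (by simp [instrAt_one hN, IsPass]) hstart

theorem checkedBlock_of_isConsistent (hN : IsAdmissible N) {c : ℕ → CellContent}
    (hv : ∀ a < N, startContent b a = some (c a))
    (hc : IsConsistent N c (initialRegister (b (N - 1)))) :
    ∃ r, BlockEq N (checkedBlock N b) (stateBlock (headPos N 3 0) (r, c)) := by
  classical
  set r := initialRegister (b (N - 1))
  have hto := hc.passesCheckTo
  have hregister : registerAt N 1 (startContent b) (some r) N =
      some { r with seen := seenBefore N c r N } := by rw [registerAt_chk hN hv N le_rfl, if_pos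
        hto]
  have hcontent : ∀ a < N, contentAfter N 1 (startContent b) (some r) a = some (c a) := by
    intro a ha
    have hto' : PassesCheckTo N c r (headPos N 1 a) :=
      fun i hi => hto i (hi.trans (headPos_lt ha))
    rw [contentAfter, hv a ha, registerAt_chk hN hv _ (headPos_lt ha).le, if_pos hto',
      Option.bind_some, Option.bind_some, instrAt_one hN, headStep_chk, if_pos (hto.checkOk ha),
      Option.map_some]
  have hchk := blockRun_chk hN b
  rw [hregister] at hchk
  have hnop := blockRun_stateBlock (e := 2) (st := ({ r with seen := seenBefore N c r N }, c))
    (by simp [instrAt_two hN, IsPass]) (by simp [instrAt_two hN])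
    fun a ha d => (hchk a ha d).trans (bodyBlock_congr hcontent _ a ha d)
  rw [instrAt_two hN, sweep_nop] at hnop
  exact ⟨_, hnop⟩

theorem checkedBlock_of_not_isConsistent (hN : IsAdmissible N)
    (h : ¬ ∃ c : ℕ → CellContent, (∀ a < N, startContent b a = some (c a)) ∧
      IsConsistent N c (initialRegister (b (N - 1)))) :
    BlockEq N (checkedBlock N b) fun _ _ => none := by
  classical
  have hlen := hN.length_le
  have hregister :
      registerAt N 1 (startContent b) (some (initialRegister (b (N - 1)))) N = none := by
    by_contra hne
    obtain ⟨r, hr⟩ := Option.ne_none_iff_exists'.1 hne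
    have hcontent : ∀ a < N, ∃ c, startContent b a = some c := by
      intro a ha
      have hc := exists_content_of_registerAt hr (headPos N 1 a) (headPos_lt ha)
      rwa [headPos_headPos ha] at hc
    have : Nonempty CellContent := ⟨(hcontent 0 (by omega)).choose⟩
    choose! c hc using hcontent
    rw [registerAt_chk hN hc N le_rfl] at hr
    split_ifs at hr with hto
    exact h ⟨c, hc, hto.isConsistent (by omega)⟩
  have hchk := blockRun_chk hN b
  rw [hregister] at hchk
  have hnop := blockRun_pass_end (e := 2) _ _ (by simp [instrAt_two hN, IsPass]) hchk
  intro a ha d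
  rw [checkedBlock, hnop a ha d, bodyBlock, contentAfter]
  simp only [registerAt_none, Option.bind_none, Option.bind_fun_none, Option.map_none, ite_self]

end CheckedBlock

/-! ### Blocks that encode messages -/

/-- The letter in cell `a` of a block encoding address `A`, slot `e`, head position `w` and
payload `y`. -/
noncomputable def encodeLetter (A e w : ℕ) (y : Payload) (a : ℕ) : Letter :=
  ⟨decide (a = A), decide (a = e), decide (a = w), decide (a = payloadCode y)⟩

/-- The letters of the block `b` encode the messages with address `A`, slot `e`, head position `w`
and payloads `P`, at least one of which is present. -/
structure Encodes (N : ℕ) (b : Block) (A e w : ℕ) (P : Dir → Option Payload) : Prop where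
  address_lt : A < N
  slot_lt : e < N
  head_lt : w < N
  exists_payload : ∃ d y, P d = some y
  eq_letter : ∀ a < N, ∀ d, b a d = (P d).map fun y => .letter (encodeLetter A e w y a)

/-- The content of cell `a` of a working block which has read `A`, `e`, `w` and `P`, whose output
tracks are marked in the cells `x` and whose output payloads are `o`. -/
noncomputable def tape (A e w : ℕ) (P : Dir → Option Payload) (x : OutputTrack → ℕ)
    (o : Dir → Option Payload) (a : ℕ) : CellContent where
  arrived d := (P d).isSome
  track k := match k with
    | .A => decide (a = A)
    | .E => decide (a = e)
    | .W => decide (a = w)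
    | .I d => (P d).any fun y => decide (a = payloadCode y)
  outTag k := decide (a = x k)
  outPresent d := (o d).isSome
  outPayload d := (o d).any fun y => decide (a = payloadCode y)

/-- The initial marks of the output tracks. -/
def tagDigits (A e w : ℕ) : OutputTrack → ℕ
  | .A _ => A
  | .E => e
  | .W => w

/-- The initial content of cell `a` of a working block. -/
noncomputable abbrev initialTape (A e w : ℕ) (P : Dir → Option Payload) : ℕ → CellContent :=
  tape A e w P (tagDigits A e w) fun _ => none

section Encodes

variable {N A e w : ℕ} {b : Block} {P : Dir → Option Payload}

theorem tape_track_I {x : OutputTrack → ℕ} {o : Dir → Option Payload} {a : ℕ} {d : Dir} :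
    (tape A e w P x o a).track (.I d) = true ↔ ∃ y, P d = some y ∧ a = payloadCode y := by
  simp [tape, Option.any_eq_true]

theorem Encodes.exists_isReading (h : Encodes N b A e w P) {a : ℕ} (ha : a < N) :
    ∃ l, IsReading (b a) l := by
  obtain ⟨d, y, hy⟩ := h.exists_payload
  refine ⟨encodeLetter A e w y a, ⟨d, _, by rw [h.eq_letter a ha, hy]; rfl⟩, ?_⟩
  intro d' y' hy'
  rw [h.eq_letter a ha, Option.map_eq_some_iff] at hy'
  obtain ⟨y'', _, rfl⟩ := hy'
  exact ⟨decide (a = payloadCode y''), rfl⟩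

theorem Encodes.startContent_eq (h : Encodes N b A e w P) {a : ℕ} (ha : a < N) :
    startContent b a = some (initialTape A e w P a) := by
  have hread := h.exists_isReading ha
  rw [startContent, dif_pos hread]
  obtain ⟨d, y, hy⟩ := h.exists_payload
  obtain ⟨_, hletter⟩ := hread.choose_spec.2 d (.letter (encodeLetter A e w y a))
    (by rw [h.eq_letter a ha, hy]; rfl)
  simp only [Payload.letter.injEq, encodeLetter, Letter.mk.injEq] at hletter
  obtain ⟨hA, he, hw, _⟩ := hletter
  congr 1
  ext k
  · simp [initialContent, tape, h.eq_letter a ha]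
  · cases k with
    | I d =>
      simp only [initialContent, tape, ← hA, ← he, ← hw, h.eq_letter a ha]
      cases P d <;> simp [encodeLetter]
    | _ => simp only [initialContent, tape, ← hA, ← he, ← hw]
  · cases k <;> simp only [initialContent, tape, tagDigits, ← hA, ← he, ← hw] <;> rfl
  · rfl
  · rfl

theorem Encodes.isConsistent (hN : IsAdmissible N) (h : Encodes N b A e w P) :
    IsConsistent N (initialTape A e w P) (initialRegister (b (N - 1))) := by
  have hcount := hN.payloadCount_lt
  have hsome (d : Dir) : (b (N - 1) d).isSome = (P d).isSome := by
    rw [h.eq_letter _ (by omega), Option.isSome_map]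
  refine ⟨fun a _ => funext fun d => by simp [tape, initialRegister, hsome], ?_, ?_, ?_, ?_⟩
  · intro k a _ a' _ hk hk'
    cases k with
    | I d =>
      obtain ⟨y, hy, rfl⟩ := tape_track_I.1 hk
      obtain ⟨y', hy', rfl⟩ := tape_track_I.1 hk'
      rw [Option.some.inj (hy.symm.trans hy')]
    | _ =>
      simp only [tape, decide_eq_true_eq] at hk hk'
      omega
  · intro k a _ hk
    cases k with
    | I d =>
      obtain ⟨y, hy, _⟩ := tape_track_I.1 hk
      simp [initialRegister, hsome, hy]
    | _ => rfl
  · intro d a _ hk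
    obtain ⟨y, _, rfl⟩ := tape_track_I.1 hk
    exact payloadCode_lt y
  · intro k
    cases k with
    | A => exact .inr ⟨A, h.address_lt, by simp [tape]⟩
    | E => exact .inr ⟨e, h.slot_lt, by simp [tape]⟩
    | W => exact .inr ⟨w, h.head_lt, by simp [tape]⟩
    | I d =>
      cases hP : P d with
      | none => simp [initialRegister, hsome, hP]
      | some y =>
        exact .inr ⟨payloadCode y, (payloadCode_lt y).trans hcount, tape_track_I.2 ⟨y, hP, rfl⟩⟩

theorem IsConsistent.exists_track_eq {c : ℕ → CellContent} {r : Register}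
    (h : IsConsistent N c r) {k : InputTrack} (hk : r.seen k = false) :
    ∃ x < N, ∀ a < N, (c a).track k = decide (a = x) := by
  rcases h.seen_or_exists k with hseen | ⟨x, hx, hmark⟩
  · rw [hk] at hseen
    cases hseen
  · refine ⟨x, hx, fun a ha => ?_⟩
    rw [Bool.eq_iff_iff, decide_eq_true_eq]
    exact ⟨fun h2 => h.eq_of_track k a ha x hx h2 hmark, fun h2 => h2 ▸ hmark⟩

theorem exists_letter_of_startContent {a : ℕ} {c : CellContent} (h : startContent b a = some c) :
    ∃ l, IsReading (b a) l ∧ c = initialContent (b a) l := by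
  rw [startContent] at h
  split_ifs at h with hread
  exact ⟨_, hread.choose_spec, (Option.some.inj h).symm⟩

theorem IsConsistent.exists_track_I_eq {c : ℕ → CellContent}
    (h : IsConsistent N c (initialRegister (b (N - 1)))) {d : Dir}
    (hd : (b (N - 1) d).isSome = true) :
    ∃ y, ∀ a < N, (c a).track (.I d) = decide (a = payloadCode y) := by
  obtain ⟨x, hx, htrack⟩ := h.exists_track_eq (k := .I d) (by simp [initialRegister, hd])
  obtain ⟨y, rfl⟩ := exists_payloadCode_eq (h.lt_payloadCount d x hx (by rw [htrack x hx]; simp))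
  exact ⟨y, htrack⟩

theorem IsConsistent.exists_encodes (hN : IsAdmissible N) {c : ℕ → CellContent}
    (hv : ∀ a < N, startContent b a = some (c a))
    (h : IsConsistent N c (initialRegister (b (N - 1)))) : ∃ A e w P, Encodes N b A e w P := by
  have := hN.payloadCount_lt
  have : Nonempty Letter := ⟨⟨true, true, true, true⟩⟩
  have : Nonempty Payload := ⟨.letter ⟨true, true, true, true⟩⟩
  have hletter : ∀ a < N, ∃ l, IsReading (b a) l ∧ c a = initialContent (b a) l :=
    fun a ha => exists_letter_of_startContent (hv a ha)
  choose! l hread hcontent using hletter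
  obtain ⟨A, hA, htrackA⟩ := h.exists_track_eq (k := .A) rfl
  obtain ⟨e, he, htrackE⟩ := h.exists_track_eq (k := .E) rfl
  obtain ⟨w, hw, htrackW⟩ := h.exists_track_eq (k := .W) rfl
  have harrived : ∀ a < N, ∀ d, (b a d).isSome = (b (N - 1) d).isSome := by
    intro a ha d
    have := congrFun (h.arrived_eq a ha) d
    rwa [hcontent a ha] at this
  have hpayload : ∀ d, (b (N - 1) d).isSome = true →
      ∃ y, ∀ a < N, (c a).track (.I d) = decide (a = payloadCode y) :=
    fun d hd => h.exists_track_I_eq hd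
  choose! y htrackI using hpayload
  refine ⟨A, e, w, fun d => if (b (N - 1) d).isSome = true then some (y d) else none,
    hA, he, hw, ?_, fun a ha d => ?_⟩
  · obtain ⟨d, y', hy'⟩ := (hread (N - 1) (by omega)).1
    exact ⟨d, y d, by simp [hy']⟩
  · have hsome := harrived a ha d
    split_ifs with hd
    · rw [hd] at hsome
      obtain ⟨y', hy'⟩ := Option.isSome_iff_exists.1 hsome
      obtain ⟨bit, rfl⟩ := (hread a ha).2 d y' hy'
      have hA' := htrackA a ha
      have hE' := htrackE a ha
      have hW' := htrackW a ha
      have hI' := htrackI d hd a ha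
      simp only [hcontent a ha, initialContent, hy'] at hA' hE' hW' hI'
      simp only [Option.some.injEq, Payload.letter.injEq, Letter.mk.injEq, true_and] at hI'
      simp [hy', encodeLetter, hA', hE', hW', ← hI']
    · rw [Bool.eq_false_iff.2 hd] at hsome
      simpa using hsome

theorem Encodes.checkedBlock_eq (hN : IsAdmissible N) (h : Encodes N b A e w P) :
    ∃ r, BlockEq N (checkedBlock N b) (stateBlock (headPos N 3 0) (r, initialTape A e w P)) :=
  checkedBlock_of_isConsistent hN (fun _ ha => h.startContent_eq ha) (h.isConsistent hN)

theorem checkedBlock_of_not_encodes (hN : IsAdmissible N) (h : ¬ ∃ A e w P, Encodes N b A e w P) :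
    BlockEq N (checkedBlock N b) fun _ _ => none :=
  checkedBlock_of_not_isConsistent hN fun ⟨_, hv, hc⟩ => h (hc.exists_encodes hN hv)

end Encodes

/-! ### Execution of programs -/

/-- The state after a program, whose instruction pairs are executed in an odd slot followed by an
even one. -/
noncomputable def exec (N : ℕ) : Program → MachineState → MachineState
  | [], st => st
  | lr :: l, st => exec N l (sweep N 0 lr.2 (sweep N 1 lr.1 st))

theorem exec_append (N : ℕ) :
    ∀ (l l' : Program) (st : MachineState), exec N (l ++ l') st = exec N l' (exec N l st)
  | [], _, _ => rfl
  | lr :: l, l', st => by rw [List.cons_append, exec, exec, exec_append N l l']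

theorem exec_single_cons (N : ℕ) (i : Instr) (l : Program) (st : MachineState) :
    exec N (single i :: l) st = exec N l (sweep N 0 i st) := by
  simp only [exec, single, sweep_nop]

section Instructions

variable {N p : ℕ} {st : MachineState}

theorem sweep_reset (hN : 0 < N) :
    sweep N p (.inl .reset) st = ({ st.1 with flag := true, carry := false }, st.2) := by
  have hregister (s : ℕ) : sweepRegister N p (.inl .reset) st (s + 1) =
      { st.1 with flag := true, carry := false } := by
    induction s with
    | zero => rfl
    | succ s ih =>
      rw [sweepRegister, ih]
      rfl
  obtain ⟨n, rfl⟩ : ∃ n, N = n + 1 := ⟨N - 1, by omega⟩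
  simp only [sweep, hregister]
  rfl

/-- The outcome of a test instruction at a cell. -/
noncomputable def testValue : Instr → Position → Instr → CellContent → Bool
  | .inl (.test q), pa, _, c => viewTest q pa c
  | .inl (.testEdge b f), pa, _, c => edgeTest b f pa c
  | .inr (k, j, v), _, ia, c => bitTest k j v ia c
  | _, _, _, _ => true

/-- All tests in `ts` succeed at all cells of a block with contents `c`. -/
def PassesTests (N : ℕ) (ts : List Instr) (c : ℕ → CellContent) : Prop :=
  ∀ i ∈ ts, ∀ a < N, testValue i (posOf N a) (instrAt N a) (c a) = true

theorem stepTotal_of_isTest {i : Instr} (h : IsTest i) (pa : Position) (ia : Instr) (fin : Bool)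
    (r : Register) (c : CellContent) :
    stepTotal pa ia fin i r c = ({ r with flag := r.flag && testValue i pa ia c }, c) := by
  rcases i with (_ | _ | _ | _ | _ | _ | _ | _ | _ | _ | _ | _) | _ <;>
    first | rfl | exact h.elim

open Classical in
theorem sweepRegister_of_isTest {i : Instr} (h : IsTest i) (s : ℕ) :
    sweepRegister N p i st s = { st.1 with
      flag := st.1.flag && decide (∀ j < s, testValue i (posOf N (headPos N p j))
        (instrAt N (headPos N p j)) (st.2 (headPos N p j)) = true) } := by
  induction s with
  | zero => simp [sweepRegister]
  | succ s ih =>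
    rw [sweepRegister, ih, stepTotal_of_isTest h]
    simp only [Nat.forall_lt_succ_right, Bool.decide_and, Bool.decide_eq_true, Bool.and_assoc]

open Classical in
theorem sweep_of_isTest {i : Instr} (h : IsTest i) : sweep N p i st =
    ({ st.1 with
      flag := st.1.flag && decide (∀ a < N, testValue i (posOf N a) (instrAt N a) (st.2 a) =
        true) },
      st.2) := by
  have hall : (∀ j < N, testValue i (posOf N (headPos N p j)) (instrAt N (headPos N p j))
      (st.2 (headPos N p j)) = true) ↔
      ∀ a < N, testValue i (posOf N a) (instrAt N a) (st.2 a) = true := by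
    refine ⟨fun h a ha => ?_, fun h j hj => h _ (headPos_lt hj)⟩
    have := h (headPos N p a) (headPos_lt ha)
    rwa [headPos_headPos ha] at this
  simp only [sweep, stepTotal_of_isTest h, sweepRegister_of_isTest h, hall]

open Classical in
theorem exec_tests (N : ℕ) : ∀ ts : List Instr, (∀ i ∈ ts, IsTest i) → ∀ st : MachineState,
    exec N (ts.map single) st =
      ({ st.1 with flag := st.1.flag && decide (PassesTests N ts st.2) }, st.2)
  | [], _, st => by simp [exec, PassesTests]
  | i :: ts, h, st => by
    rw [List.map_cons, exec_single_cons, sweep_of_isTest (h i (by simp)),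
      exec_tests N ts fun j hj => h j (by simp [hj])]
    simp only [PassesTests, List.forall_mem_cons, Bool.decide_and, Bool.and_assoc]
    congr

theorem sweep_emit_of_flag_false {f : Dir → Option Payload} (h : st.1.flag = false) :
    sweep N p (.inl (.emit f)) st = st := by
  rw [sweep_of_fst_eq fun _ _ _ _ => rfl]
  simp [stepTotal, h]

theorem sweep_emit_of_flag_true {f : Dir → Option Payload} (h : st.1.flag = true) :
    sweep N p (.inl (.emit f)) st = (st.1, fun a => { st.2 a with
      outPresent := fun d => (st.2 a).outPresent d || (f d).isSome
      outPayload := fun d => match f d with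
        | some y => decide ((posOf N a).1.val = payloadCode y)
        | none => (st.2 a).outPayload d }) := by
  rw [sweep_of_fst_eq fun _ _ _ _ => rfl]
  simp only [stepTotal, h, if_true]

theorem sweep_shift_of_flag_false {k : OutputTrack} (h : st.1.flag = false) :
    sweep N p (.inl (.shift k)) st = st := by
  rw [sweep_of_fst_eq fun _ _ _ _ => by simp [stepTotal, h]]
  simp [stepTotal, h]

theorem sweep_shift_of_flag_true {k : OutputTrack} (hN : 0 < N) (h : st.1.flag = true) :
    sweep N p (.inl (.shift k)) st =
      ({ st.1 with carry := (st.2 (headPos N p (N - 1))).outTag k }, fun a =>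
        { st.2 a with outTag := Function.update (st.2 a).outTag k (if headPos N p a = 0 then
          st.1.carry else (st.2 (headPos N p (headPos N p a - 1))).outTag k) }) := by
  have hregister (s : ℕ) : sweepRegister N p (.inl (.shift k)) st s =
      { st.1 with carry := if s = 0 then st.1.carry else
        (st.2 (headPos N p (s - 1))).outTag k } := by
    induction s with
    | zero => rfl
    | succ s ih =>
      rw [sweepRegister, ih]
      simp [stepTotal, h]
  simp only [sweep, hregister, stepTotal, h, if_true, hN.ne', if_false]

theorem sweep_drop_of_flag_false {k : OutputTrack} (h : st.1.flag = false) :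
    sweep N p (.inl (.drop k)) st = st := by
  rw [sweep_of_fst_eq fun _ _ _ _ => rfl]
  simp [stepTotal, h]

theorem sweep_drop_of_flag_true {k : OutputTrack} (h : st.1.flag = true) :
    sweep N p (.inl (.drop k)) st = (st.1, fun a => if headPos N p a + 1 = N then
      { st.2 a with outTag := Function.update (st.2 a).outTag k ((st.2 a).outTag k || st.1.carry) }
      else st.2 a) := by
  rw [sweep_of_fst_eq fun _ _ _ _ => rfl]
  simp only [stepTotal, h, true_and, decide_eq_true_eq]

end Instructions

/-! ### Computation of the next tags -/

/-- The successor of `x` modulo `N`, for `x < N`. -/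
def cyclicSucc (N x : ℕ) : ℕ := if x + 1 = N then 0 else x + 1

/-- The predecessor of `x` modulo `N`, for `x < N`. -/
def cyclicPred (N x : ℕ) : ℕ := if x = 0 then N - 1 else x - 1

theorem cyclicSucc_lt {N x : ℕ} (h : x < N) : cyclicSucc N x < N := by
  unfold cyclicSucc
  split_ifs <;> omega

theorem cyclicPred_lt {N x : ℕ} (h : x < N) : cyclicPred N x < N := by
  unfold cyclicPred
  split_ifs <;> omega

section Tape

variable {N A e w : ℕ} {P : Dir → Option Payload} {x : OutputTrack → ℕ}
  {o : Dir → Option Payload} {st : MachineState} {k : OutputTrack}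

/-- The contents of the block in state `st` are given by `tape`. -/
def HasTape (N A e w : ℕ) (P : Dir → Option Payload) (x : OutputTrack → ℕ)
    (o : Dir → Option Payload) (st : MachineState) : Prop :=
  ∀ a < N, st.2 a = tape A e w P x o a

theorem tape_outTag (a : ℕ) : (tape A e w P x o a).outTag k = decide (a = x k) := rfl

theorem tape_update (a m : ℕ) :
    { tape A e w P x o a with
      outTag := Function.update (tape A e w P x o a).outTag k (decide (a = m)) } =
      tape A e w P (Function.update x k m) o a := by
  simp only [tape]
  congr 1
  funext k'
  by_cases hk : k' = k
  · subst hk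
    simp
  · simp [Function.update_of_ne hk]

theorem PassesTests.of_eq {ts : List Instr} {c c' : ℕ → CellContent} (h : PassesTests N ts c)
    (hc : ∀ a < N, c a = c' a) : PassesTests N ts c' := by
  intro i hi a ha
  rw [← hc a ha]
  exact h i hi a ha

theorem exec_rotateRight_of_flag_true (hN : 1 < N) (h : st.1.flag = true)
    (hcarry : st.1.carry = false) (hx : x k < N) (hs : HasTape N A e w P x o st) :
    HasTape N A e w P (Function.update x k (cyclicSucc N (x k))) o (exec N (rotateRight k) st) := by
  intro a ha
  have heven : headPos N 0 = fun s => s := by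
    funext s
    simp [headPos]
  have hodd : headPos N 1 = fun s => N - 1 - s := by
    funext s
    simp [headPos]
  simp only [rotateRight, exec, sweep_nop]
  rw [sweep_shift_of_flag_true (by omega) h, sweep_drop_of_flag_true (by exact h), ← tape_update]
  simp only [heven, hodd, hcarry, hs a ha, hs (N - 1) (by omega)]
  by_cases hfirst : a = 0
  · subst hfirst
    rw [if_pos (by omega)]
    simp only [if_true, Function.update_self, Function.update_idem, Bool.false_or, tape_outTag]
    congr 2
    rw [decide_eq_decide]
    grind [cyclicSucc]
  · rw [if_neg (by omega), if_neg hfirst, hs (a - 1) (by omega), tape_outTag]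
    congr 2
    rw [decide_eq_decide]
    grind [cyclicSucc]

theorem exec_rotateLeft_of_flag_true (hN : 1 < N) (h : st.1.flag = true)
    (hcarry : st.1.carry = false) (hx : x k < N) (hs : HasTape N A e w P x o st) :
    HasTape N A e w P (Function.update x k (cyclicPred N (x k))) o (exec N (rotateLeft k) st) := by
  intro a ha
  have heven : headPos N 0 = fun s => s := by
    funext s
    simp [headPos]
  have hodd : headPos N 1 = fun s => N - 1 - s := by
    funext s
    simp [headPos]
  simp only [rotateLeft, exec]
  rw [sweep_shift_of_flag_true (by omega) h, sweep_drop_of_flag_true (by exact h), ← tape_update]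
  simp only [heven, hodd, hcarry, hs a ha, Nat.sub_self, hs 0 (by omega)]
  by_cases hlast : a + 1 = N
  · rw [if_pos hlast, if_pos (by omega)]
    simp only [Function.update_self, Function.update_idem, Bool.false_or, tape_outTag]
    congr 2
    rw [decide_eq_decide]
    grind [cyclicPred]
  · rw [if_neg hlast, if_neg (by omega), hs _ (by omega), tape_outTag]
    congr 2
    rw [decide_eq_decide]
    grind [cyclicPred]

theorem exec_rotateRight (hN : 1 < N) (hcarry : st.1.carry = false) (hx : x k < N)
    (hs : HasTape N A e w P x o st) :
    HasTape N A e w P (if st.1.flag = true then Function.update x k (cyclicSucc N (x k)) else x) o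
      (exec N (rotateRight k) st) := by
  split_ifs with h
  · exact exec_rotateRight_of_flag_true hN h hcarry hx hs
  · rw [Bool.not_eq_true] at h
    simpa only [rotateRight, exec, sweep_nop, sweep_shift_of_flag_false h,
      sweep_drop_of_flag_false h] using hs

theorem exec_rotateLeft (hN : 1 < N) (hcarry : st.1.carry = false) (hx : x k < N)
    (hs : HasTape N A e w P x o st) :
    HasTape N A e w P (if st.1.flag = true then Function.update x k (cyclicPred N (x k)) else x) o
      (exec N (rotateLeft k) st) := by
  split_ifs with h
  · exact exec_rotateLeft_of_flag_true hN h hcarry hx hs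
  · rw [Bool.not_eq_true] at h
    simpa only [rotateLeft, exec, sweep_shift_of_flag_false h, sweep_drop_of_flag_false h] using hs

theorem exec_reset_tests (hN : 0 < N) (hs : HasTape N A e w P x o st) {ts : List Instr}
    (hts : ∀ i ∈ ts, IsTest i) (l : Program) :
    ∃ st' : MachineState, exec N (single (.inl .reset) :: (ts.map single ++ l)) st = exec N l st' ∧
      HasTape N A e w P x o st' ∧ st'.1.carry = false ∧
      (st'.1.flag = true ↔ PassesTests N ts (tape A e w P x o)) := by
  classical
  rw [exec_single_cons, sweep_reset hN, exec_append, exec_tests N ts hts]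
  refine ⟨_, rfl, hs, rfl, ?_⟩
  simp only [Bool.true_and, decide_eq_true_eq]
  exact ⟨fun h => h.of_eq hs, fun h => h.of_eq fun a ha => (hs a ha).symm⟩

theorem exec_guarded_rotateRight (hN : 1 < N) (hs : HasTape N A e w P x o st) {ts : List Instr}
    (hts : ∀ i ∈ ts, IsTest i) (hx : x k < N) {C : Prop} [Decidable C]
    (hC : PassesTests N ts (tape A e w P x o) ↔ C) :
    HasTape N A e w P (if C then Function.update x k (cyclicSucc N (x k)) else x) o
      (exec N (single (.inl .reset) :: (ts.map single ++ rotateRight k)) st) := by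
  obtain ⟨st', hexec, hs', hcarry, hflag⟩ := exec_reset_tests (by omega) hs hts (rotateRight k)
  simpa only [hexec, hflag, hC] using exec_rotateRight hN hcarry hx hs'

theorem exec_guarded_rotateLeft (hN : 1 < N) (hs : HasTape N A e w P x o st) {ts : List Instr}
    (hts : ∀ i ∈ ts, IsTest i) (hx : x k < N) {C : Prop} [Decidable C]
    (hC : PassesTests N ts (tape A e w P x o) ↔ C) :
    HasTape N A e w P (if C then Function.update x k (cyclicPred N (x k)) else x) o
      (exec N (single (.inl .reset) :: (ts.map single ++ rotateLeft k)) st) := by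
  obtain ⟨st', hexec, hs', hcarry, hflag⟩ := exec_reset_tests (by omega) hs hts (rotateLeft k)
  simpa only [hexec, hflag, hC] using exec_rotateLeft hN hcarry hx hs'

theorem passesTests_testEdge_iff (he : e < N) (hw : w < N) (b f : Bool) :
    PassesTests N [.inl (.testEdge b f)] (tape A e w P x o) ↔
    (e % 2 = 1 ↔ b = true) ∧ ((if b = true then w = 0 else w + 1 = N) ↔ f = true) := by
  simp only [PassesTests, List.mem_singleton, forall_eq, testValue, edgeTest, decide_eq_true_eq,
    tape]
  have hslot (a : ℕ) : (posOf N a).isOdd = b ↔ (a % 2 = 1 ↔ b = true) := by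
    rw [Bool.eq_iff_iff, posOf_isOdd]
  have hhead (a : ℕ) : (if b = true then (posOf N a).isFirst else (posOf N a).isLast) = f ↔
      ((if b = true then a = 0 else a + 1 = N) ↔ f = true) := by
    rw [Bool.eq_iff_iff]
    cases b
    · simp [posOf_isLast]
    · simp [posOf_isFirst]
  simp only [hslot, hhead]
  refine ⟨fun h => ⟨(h e he).1 rfl, (h w hw).2 rfl⟩, fun h a _ => ⟨?_, ?_⟩⟩
  · rintro rfl
    exact h.1
  · rintro rfl
    exact h.2

/-- The head position in the step after step `(e, w)`, where slot and head position are `e` and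
`w`. -/
def nextHead (N e w : ℕ) : ℕ :=
  if e % 2 = 1 then (if w = 0 then w else w - 1) else (if w + 1 = N then w else w + 1)

/-- The slot of the step after step `(e, w)`. -/
def nextSlot (N e w : ℕ) : ℕ :=
  if (if e % 2 = 1 then w = 0 else w + 1 = N) then cyclicSucc N e else e

/-- The marks of the output tracks after the computation of the next tags. -/
def nextTagDigits (N A e w : ℕ) : OutputTrack → ℕ
  | .A .R => cyclicSucc N A
  | .A .L => cyclicPred N A
  | .A .C => A
  | .E => nextSlot N e w
  | .W => nextHead N e w

theorem exec_addressProgram (hN : 1 < N) (hR : x (.A .R) < N) (hL : x (.A .L) < N)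
    (hs : HasTape N A e w P x o st) :
    HasTape N A e w P (Function.update (Function.update x (.A .R) (cyclicSucc N (x (.A .R))))
      (.A .L) (cyclicPred N (x (.A .L)))) o (exec N addressProgram st) := by
  rw [addressProgram, exec_append]
  have hright := exec_guarded_rotateRight hN hs (ts := []) (by simp) (k := .A .R) hR (C := True)
    (by simp [PassesTests])
  exact exec_guarded_rotateLeft hN hright (ts := []) (by simp) (k := .A .L) hL (C := True)
    (by simp [PassesTests])

theorem exec_headProgram (hN : 1 < N) (he : e < N) (hw : w < N) (hx : x .W = w)
    (hs : HasTape N A e w P x o st) :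
    HasTape N A e w P (Function.update x .W (nextHead N e w)) o (exec N headProgram st) := by
  classical
  rw [headProgram, exec_append]
  have hright := exec_guarded_rotateRight hN hs (ts := [.inl (.testEdge false false)])
    (by simp [IsTest]) (k := .W) (hx ▸ hw) (passesTests_testEdge_iff he hw false false)
  have hleft := exec_guarded_rotateLeft hN hright (ts := [.inl (.testEdge true false)])
    (by simp [IsTest]) (k := .W) (by split_ifs <;> simp [hx, hw, cyclicSucc_lt])
    (passesTests_testEdge_iff he hw true false)
  convert hleft using 1
  · funext k
    by_cases hk : k = .W
    · subst hk
      simp only [ite_apply, Function.update_self, hx]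
      grind [nextHead, cyclicSucc, cyclicPred]
    · simp [ite_apply, Function.update_of_ne hk]
  · rfl

theorem exec_slotProgram (hN : 1 < N) (he : e < N) (hw : w < N) (hx : x .E = e)
    (hs : HasTape N A e w P x o st) :
    HasTape N A e w P (Function.update x .E (nextSlot N e w)) o (exec N slotProgram st) := by
  classical
  rw [slotProgram, exec_append]
  have hfalse := exec_guarded_rotateRight hN hs (ts := [.inl (.testEdge false true)])
    (by simp [IsTest]) (k := .E) (hx ▸ he) (passesTests_testEdge_iff he hw false true)
  have htrue := exec_guarded_rotateRight hN hfalse (ts := [.inl (.testEdge true true)])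
    (by simp [IsTest]) (k := .E) (by split_ifs <;> simp [hx, he, cyclicSucc_lt])
    (passesTests_testEdge_iff he hw true true)
  convert htrue using 1
  · funext k
    by_cases hk : k = .E
    · subst hk
      simp only [ite_apply, Function.update_self, hx]
      grind [nextSlot]
    · simp [ite_apply, Function.update_of_ne hk]
  · rfl

theorem exec_tagProgram (hN : 1 < N) (hA : A < N) (he : e < N) (hw : w < N)
    (hs : HasTape N A e w P (tagDigits A e w) o st) :
    HasTape N A e w P (nextTagDigits N A e w) o (exec N tagProgram st) := by
  rw [tagProgram, exec_append, exec_append]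
  convert exec_slotProgram hN he hw rfl
    (exec_headProgram hN he hw rfl (exec_addressProgram hN hA hA hs)) using 1
  funext k
  rcases k with (_ | _ | _) | _ | _ <;> rfl

end Tape

/-! ### Blocks after the program -/

section Tape

variable {N A e w : ℕ} {P : Dir → Option Payload} {x : OutputTrack → ℕ}
  {o : Dir → Option Payload} {st : MachineState}

theorem forall_bitTests_iff (hA : A < N) (he : e < N) (k : RuleInput) :
    PassesTests N ((List.finRange instrBits).flatMap fun j =>
        [.inr (false, j, instrCode k.addrInstr j), .inr (true, j, instrCode k.slotInstr j)])
      (tape A e w P x o) ↔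
    k.addrInstr = instrAt N A ∧ k.slotInstr = instrAt N e := by
  simp only [PassesTests, List.mem_flatMap, List.mem_finRange, true_and, List.mem_cons,
    List.not_mem_nil, or_false]
  constructor
  · refine fun h => ⟨instrCode_injective (funext fun j => ?_),
      instrCode_injective (funext fun j => ?_)⟩
    · have := h _ ⟨j, Or.inl rfl⟩ A hA
      simp only [testValue, bitTest, tape, decide_eq_true_eq] at this
      exact (this (by simp)).symm
    · have := h _ ⟨j, Or.inr rfl⟩ e he
      simp only [testValue, bitTest, tape, decide_eq_true_eq] at this
      exact (this (by simp)).symm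
  · rintro ⟨haddr, hslot⟩ i ⟨j, rfl | rfl⟩ a - <;>
      simp +contextual [testValue, bitTest, tape, haddr, hslot]

theorem forall_viewTest_iff (hN : IsAdmissible N) (hA : A < N) (he : e < N) (hw : w < N)
    (q : LocalView) :
    (∀ a < N, viewTest q (posOf N a) (tape A e w P x o a) = true) ↔
      q = (ruleInput N A e w P).view := by
  have hcount := hN.payloadCount_lt
  obtain ⟨qa, qe, qw, atHead, y⟩ := q
  simp only [ruleInput, LocalView.mk.injEq, viewTest, decide_eq_true_eq, tape_track_I,
    posOf_eq_payloadCode]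
  simp only [tape, decide_eq_true_eq]
  constructor
  · intro h
    obtain ⟨hqa, -, -, hy⟩ := h A hA
    refine ⟨(hqa rfl).1.symm, ((h e he).2.1 rfl).symm, ((h w hw).2.2.1 rfl).symm,
      (hqa rfl).2.symm, funext fun d => ?_⟩
    cases hyd : y d with
    | none => exact (by simpa using (hy d).1 hyd : P d = none).symm
    | some y' =>
      have hlt := payloadCode_lt y'
      obtain ⟨y'', hP, hcode⟩ := ((h (payloadCode y') (by omega)).2.2.2 d).2 y' hyd rfl
      rw [hP, payloadCode_injective hcode]
  · rintro ⟨rfl, rfl, rfl, rfl, rfl⟩ a -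
    exact ⟨fun h => h ▸ ⟨rfl, rfl⟩, fun h => h ▸ rfl, fun h => h ▸ rfl,
      fun d => ⟨fun h => by simp [h], fun y' hy' ha => ⟨y', hy', ha⟩⟩⟩

theorem passesTests_lookupTests_iff (hN : IsAdmissible N) (hA : A < N) (he : e < N) (hw : w < N)
    (k : RuleInput) :
    PassesTests N (lookupTests k) (tape A e w P x o) ↔ k = ruleInput N A e w P := by
  have hview := forall_viewTest_iff (P := P) (x := x) (o := o) hN hA he hw k.view
  have hbits := forall_bitTests_iff (w := w) (P := P) (x := x) (o := o) hA he k
  rw [PassesTests] at hbits ⊢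
  rw [lookupTests, List.forall_mem_cons, hbits]
  simp only [testValue, hview]
  obtain ⟨view, addrInstr, slotInstr⟩ := k
  simp only [ruleInput, RuleInput.mk.injEq]

open Classical in
theorem exec_lookupProgram (hN : IsAdmissible N) (hA : A < N) (he : e < N) (hw : w < N)
    (k : RuleInput) (ho : o = (fun _ => none) ∨ o = localRule (ruleInput N A e w P))
    (hs : HasTape N A e w P x o st) :
    HasTape N A e w P x
      (if k = ruleInput N A e w P then localRule (ruleInput N A e w P) else o)
      (exec N (lookupProgram k) st) := by
  have hlength := hN.length_le
  obtain ⟨st', hexec, hs', -, hflag⟩ := exec_reset_tests (by omega) hs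
    (fun i => isTest_of_mem_lookupTests (k := k)) [single (.inl (.emit (localRule k)))]
  rw [passesTests_lookupTests_iff hN hA he hw] at hflag
  rw [lookupProgram, hexec, exec_single_cons, exec]
  split_ifs with h
  · rw [sweep_emit_of_flag_true (hflag.2 h)]
    subst h
    intro a ha
    simp only [hs' a ha, posOf_eq_payloadCode]
    simp only [tape, CellContent.mk.injEq, true_and]
    refine ⟨funext fun d => ?_, funext fun d => ?_⟩ <;>
      cases hd : localRule (ruleInput N A e w P) d <;> rcases ho with rfl | rfl <;> simp [hd]
  · rwa [sweep_emit_of_flag_false (Bool.eq_false_iff.2 (mt hflag.1 h))]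

open Classical in
theorem exec_flatMap_lookupProgram (hN : IsAdmissible N) (hA : A < N) (he : e < N) (hw : w < N)
    (l : List RuleInput) (ho : o = (fun _ => none) ∨ o = localRule (ruleInput N A e w P))
    (hs : HasTape N A e w P x o st) :
    HasTape N A e w P x
      (if ruleInput N A e w P ∈ l then localRule (ruleInput N A e w P) else o)
      (exec N (l.flatMap lookupProgram) st) := by
  induction l generalizing o st with
  | nil => simpa [exec] using hs
  | cons k l ih =>
    rw [List.flatMap_cons, exec_append]
    have htail := ih (by split_ifs <;> simp [ho]) (exec_lookupProgram hN hA he hw k ho hs)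
    convert htail using 1
    grind

theorem exec_mainProgram (hN : IsAdmissible N) (hA : A < N) (he : e < N) (hw : w < N)
    (hs : HasTape N A e w P (tagDigits A e w) (fun _ => none) st) :
    HasTape N A e w P (nextTagDigits N A e w) (localRule (ruleInput N A e w P))
      (exec N mainProgram st) := by
  classical
  have hlength := hN.length_le
  rw [mainProgram, exec_append]
  have := exec_flatMap_lookupProgram hN hA he hw Finset.univ.toList (Or.inl rfl)
    (exec_tagProgram (by omega) hA he hw hs)
  rwa [if_pos (by simp)] at this

end Tape

/-- The block `b` after the first `e` slots. -/
noncomputable def blockAfterSlots (N : ℕ) : ℕ → Block → Block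
  | 0, b => b
  | e + 1, b => blockRun N e N (blockAfterSlots N e b)

theorem program_length : program.length = mainProgram.length + 1 := by simp [program]

theorem blockRun_mainProgram {N i : ℕ} (hN : IsAdmissible N) (hi : i < mainProgram.length)
    {b : Block} {st : MachineState} (hb : BlockEq N b (stateBlock (headPos N 3 0) st)) :
    BlockEq N (blockRun N (2 * i + 4) N (blockRun N (2 * i + 3) N b))
      (stateBlock (headPos N 3 0)
        (sweep N 0 mainProgram[i].2 (sweep N 1 mainProgram[i].1 st))) := by
  have hodd : instrAt N (2 * i + 3) = mainProgram[i].1 := by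
    have := instrAt_odd hN (i := i + 1) (by rw [program_length]; omega)
    rwa [show 2 * (i + 1) + 1 = 2 * i + 3 by ring] at this
  have heven : instrAt N (2 * i + 4) = mainProgram[i].2 := by
    have := instrAt_even hN (i := i + 1) (by rw [program_length]; omega)
    rwa [show 2 * (i + 1) + 2 = 2 * i + 4 by ring] at this
  obtain ⟨⟨hpass, hchk⟩, hpass', hchk'⟩ :=
    isPass_and_ne_chk_of_mem_mainProgram (List.getElem_mem hi)
  rw [← hodd] at hpass hchk
  rw [← heven] at hpass' hchk'
  rw [← headPos_congr_parity (e := 2 * i + 3) (by omega)] at hb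
  have hrun := blockRun_stateBlock hpass' hchk' (blockRun_stateBlock hpass hchk hb)
  rwa [hodd, heven, sweep_congr_parity (e := 2 * i + 3) (p := 1) (by omega),
    sweep_congr_parity (e := 2 * i + 4) (p := 0) (by omega),
    headPos_congr_parity (e := 2 * i + 4 + 1) (p := 3) (by omega)] at hrun

theorem blockAfterSlots_mainProgram {N : ℕ} (hN : IsAdmissible N) {b : Block} {st : MachineState}
    (hb : BlockEq N (checkedBlock N b) (stateBlock (headPos N 3 0) st)) :
    ∀ i ≤ mainProgram.length, BlockEq N (blockAfterSlots N (2 * i + 3) b)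
      (stateBlock (headPos N 3 0) (exec N (mainProgram.take i) st))
  | 0, _ => hb
  | i + 1, hi => by
    have hrun := blockRun_mainProgram hN (Nat.lt_of_succ_le hi)
      (blockAfterSlots_mainProgram hN hb i (by omega))
    rwa [List.take_succ_eq_append_getElem (by omega), exec_append]

theorem blockAfterSlots_of_encodes {N A e w : ℕ} {b : Block} {P : Dir → Option Payload}
    (hN : IsAdmissible N) (h : Encodes N b A e w P) :
    ∃ r, BlockEq N (blockAfterSlots N (2 * program.length + 1) b)
      (stateBlock (headPos N 3 0)
        (r, tape A e w P (nextTagDigits N A e w) (localRule (ruleInput N A e w P)))) := by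
  obtain ⟨r, hr⟩ := h.checkedBlock_eq hN
  have hrun := blockAfterSlots_mainProgram hN hr mainProgram.length le_rfl
  have htape := exec_mainProgram hN h.address_lt h.slot_lt h.head_lt (P := P)
    (st := (r, initialTape A e w P)) fun _ _ => rfl
  rw [List.take_length] at hrun
  rw [program_length, show 2 * (mainProgram.length + 1) + 1 = 2 * mainProgram.length + 3 by ring]
  refine ⟨(exec N mainProgram (r, initialTape A e w P)).1, fun a ha d => ?_⟩
  rw [hrun a ha d]
  simp only [stateBlock, bodyBlock, htape a ha]

/-! ### Dancing -/

theorem slotRule_dance {N a e s : ℕ} (hi : instrAt N e = .inl .dance) (he : e % 2 = 0)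
    (y : Dir → Option Payload) (d : Dir) : slotRule N a e s y d =
      if s % 4 = 0 then
        (if a % 2 = 1 then stay y d else
          if d = .R then (bodyOf (y .C)).map Payload.body else none)
      else if s % 4 = 1 then
        (if a % 2 = 1 ∧ d = .L then
          (bodyOf (y .R)).bind fun g => (bodyOf (y .C)).map fun o => .pair g o else none)
      else if s % 4 = 2 then
        (if a % 2 = 1 then none else
          if d = .C then (pairOf (y .L)).map fun go => .body go.1 else
          if d = .R then (pairOf (y .L)).map fun go => .body go.2 else none)
      else
        (if a % 2 = 1 then
          (if d = .C then (bodyOf (y .R)).map Payload.body else none)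
          else stay y d) := by
  have hdance : slotRule N a e s y d = danceOut (ruleInput N a e (headPos N e s) y).view d := by
    simp only [slotRule, localRule, ruleInput, hi]
  have hphase (i : Fin 4) :
      (ruleInput N a e (headPos N e s) y).view.w.2.2 = i ↔ s % 4 = i.val := by
    have : headPos N e s = s := by simp [headPos, he]
    rw [Fin.ext_iff, this]
    rfl
  have hodd : (ruleInput N a e (headPos N e s) y).view.a.isOdd = true ↔ a % 2 = 1 :=
    posOf_isOdd N a
  simp only [hdance, danceOut, hphase, hodd]
  rfl

/-- The block in phase `i` of a dance of the bodies `x`: in each pair of neighbouring cells the body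
of the left cell visits the right cell, and both bodies visit the left cell together. -/
def danceBlock (x : ℕ → Body) (i : ℕ) : Block := fun a d =>
  if i = 0 then (if d = .C then some (.body (x a)) else none)
  else if i = 1 then
    (if a % 2 = 1 then (if d = .C then some (.body (x a)) else
      if d = .R then some (.body (x (a - 1))) else none) else none)
  else if i = 2 then (if a % 2 = 0 ∧ d = .L then some (.pair (x a) (x (a + 1))) else none)
  else (if a % 2 = 0 then (if d = .C then some (.body (x a)) else none) else
    (if d = .R then some (.body (x a)) else none))

section Dance

variable {N e : ℕ} {x : ℕ → Body}

theorem blockStep_danceBlock (hN : IsAdmissible N) (hi : instrAt N e = .inl .dance)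
    (he : e % 2 = 0) (x : ℕ → Body) (s : ℕ) :
    BlockEq N (blockStep N e s (danceBlock x (s % 4))) (danceBlock x ((s + 1) % 4)) := by
  intro a _ d
  have hdvd := hN.four_dvd
  rw [Nat.add_mod s 1 4, Nat.mod_eq_of_lt (show 1 < 4 by norm_num)]
  obtain ⟨i, hphase⟩ : ∃ i, s % 4 = i := ⟨_, rfl⟩
  have hi4 : i < 4 := by omega
  rw [hphase]
  rcases Nat.mod_two_eq_zero_or_one a with ha2 | ha2
  · have hlast : a + 1 ≠ N := by omega
    have hnext : (a + 1) % 2 = 1 := by omega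
    have hprev : a ≠ 0 → (a - 1) % 2 = 1 := by omega
    interval_cases i <;> cases d <;>
      simp +contextual [blockStep, slotRule_dance hi he, hphase, ha2, hnext, hlast, hprev,
        danceBlock, stay, bodyOf, pairOf]
  · have hpos : a ≠ 0 := by omega
    have hnext : (a + 1) % 2 = 0 := by omega
    have hprev : (a - 1) % 2 = 0 := by omega
    have hcancel : a - 1 + 1 = a := by omega
    interval_cases i <;> cases d <;>
      simp [blockStep, slotRule_dance hi he, hphase, ha2, hpos, hnext, hprev, hcancel, danceBlock,
        stay, bodyOf, pairOf]

theorem blockRun_danceBlock (hN : IsAdmissible N) (hi : instrAt N e = .inl .dance)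
    (he : e % 2 = 0) {b : Block} (hb : BlockEq N b (danceBlock x 0)) :
    ∀ s, BlockEq N (blockRun N e s b) (danceBlock x (s % 4))
  | 0 => hb
  | s + 1 => fun a ha d =>
    (blockStep_congr (blockRun_danceBlock hN hi he hb s) a ha d).trans
      (blockStep_danceBlock hN hi he x s a ha d)

end Dance

/-! ### Whole periods -/

theorem blockAt_payloadRun_mul {N : ℕ} (hN : IsAdmissible N) (c : PayloadConfig) (X : ℤ) :
    ∀ e < N, BlockEq N (blockAt N (payloadRun N (e * N) c) X) (blockAfterSlots N e (blockAt N c X))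
  | 0, _ => fun a _ d => by rw [Nat.zero_mul]; rfl
  | e + 1, he => fun a ha d => by
    rw [Nat.succ_mul, blockAt_payloadRun hN he c X N le_rfl a ha d]
    exact blockRun_congr (blockAt_payloadRun_mul hN c X e (by omega)) N a ha d

theorem blockAfterSlots_of_not_encodes {N : ℕ} (hN : IsAdmissible N) {b : Block}
    (h : ¬ ∃ A e w P, Encodes N b A e w P) :
    ∀ e, BlockEq N (blockAfterSlots N (e + 3) b) fun _ _ => none
  | 0 => checkedBlock_of_not_encodes hN h
  | e + 1 => blockRun_none (blockAfterSlots_of_not_encodes hN h e) N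

theorem payloadRun_of_not_encodes {N : ℕ} (hN : IsAdmissible N) (c : PayloadConfig) (X : ℤ)
    (h : ¬ ∃ A e w P, Encodes N (blockAt N c X) A e w P) {n : ℕ} (hcheck : 3 * N ≤ n)
    (hlaunch : n ≤ (N - 1) * N) :
    BlockEq N (blockAt N (payloadRun N n c) X) fun _ _ => none := by
  have hlength := hN.length_le
  obtain ⟨e, s, hs, rfl⟩ : ∃ e s, s < N ∧ n = e * N + s :=
    ⟨n / N, n % N, Nat.mod_lt _ (by omega), (Nat.div_add_mod' n N).symm⟩
  have he3 : 3 ≤ e := by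
    by_contra hlt
    have : e * N ≤ 2 * N := Nat.mul_le_mul_right N (by omega)
    omega
  have heN : e ≤ N - 1 := by
    by_contra hlt
    have : (N - 1 + 1) * N ≤ e * N := Nat.mul_le_mul_right N (by omega)
    rw [Nat.succ_mul] at this
    omega
  have hslot : BlockEq N (blockAt N (payloadRun N (e * N) c) X) fun _ _ => none := by
    obtain ⟨k, rfl⟩ : ∃ k, e = k + 3 := ⟨e - 3, by omega⟩
    exact fun a ha d => (blockAt_payloadRun_mul hN c X _ (by omega) a ha d).trans
      (blockAfterSlots_of_not_encodes hN h k a ha d)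
  rcases heN.lt_or_eq with he | rfl
  · exact fun a ha d => (blockAt_payloadRun hN (by omega) c X s hs.le a ha d).trans
      (blockRun_none hslot s a ha d)
  · obtain rfl : s = 0 := by omega
    exact hslot

theorem slotRule_idle {N a e s : ℕ} (hi : instrAt N e = .inl .idle) (y : Dir → Option Payload)
    (d : Dir) : slotRule N a e s y d = stay y d := by
  simp only [slotRule, localRule, ruleInput, hi]

/-- The bodies of the cells with contents `v`, the one in cell `q` carrying the register `r`. -/
def bodySeq (v : ℕ → CellContent) (q : ℕ) (r : Register) (a : ℕ) : Body :=
  (v a, if a = q then some r else none)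

theorem stateBlock_eq_danceBlock (q : ℕ) (st : MachineState) :
    stateBlock q st = danceBlock (bodySeq st.2 q st.1) 0 := by
  funext a d
  simp [stateBlock, bodyBlock, danceBlock, bodySeq]

theorem blockAfterSlots_idle {N : ℕ} (hN : IsAdmissible N) {b : Block} {st : MachineState}
    (hb : BlockEq N (blockAfterSlots N (2 * program.length + 1) b)
      (stateBlock (headPos N 3 0) st)) :
    ∀ i, 2 * program.length + 1 + i < N →
      BlockEq N (blockAfterSlots N (2 * program.length + 1 + i) b) (stateBlock (headPos N 3 0) st)
  | 0, _ => hb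
  | i + 1, hi => by
    have ih := blockAfterSlots_idle hN hb i (by omega)
    rcases slot_cases hN (show 2 * program.length + 1 + i < N by omega) with
      h | h | ⟨-, -, -, hidle⟩ | ⟨-, -, heven, hdance⟩ | h
    · omega
    · omega
    · have hstay (s : ℕ) : BlockEq N (blockRun N (2 * program.length + 1 + i) s
          (blockAfterSlots N (2 * program.length + 1 + i) b)) (stateBlock (headPos N 3 0) st) := by
        induction s with
        | zero => exact ih
        | succ s ihs => exact blockStep_of_stay (fun _ _ y d => slotRule_idle hidle y d) ihs
      exact hstay N
    · rw [stateBlock_eq_danceBlock] at ih ⊢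
      have hrun := blockRun_danceBlock hN hdance heven ih N
      rwa [Nat.mod_eq_zero_of_dvd hN.four_dvd] at hrun
    · omega

theorem blockRule_launch {N s : ℕ} (hN : IsAdmissible N) (hs : s < N) (a : ℕ)
    (y : Dir → Option Payload) (d : Dir) :
    blockRule N a ((N - 1) * N + s) y d =
      if s = 0 then (bodyOf (y .C)).bind fun b => launchLetter b.1 d
      else (letterOf (y d)).map Payload.letter := by
  have := hN.length_le
  have hdvd := hN.four_dvd
  have hlast : instrAt N (N - 1) = .inl .launch := instrAt_last (by omega) (by omega)
  have hw : (posOf N (headPos N (N - 1) s)).isLast = true ↔ s = 0 := by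
    rw [posOf_isLast, headPos, if_pos (by omega)]
    omega
  simp only [blockRule_eq_slotRule hs, slotRule, localRule, ruleInput, hlast, launchOut, hw]

theorem payloadRun_launch {N : ℕ} (hN : IsAdmissible N) (c : PayloadConfig) :
    ∀ s < N, ∀ j d, payloadRun N ((N - 1) * N + (s + 1)) c j d =
      (bodyOf (payloadRun N ((N - 1) * N) c (j - (s + 1) * d.offset) .C)).bind
        fun b => launchLetter b.1 d
  | 0, hs, j, d => by
    have hrule := blockRule_launch hN hs ((j - d.offset) % N).toNat
      (payloadRun N ((N - 1) * N) c (j - d.offset)) d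
    rw [if_pos rfl, add_zero] at hrule
    rw [zero_add, payloadRun, payloadStep, hrule]
    simp
  | s + 1, hs, j, d => by
    rw [← add_assoc, payloadRun, payloadStep, blockRule_launch hN hs, if_neg (by omega),
      payloadRun_launch hN c s (by omega), show j - d.offset - ((s : ℤ) + 1) * d.offset =
        j - (((s + 1 : ℕ) : ℤ) + 1) * d.offset by push_cast; ring]
    cases bodyOf (payloadRun N ((N - 1) * N) c (j - (((s + 1 : ℕ) : ℤ) + 1) * d.offset) .C) with
    | none => rfl
    | some b =>
      simp only [Option.bind_some, launchLetter]
      split_ifs <;> rfl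

theorem payloadRun_period {N : ℕ} (hN : IsAdmissible N) (c : PayloadConfig) (X : ℤ) (a : ℕ)
    (d : Dir) : payloadRun N (N * N) c (N * X + a) d =
      (bodyOf (blockAt N (payloadRun N ((N - 1) * N) c) (X - d.offset) a .C)).bind
        fun b => launchLetter b.1 d := by
  have hlength := hN.length_le
  obtain ⟨n, rfl⟩ : ∃ n, N = n + 1 := ⟨N - 1, by omega⟩
  have hlaunch := payloadRun_launch hN c n (by omega) (((n + 1 : ℕ) : ℤ) * X + a) d
  rw [Nat.add_sub_cancel] at hlaunch ⊢
  rw [blockAt, show (n + 1) * (n + 1) = n * (n + 1) + (n + 1) by ring, hlaunch,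
    show ((n + 1 : ℕ) : ℤ) * X + a - ((n : ℤ) + 1) * d.offset =
      ((n + 1 : ℕ) : ℤ) * (X - d.offset) + a by push_cast; ring]

theorem payloadRun_period_of_encodes {N A e w : ℕ} {P : Dir → Option Payload}
    (hN : IsAdmissible N) (c : PayloadConfig) (X : ℤ) (d : Dir)
    (h : Encodes N (blockAt N c (X - d.offset)) A e w P) {a : ℕ} (ha : a < N) :
    payloadRun N (N * N) c (N * X + a) d = (localRule (ruleInput N A e w P) d).map fun y =>
      .letter (encodeLetter (nextTagDigits N A e w (.A d)) (nextTagDigits N A e w .E)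
        (nextTagDigits N A e w .W) y a) := by
  have hlength := hN.length_le
  obtain ⟨r, hr⟩ := blockAfterSlots_of_encodes hN h
  have hrun := blockAfterSlots_idle hN hr (N - 1 - (2 * program.length + 1)) (by omega)
  rw [show 2 * program.length + 1 + (N - 1 - (2 * program.length + 1)) = N - 1 by omega] at hrun
  rw [payloadRun_period hN, blockAt_payloadRun_mul hN c _ (N - 1) (by omega) a ha, hrun a ha]
  simp only [stateBlock, bodyBlock, if_true, bodyOf, launchLetter, tape, encodeLetter]
  cases hd : localRule (ruleInput N A e w P) d <;> simp [hd]

theorem payloadRun_period_of_not_encodes {N : ℕ} (hN : IsAdmissible N) (c : PayloadConfig) (X : ℤ)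
    (d : Dir) (h : ¬ ∃ A e w P, Encodes N (blockAt N c (X - d.offset)) A e w P) {a : ℕ}
    (ha : a < N) : payloadRun N (N * N) c (N * X + a) d = none := by
  have hlength := hN.length_le
  rw [payloadRun_period hN,
    payloadRun_of_not_encodes hN c _ h (Nat.mul_le_mul_right N (by omega)) le_rfl a ha]
  rfl

/-! ### Periods with losses -/

/-- A run of one period in which payloads may get lost at every step. -/
def IsLossyPeriod (N : ℕ) (c : ℕ → PayloadConfig) : Prop :=
  ∀ n < N * N, IsSubconfig (c (n + 1)) (payloadStep N n (c n))

theorem IsSubconfig.ne_none {c c' : PayloadConfig} (h : IsSubconfig c c') {j : ℤ} {d : Dir}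
    (hv : c j d ≠ none) : c' j d ≠ none := by
  obtain ⟨v, hv⟩ := Option.ne_none_iff_exists'.1 hv
  simp [h j d v hv]

namespace IsLossyPeriod

variable {N : ℕ} {c : ℕ → PayloadConfig}

theorem isSubconfig_payloadRun (hN : IsAdmissible N) (h : IsLossyPeriod N c) :
    ∀ n ≤ N * N, IsSubconfig (c n) (payloadRun N n (c 0))
  | 0, _ => fun _ _ _ hv => hv
  | n + 1, hn => by
    have ih := isSubconfig_payloadRun hN h n (by omega)
    intro j d v hv
    have hstep := h n (by omega) j d v hv
    rcases Nat.eq_zero_or_pos n with rfl | hpos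
    · exact hstep
    · exact payloadStep_mono hN (by omega) (by omega) ih j d v hstep

theorem origin_ne_none (hN : IsAdmissible N) (h : IsLossyPeriod N c) {d : Dir} :
    ∀ s < N, ∀ j, c ((N - 1) * N + (s + 1)) j d ≠ none →
      c ((N - 1) * N) (j - (s + 1) * d.offset) .C ≠ none
  | s, hs, j, hv => by
    have hperiod : (N - 1) * N + s < N * N := by
      have : (N - 1) * N + N = N * N := by rw [← Nat.succ_mul, Nat.succ_eq_add_one,
        Nat.sub_add_cancel (by omega)]
      omega
    have hstep := (h _ hperiod).ne_none hv
    rw [payloadStep, blockRule_launch hN hs] at hstep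
    cases s with
    | zero =>
      intro hnone
      simp_all [bodyOf]
    | succ s =>
      rw [if_neg (by omega)] at hstep
      have hprev : c ((N - 1) * N + (s + 1)) (j - d.offset) d ≠ none := fun hnone => by
        simp [hnone, letterOf] at hstep
      convert origin_ne_none hN h s (by omega) _ hprev using 2
      push_cast
      ring

theorem launch_ne_none (hN : IsAdmissible N) (h : IsLossyPeriod N c) {j : ℤ} {d : Dir}
    (hv : c (N * N) j d ≠ none) : ∀ k < N, c (N * N - k) (j - k * d.offset) d ≠ none
  | 0, _ => by simpa using hv
  | k + 1, hk => by
    have hlast : N * N = (N - 1) * N + N := by rw [← Nat.succ_mul, Nat.succ_eq_add_one,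
      Nat.sub_add_cancel (by omega)]
    have ih := launch_ne_none hN h hv k (by omega)
    rw [show N * N - k = (N - 1) * N + (N - k - 1) + 1 by omega] at ih
    have hstep := (h _ (by omega)).ne_none ih
    rw [payloadStep, blockRule_launch hN (by omega), if_neg (by omega)] at hstep
    rw [show N * N - (k + 1) = (N - 1) * N + (N - k - 1) by omega,
      show j - ((k + 1 : ℕ) : ℤ) * d.offset = j - k * d.offset - d.offset by push_cast; ring]
    intro hnone
    simp [hnone, letterOf] at hstep

end IsLossyPeriod

/-! ### Places of the dance -/

/-- In phase `i` of a dance the cell with address `a` holds a payload in direction `d`. -/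
def IsDancePlace (i a : ℕ) (d : Dir) : Prop :=
  if i = 0 then d = .C
  else if i = 1 then a % 2 = 1 ∧ d ≠ .L
  else if i = 2 then a % 2 = 0 ∧ d = .L
  else d = if a % 2 = 1 then .R else .C

/-- The dance phase before step `n` of a period; outside of the dance slots all payloads rest, as in
phase `0`. -/
noncomputable def dancePhase (N n : ℕ) : ℕ :=
  open Classical in
  if instrAt N (n / N) = .inl .dance then n % N % 4 else 0

theorem dancePhase_mul_add {N e s : ℕ} (hs : s < N) : dancePhase N (e * N + s) =
    open Classical in if instrAt N e = .inl .dance then s % 4 else 0 := by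
  rw [dancePhase, div_slot hs, mod_slot hs]

theorem dancePhase_mul_add_succ {N e s : ℕ} (hN : 4 ∣ N) (hs : s < N) :
    dancePhase N (e * N + s + 1) =
      open Classical in if instrAt N e = .inl .dance then (s + 1) % 4 else 0 := by
  rcases Nat.lt_or_ge (s + 1) N with hlt | hge
  · exact dancePhase_mul_add hlt
  · obtain rfl : N = s + 1 := by omega
    rw [show e * (s + 1) + s + 1 = (e + 1) * (s + 1) + 0 by ring,
      dancePhase_mul_add (Nat.succ_pos s), Nat.mod_eq_zero_of_dvd hN]
    simp

/-- All places of phase `i` of a dance are occupied in the block `b`. -/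
def FillsDance (N i : ℕ) (b : Block) : Prop := ∀ a < N, ∀ d, IsDancePlace i a d → b a d ≠ none

theorem exists_isDancePlace_near {N a : ℕ} (hN : 2 ∣ N) (ha : a < N) (i : ℕ) :
    ∃ a' < N, ∃ d, IsDancePlace i a' d ∧ |(a' : ℤ) - d.offset - a| ≤ 1 := by
  by_cases h0 : i = 0
  · exact ⟨a, ha, .C, by simp [IsDancePlace, h0], by simp [Dir.offset]⟩
  rcases Nat.mod_two_eq_zero_or_one a with ha2 | ha2
  · by_cases h1 : i = 1
    · exact ⟨a + 1, by omega, .R, by simp [IsDancePlace, h1]; omega, by simp [Dir.offset]⟩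
    by_cases h2 : i = 2
    · exact ⟨a, ha, .L, by simp [IsDancePlace, h2, ha2], by simp [Dir.offset]⟩
    · exact ⟨a, ha, .C, by simp [IsDancePlace, h0, h1, h2, ha2], by simp [Dir.offset]⟩
  · by_cases h1 : i = 1
    · exact ⟨a, ha, .C, by simp [IsDancePlace, h1, ha2], by simp [Dir.offset]⟩
    by_cases h2 : i = 2
    · exact ⟨a - 1, by omega, .L, by simp [IsDancePlace, h2]; omega, by
        rw [Nat.cast_sub (by omega)]; simp [Dir.offset]⟩
    · exact ⟨a, ha, .R, by simp [IsDancePlace, h0, h1, h2, ha2], by simp [Dir.offset]⟩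

theorem stay_ne_none {y : Dir → Option Payload} {d : Dir} (h : stay y d ≠ none) :
    y .C ≠ none := by
  intro hnone
  simp [stay, hnone, bodyOf] at h

theorem slotRule_C_ne_none {N a e s : ℕ} (hN : IsAdmissible N) (he : e + 1 < N) (hs : s < N)
    (hstart : ¬ (e = 0 ∧ s = 0)) (hdance : instrAt N e ≠ .inl .dance) {y : Dir → Option Payload}
    (h : slotRule N a e s y .C ≠ none) : y .C ≠ none := by
  rcases slot_cases hN (show e < N by omega) with rfl | ⟨_, _, hp⟩ | ⟨_, _, _, hi⟩ | ⟨_, _, _, hi⟩ |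
    ⟨hlast, _⟩
  · obtain ⟨s, rfl⟩ := Nat.exists_eq_succ_of_ne_zero fun h0 => hstart ⟨rfl, h0⟩
    rw [slotRule_start_succ] at h
    exact stay_ne_none h
  · by_cases hhead : a = headPos N e s
    · rw [slotRule_headPos hs hp hhead, if_pos rfl] at h
      intro hnone
      simp [passResultAt, hnone, bodyOf] at h
    · rw [slotRule_of_ne_headPos hp hhead] at h
      exact stay_ne_none h
  · rw [slotRule_idle hi] at h
    exact stay_ne_none h
  · exact absurd hi hdance
  · omega

theorem even_of_instrAt_eq_dance {N e : ℕ} (hN : IsAdmissible N) (he : e < N)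
    (hi : instrAt N e = .inl .dance) : e % 2 = 0 := by
  rcases slot_cases hN he with rfl | ⟨_, _, hp⟩ | ⟨_, _, _, h⟩ | ⟨_, _, h, _⟩ | ⟨_, h⟩
  · rfl
  · exact absurd hi hp.2.1
  · simp [hi] at h
  · exact h
  · simp [hi] at h

theorem FillsDance.of_dance_step {N e s : ℕ} (hN : IsAdmissible N)
    (hi : instrAt N e = .inl .dance) (he : e % 2 = 0) {b : Block}
    (h : FillsDance N ((s + 1) % 4) (blockStep N e s b)) : FillsDance N (s % 4) b := by
  have hdvd := hN.four_dvd
  intro a ha d hd hnone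
  rw [Nat.add_mod s 1 4, Nat.mod_eq_of_lt (show 1 < 4 by norm_num)] at h
  obtain ⟨i, hphase⟩ : ∃ i, s % 4 = i := ⟨_, rfl⟩
  have hi4 : i < 4 := by omega
  rw [hphase] at h hd
  have hhere := h a ha .C
  interval_cases i
  · obtain rfl : d = .C := hd
    rcases Nat.mod_two_eq_zero_or_one a with ha2 | ha2
    · have hnext : (a + 1) % 2 = 1 := by omega
      refine h (a + 1) (by omega) .R (by simp [IsDancePlace, hnext]) ?_
      simp [blockStep, slotRule_dance hi he, hphase, ha2, hnone, bodyOf]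
    · simp [IsDancePlace, ha2, blockStep, slotRule_dance hi he, hphase, hnone, stay, bodyOf]
        at hhere
  · obtain ⟨ha2, hd⟩ : a % 2 = 1 ∧ d ≠ .L := hd
    have hprev : (a - 1) % 2 = 0 := by omega
    refine h (a - 1) (by omega) .L (by simp [IsDancePlace, hprev]) ?_
    rw [blockStep, if_neg (by omega), Nat.sub_add_cancel (by omega)]
    cases d <;> simp_all [slotRule_dance hi he, bodyOf]
  · obtain ⟨ha2, rfl⟩ : a % 2 = 0 ∧ d = .L := hd
    simp [IsDancePlace, ha2, blockStep, slotRule_dance hi he, hphase, hnone, pairOf] at hhere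
  · obtain rfl : d = if a % 2 = 1 then .R else .C := hd
    rcases Nat.mod_two_eq_zero_or_one a with ha2 | ha2 <;>
      simp_all [IsDancePlace, blockStep, slotRule_dance hi he, stay, bodyOf]

namespace IsLossyPeriod

variable {N : ℕ} {c : ℕ → PayloadConfig}

theorem fillsDance_of_succ (hN : IsAdmissible N) (h : IsLossyPeriod N c) {n : ℕ} (hpos : 0 < n)
    (hn : n < (N - 1) * N) {X : ℤ}
    (hfill : FillsDance N (dancePhase N (n + 1)) (blockAt N (c (n + 1)) X)) :
    FillsDance N (dancePhase N n) (blockAt N (c n) X) := by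
  obtain ⟨e, s, hs, rfl⟩ : ∃ e s, s < N ∧ n = e * N + s :=
    ⟨n / N, n % N, Nat.mod_lt _ (Nat.pos_of_ne_zero fun h0 => by simp [h0] at hn),
      (Nat.div_add_mod' n N).symm⟩
  have he : e + 1 < N := by
    by_contra hlt
    have : (N - 1) * N ≤ e * N := Nat.mul_le_mul_right N (by omega)
    omega
  have hperiod : e * N + s < N * N := hn.trans_le (Nat.mul_le_mul_right N (by omega))
  have hstep : ∀ a < N, ∀ d, blockAt N (c (e * N + s + 1)) X a d ≠ none →
      blockStep N e s (blockAt N (c (e * N + s)) X) a d ≠ none := fun a ha d hv => by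
    rw [← blockAt_payloadStep hN he hs _ X a ha d]
    exact (h _ hperiod).ne_none hv
  by_cases hdance : instrAt N e = .inl .dance
  · have heven : e % 2 = 0 := even_of_instrAt_eq_dance hN (by omega) hdance
    rw [dancePhase_mul_add hs, if_pos hdance]
    rw [dancePhase_mul_add_succ hN.four_dvd hs, if_pos hdance] at hfill
    exact .of_dance_step hN hdance heven fun a ha d hd => hstep a ha d (hfill a ha d hd)
  · rw [dancePhase_mul_add hs, if_neg hdance]
    rw [dancePhase_mul_add_succ hN.four_dvd hs, if_neg hdance] at hfill
    rintro a ha d (rfl : d = .C)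
    exact slotRule_C_ne_none hN he hs (by rintro ⟨rfl, rfl⟩; simp at hpos) hdance
      (hstep a ha .C (hfill a ha .C rfl))

theorem fillsDance (hN : IsAdmissible N) (h : IsLossyPeriod N c) {X : ℤ}
    (hlaunch : ∀ a < N, blockAt N (c ((N - 1) * N)) X a .C ≠ none) {n : ℕ} (hpos : 0 < n)
    (hn : n ≤ (N - 1) * N) : FillsDance N (dancePhase N n) (blockAt N (c n) X) := by
  refine Nat.decreasingInduction' (P := fun n => FillsDance N (dancePhase N n) (blockAt N (c n) X))
    (fun k hk hnk ih => h.fillsDance_of_succ hN (by omega) hk ih) hn ?_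
  rintro a ha d hd
  have hphase : dancePhase N ((N - 1) * N) = 0 := by simp [dancePhase]
  rw [hphase] at hd
  obtain rfl : d = .C := hd
  exact hlaunch a ha

theorem exists_ne_none_near (hN : IsAdmissible N) (h : IsLossyPeriod N c) {X : ℤ}
    (hlaunch : ∀ a < N, blockAt N (c ((N - 1) * N)) X a .C ≠ none) {n : ℕ} (hpos : 0 < n)
    (hn : n ≤ (N - 1) * N) {a : ℕ} (ha : a < N) :
    ∃ (j : ℤ) (d : Dir), |j - (N * X + a)| ≤ 1 ∧ c n (j + d.offset) d ≠ none := by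
  obtain ⟨a', ha', d, hd, hnear⟩ :=
    exists_isDancePlace_near ((by norm_num : 2 ∣ 4).trans hN.four_dvd) ha (dancePhase N n)
  refine ⟨N * X + a' - d.offset, d, by rwa [show (N * X + a' - d.offset - (N * X + a) : ℤ) =
    a' - d.offset - a by ring], ?_⟩
  rw [sub_add_cancel]
  exact h.fillsDance hN hlaunch hpos hn a' ha' d hd

end IsLossyPeriod

/-! ### Vacant cells during a period -/

/-- The block number `X` of the configuration `c` encodes a view of a simulated cell. -/
def EncodesAt (N : ℕ) (c : PayloadConfig) (X : ℤ) : Prop :=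
  ∃ A e w P, Encodes N (blockAt N c X) A e w P

theorem blockAfterSlots_of_empty {N : ℕ} {b : Block} (h : BlockEq N b fun _ _ => none) :
    ∀ e, BlockEq N (blockAfterSlots N e b) fun _ _ => none
  | 0 => h
  | e + 1 => blockRun_none (blockAfterSlots_of_empty h e) N

theorem payloadRun_of_empty {N : ℕ} (hN : IsAdmissible N) (c : PayloadConfig) (X : ℤ)
    (h : BlockEq N (blockAt N c X) fun _ _ => none) {n : ℕ} (hn : n < (N - 1) * N) :
    BlockEq N (blockAt N (payloadRun N n c) X) fun _ _ => none := by
  have hpos : 0 < N := Nat.pos_of_ne_zero fun h0 => by simp [h0] at hn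
  have he : n / N < N - 1 := Nat.div_lt_of_lt_mul (by rwa [mul_comm])
  have hslot : BlockEq N (blockAt N (payloadRun N (n / N * N) c) X) fun _ _ => none :=
    fun a ha d => (blockAt_payloadRun_mul hN c X _ (by omega) a ha d).trans
      (blockAfterSlots_of_empty h _ a ha d)
  rw [← Nat.div_add_mod' n N]
  exact fun a ha d => (blockAt_payloadRun hN (by omega) c X _ (Nat.mod_lt n hpos).le a ha d).trans
    (blockRun_none hslot _ a ha d)

theorem blockStep_dance_vacant {N e s a : ℕ} (hi : instrAt N e = .inl .dance) (he : e % 2 = 0)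
    (hs : s % 4 = a % 2) (b : Block) (d : Dir) : blockStep N e s b a d = none := by
  rcases Nat.mod_two_eq_zero_or_one a with ha | ha
  · have hprev : a ≠ 0 → (a - 1) % 2 = 1 := by omega
    have hnext : (a + 1) % 2 = 1 := by omega
    cases d <;> simp +contextual [blockStep, slotRule_dance hi he, hs, ha, hnext, hprev, stay]
  · have hnext : (a + 1) % 2 = 0 := by omega
    cases d <;> simp [blockStep, slotRule_dance hi he, hs, ha, hnext]

/-- Times at which the cells with address `a` are vacant, when the slots `e, e + 2, …, e + 198` are
dance slots: one in every four steps of each of these slots. -/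
def vacantTimes (N e a : ℕ) : Finset ℕ :=
  (Finset.range 100 ×ˢ Finset.range (N / 4)).image fun ik =>
    (e + 2 * ik.1) * N + (4 * ik.2 + a % 2) + 1

theorem mem_vacantTimes {N e a n : ℕ} : n ∈ vacantTimes N e a ↔ ∃ i < 100, ∃ k < N / 4,
    n = (e + 2 * i) * N + (4 * k + a % 2) + 1 := by
  simp only [vacantTimes, Finset.mem_image, Finset.mem_product, Finset.mem_range, Prod.exists,
    and_assoc, exists_and_left, eq_comm]

theorem card_vacantTimes {N : ℕ} (hN : 4 ∣ N) (e a : ℕ) : (vacantTimes N e a).card = 25 * N := by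
  rw [vacantTimes, Finset.card_image_of_injOn]
  · simp only [Finset.card_product, Finset.card_range]
    omega
  · simp only [Set.InjOn, Finset.coe_product, Set.mem_prod, Finset.mem_coe, Finset.mem_range,
      Prod.forall]
    rintro i k ⟨-, hk⟩ i' k' ⟨-, hk'⟩ heq
    have hdiv := congrArg (· / N) (Nat.succ_injective heq)
    simp only [div_slot (show 4 * k + a % 2 < N by omega),
      div_slot (show 4 * k' + a % 2 < N by omega)] at hdiv
    obtain rfl : i = i' := by omega
    obtain rfl : k = k' := by omega
    rfl

-- Otherwise the elaborator unfolds membership down to the list `List.range 100`.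
attribute [irreducible] vacantTimes

theorem vacantTimes_subset {N : ℕ} (hN : IsAdmissible N) (a : ℕ) :
    vacantTimes N (2 * program.length + 2) a ⊆ Finset.Ico (3 * N) ((N - 1) * N + 1) := by
  have hdvd := hN.four_dvd
  have hlength := hN.length_le
  have hprogram := program_length_pos
  intro n hn
  obtain ⟨i, hi, k, hk, rfl⟩ := mem_vacantTimes.1 hn
  have hlower : 3 * N ≤ (2 * program.length + 2 + 2 * i) * N := Nat.mul_le_mul_right N (by omega)
  have hupper : (2 * program.length + 2 + 2 * i + 1) * N ≤ (N - 1) * N :=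
    Nat.mul_le_mul_right N (by omega)
  rw [Nat.succ_mul] at hupper
  rw [Finset.mem_Ico]
  omega

theorem sum_iverson_le {s : Finset ℕ} {k : ℕ} (hcard : s.card ≤ k) {P : ℕ → Prop} {R : Prop}
    (h : ∀ n ∈ s, P n → R) : ∑ n ∈ s, iverson (P n) ≤ k * iverson R := by
  by_cases hR : R
  · rw [iverson, if_pos hR, mul_one]
    calc ∑ n ∈ s, iverson (P n) ≤ s.card • 1 :=
          Finset.sum_le_card_nsmul _ _ _ fun n _ => iverson_le_one _
      _ ≤ k := by simpa using hcard
  · exact (Finset.sum_eq_zero fun n hn => if_neg (mt (h n hn) hR)).trans_le (Nat.zero_le _)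

namespace IsLossyPeriod

variable {N : ℕ} {c : ℕ → PayloadConfig}

theorem eq_none_of_mem_vacantTimes (hN : IsAdmissible N) (h : IsLossyPeriod N c) {a : ℕ}
    (ha : a < N) {n : ℕ} (hn : n ∈ vacantTimes N (2 * program.length + 2) a) (X : ℤ) (d : Dir) :
    c n (N * X + a) d = none := by
  have hdvd := hN.four_dvd
  have hlength := hN.length_le
  obtain ⟨i, hi, k, hk, rfl⟩ := mem_vacantTimes.1 hn
  have hperiod : (2 * program.length + 2 + 2 * i + 1) * N ≤ N * N :=
    Nat.mul_le_mul_right N (by omega)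
  rw [Nat.succ_mul] at hperiod
  by_contra hv
  have hstep := (h _ (by omega)).ne_none hv
  exact hstep ((blockAt_payloadStep hN (by omega) (by omega) _ X a ha d).trans
    (blockStep_dance_vacant (instrAt_dance (by omega) (by omega) (by omega)) (by omega)
      (by omega) _ d))

theorem encodesAt_of_ne_none (hN : IsAdmissible N) (h : IsLossyPeriod N c) {X : ℤ} {a : ℕ}
    (ha : a < N) {n : ℕ} (hcheck : 3 * N ≤ n) (hlaunch : n ≤ (N - 1) * N) {d : Dir}
    (hv : c n (N * X + a) d ≠ none) : EncodesAt N (c 0) X := by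
  by_contra hX
  have : (N - 1) * N ≤ N * N := Nat.mul_le_mul_right N (by omega)
  exact (h.isSubconfig_payloadRun hN n (by omega)).ne_none hv
    (payloadRun_of_not_encodes hN _ X hX hcheck hlaunch a ha d)

theorem exists_ne_none_zero (hN : IsAdmissible N) (h : IsLossyPeriod N c) {X : ℤ} {a : ℕ}
    (ha : a < N) {n : ℕ} (hlaunch : n < (N - 1) * N) {d : Dir}
    (hv : c n (N * X + a) d ≠ none) : ∃ a < N, ∃ d, c 0 (N * X + a) d ≠ none := by
  by_contra! hempty
  have : (N - 1) * N ≤ N * N := Nat.mul_le_mul_right N (by omega)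
  exact (h.isSubconfig_payloadRun hN n (by omega)).ne_none hv
    (payloadRun_of_empty hN _ X hempty hlaunch a ha d)

theorem exists_encodesAt_of_launch (hN : IsAdmissible N) (h : IsLossyPeriod N c) {X : ℤ} {a : ℕ}
    (ha : a < N) {s : ℕ} (hs : s < N) {d : Dir}
    (hv : c ((N - 1) * N + (s + 1)) (N * X + a) d ≠ none) :
    ∃ d : Dir, EncodesAt N (c 0) (X + d.offset) := by
  have hlength := hN.length_le
  have horigin := h.origin_ne_none hN s hs _ hv
  have hblock (X' a' : ℤ) (hpos : 0 ≤ a') (hlt : a' < N)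
      (heq : (N : ℤ) * X + a - (s + 1) * d.offset = N * X' + a') : EncodesAt N (c 0) X' := by
    lift a' to ℕ using hpos
    rw [heq] at horigin
    exact h.encodesAt_of_ne_none hN (by exact_mod_cast hlt)
      (Nat.mul_le_mul_right N (by omega)) le_rfl horigin
  cases d with
  | C => exact ⟨.C, hblock _ a (by omega) (by omega) (by simp [Dir.offset])⟩
  | R =>
    by_cases hinside : s + 1 ≤ a
    · exact ⟨.C, hblock _ (a - (s + 1)) (by omega) (by omega) (by simp [Dir.offset]; ring)⟩
    · exact ⟨.L, hblock _ (N + a - (s + 1)) (by omega) (by omega) (by simp [Dir.offset]; ring)⟩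
  | L =>
    by_cases hinside : a + (s + 1) < N
    · exact ⟨.C, hblock _ (a + (s + 1)) (by omega) (by omega) (by simp [Dir.offset]; ring)⟩
    · exact ⟨.R, hblock _ (a + (s + 1) - N) (by omega) (by omega) (by simp [Dir.offset]; ring)⟩

theorem sum_occupied_le_of_encodesAt (hN : IsAdmissible N) (h : IsLossyPeriod N c) (X : ℤ) {a : ℕ}
    (ha : a < N) : ∑ n ∈ Finset.Ico (3 * N) ((N - 1) * N + 1),
        iverson (∃ d, c n (N * X + a) d ≠ none) ≤
      (N * N - 25 * N) * iverson (EncodesAt N (c 0) X) := by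
  have hlength := hN.length_le
  have hperiod : (N - 1) * N + N = N * N := by
    rw [← Nat.succ_mul, Nat.succ_eq_add_one, Nat.sub_add_cancel (by omega)]
  have hvacant : ∀ n ∈ vacantTimes N (2 * program.length + 2) a, iverson (∃ d, c n
      (N * X + a) d ≠ none) = 0 :=
    fun n hn => if_neg fun ⟨d, hv⟩ => hv (h.eq_none_of_mem_vacantTimes hN ha hn X d)
  rw [← Finset.sum_sdiff (vacantTimes_subset hN a), Finset.sum_eq_zero hvacant, add_zero]
  refine sum_iverson_le ?_ fun n hn ⟨d, hv⟩ => ?_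
  · rw [Finset.card_sdiff_of_subset (vacantTimes_subset hN a), card_vacantTimes hN.four_dvd,
      Nat.card_Ico]
    omega
  · have hIco := Finset.mem_Ico.1 (Finset.mem_sdiff.1 hn).1
    exact h.encodesAt_of_ne_none hN ha hIco.1 (by omega) hv

theorem sum_occupied_le (hN : IsAdmissible N) (h : IsLossyPeriod N c) (X : ℤ) {a : ℕ} (ha : a < N) :
    ∑ n ∈ Finset.range (N * N), iverson (∃ d, c n (N * X + a) d ≠ none) ≤
      (N * N - 25 * N) * iverson (EncodesAt N (c 0) X) +
        (3 * N * iverson (∃ a < N, ∃ d, c 0 (N * X + a) d ≠ none) +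
          N * iverson (∃ d : Dir, EncodesAt N (c 0) (X + d.offset))) := by
  have hlength := hN.length_le
  have hperiod : (N - 1) * N + N = N * N := by
    rw [← Nat.succ_mul, Nat.succ_eq_add_one, Nat.sub_add_cancel (by omega)]
  have hcheck : 3 * N < (N - 1) * N := Nat.mul_lt_mul_of_pos_right (by omega) (by omega)
  have hempty : ∑ n ∈ Finset.range (3 * N), iverson (∃ d, c n (N * X + a) d ≠ none) ≤
      3 * N * iverson (∃ a < N, ∃ d, c 0 (N * X + a) d ≠ none) :=
    sum_iverson_le (by simp) fun n hn ⟨d, hv⟩ =>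
      h.exists_ne_none_zero hN ha ((Finset.mem_range.1 hn).trans hcheck) hv
  have hlaunch : ∑ n ∈ Finset.Ico ((N - 1) * N + 1) (N * N),
      iverson (∃ d, c n (N * X + a) d ≠ none) ≤
        N * iverson (∃ d : Dir, EncodesAt N (c 0) (X + d.offset)) := by
    refine sum_iverson_le (by rw [Nat.card_Ico]; omega) fun n hn ⟨d, hv⟩ => ?_
    rw [Finset.mem_Ico] at hn
    obtain ⟨s, rfl⟩ : ∃ s, n = (N - 1) * N + (s + 1) := ⟨n - (N - 1) * N - 1, by omega⟩
    exact h.exists_encodesAt_of_launch hN ha (by omega) hv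
  have hmiddle := h.sum_occupied_le_of_encodesAt hN X ha
  rw [Finset.range_eq_Ico] at hempty ⊢
  rw [← Finset.sum_Ico_consecutive _ (Nat.zero_le (3 * N)) (by omega : 3 * N ≤ N * N),
    ← Finset.sum_Ico_consecutive _ (by omega : 3 * N ≤ (N - 1) * N + 1) (by omega)]
  omega

end IsLossyPeriod

/-! ### The self-simulating machine -/

theorem encodeLetter_inj {N : ℕ} (hN : IsAdmissible N) {A e w A' e' w' : ℕ} {y y' : Payload}
    (hA : A < N) (he : e < N) (hw : w < N)
    (h : ∀ a < N, encodeLetter A e w y a = encodeLetter A' e' w' y' a) :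
    A = A' ∧ e = e' ∧ w = w' ∧ y = y' := by
  have hcode := h _ ((payloadCode_lt y).trans hN.payloadCount_lt)
  have hA := h A hA
  have he := h e he
  have hw := h w hw
  simp only [encodeLetter, Letter.mk.injEq, decide_eq_decide] at hA he hw hcode
  exact ⟨hA.1.1 trivial, he.2.1.1 trivial, hw.2.2.1.1 trivial,
    payloadCode_injective (hcode.2.2.2.1 trivial)⟩

theorem Encodes.eq_of_payload {N : ℕ} (hN : IsAdmissible N) {b : Block} {A e w A' e' w' : ℕ}
    {P P' : Dir → Option Payload} (h : Encodes N b A e w P) (h' : Encodes N b A' e' w' P')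
    {d : Dir} {y : Payload} (hy : P d = some y) :
    P' d = some y ∧ A = A' ∧ e = e' ∧ w = w' := by
  cases hy' : P' d with
  | none =>
    have hcell := h.eq_letter A h.address_lt d
    simp [h'.eq_letter A h.address_lt d, hy, hy'] at hcell
  | some y' =>
    obtain ⟨hA, he, hw, rfl⟩ := encodeLetter_inj hN h.address_lt h.slot_lt h.head_lt
      (y := y) (y' := y') (A' := A') (e' := e') (w' := w') fun a ha => by
        have hcell := h.eq_letter a ha d
        rw [h'.eq_letter a ha d, hy, hy'] at hcell
        simpa using hcell.symm
    exact ⟨rfl, hA, he, hw⟩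

theorem Encodes.unique {N : ℕ} (hN : IsAdmissible N) {b : Block} {A e w A' e' w' : ℕ}
    {P P' : Dir → Option Payload} (h : Encodes N b A e w P) (h' : Encodes N b A' e' w' P') :
    A = A' ∧ e = e' ∧ w = w' ∧ P = P' := by
  obtain ⟨d, y, hy⟩ := h.exists_payload
  obtain ⟨-, hA, he, hw⟩ := h.eq_of_payload hN h' hy
  refine ⟨hA, he, hw, funext fun d => Option.ext fun y => ?_⟩
  exact ⟨fun hy => (h.eq_of_payload hN h' hy).1, fun hy => (h'.eq_of_payload hN h hy).1⟩

section Machine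

variable {N : ℕ}

/-- The cell holds messages, all of them tagged `g`. -/
def HasTag (s : CellState N (N * N) Payload) (g : Tag N (N * N)) : Prop :=
  (∃ d m, s d = some m) ∧ ∀ d m, s d = some m → m.1 = g

theorem HasTag.unique {s : CellState N (N * N) Payload} {g g' : Tag N (N * N)} (h : HasTag s g)
    (h' : HasTag s g') : g = g' := by
  obtain ⟨⟨d, m, hm⟩, htag⟩ := h
  rw [← htag d m hm, h'.2 d m hm]

/-- The messages of a cell without their tags. -/
def payloads (s : CellState N (N * N) Payload) : Dir → Option Payload := fun d =>
  (s d).map Prod.snd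

/-- The tag of a message sent in direction `d` by a cell whose messages are tagged `g`. -/
def shiftTag (g : Tag N (N * N)) (d : Dir) : Tag N (N * N) := g + ((d.offset : ZMod N), 1)

open Classical in
/-- The local rule of the automaton: a cell whose messages agree on the tag `g` takes the step of
the period for that tag; a cell whose messages disagree erases them. -/
noncomputable def machineRule (s : CellState N (N * N) Payload) : CellState N (N * N) Payload :=
  fun d =>
    if h : ∃ g, HasTag s g then
      (blockRule N h.choose.1.val h.choose.2.val (payloads s) d).map
        fun y => (shiftTag h.choose d, y)
    else none

theorem machineRule_of_hasTag {s : CellState N (N * N) Payload} {g : Tag N (N * N)}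
    (h : HasTag s g) (d : Dir) :
    machineRule s d =
      (blockRule N g.1.val g.2.val (payloads s) d).map fun y => (shiftTag g d, y) := by
  have hex : ∃ g, HasTag s g := ⟨g, h⟩
  rw [machineRule, dif_pos hex, hex.choose_spec.unique h]

theorem hasTag_of_machineRule {s : CellState N (N * N) Payload} {d : Dir}
    {m : Tag N (N * N) × Payload} (h : machineRule s d = some m) :
    ∃ g, HasTag s g ∧ blockRule N g.1.val g.2.val (payloads s) d = some m.2 ∧
      m.1 = shiftTag g d := by
  by_cases hex : ∃ g, HasTag s g
  · obtain ⟨g, hg⟩ := hex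
    rw [machineRule_of_hasTag hg] at h
    obtain ⟨y, hy, rfl⟩ := Option.map_eq_some_iff.1 h
    exact ⟨g, hg, hy, rfl⟩
  · rw [machineRule, dif_neg hex] at h
    exact absurd h (Option.some_ne_none m).symm

/-- The tag of the messages of a block at the cell `j` and time `n`, counted from its origin. -/
def tagAt (n : ℕ) (j : ℤ) : Tag N (N * N) := (j, n)

theorem phase_eq_iff [NeZero N] {p g : Tag N (N * N)} {n : ℕ} {j : ℤ} :
    phase (p.2.val + n) (p.1.val + j) g = p ↔ g = tagAt n j := by
  have hfst : ((p.1.val : ℤ) : ZMod N) = p.1 := by rw [Int.cast_natCast, ZMod.natCast_zmod_val]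
  have hsnd : (p.2.val : ZMod (N * N)) = p.2 := ZMod.natCast_zmod_val p.2
  simp only [phase, tagAt, Prod.ext_iff, Int.cast_add, Nat.cast_add, hfst, hsnd,
    sub_eq_iff_eq_add, add_right_inj]
  exact and_congr eq_comm eq_comm

open Classical in
/-- The payloads of the messages of phase `p` at time `n`, in coordinates relative to the origin of
the phase. -/
noncomputable def phaseConfig (p : Tag N (N * N)) (z : Diagram N (N * N) Payload) (n : ℕ) :
    PayloadConfig := fun j d =>
  (z (p.2.val + n) (p.1.val + j) d).bind fun m => if m.1 = tagAt n j then some m.2 else none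

section PhaseConfig

variable {p : Tag N (N * N)} {z : Diagram N (N * N) Payload} {n : ℕ} {j : ℤ}

theorem phaseConfig_eq_some_iff {d : Dir} {y : Payload} :
    phaseConfig p z n j d = some y ↔
      z (p.2.val + n) (p.1.val + j) d = some (tagAt n j, y) := by
  simp only [phaseConfig, Option.bind_eq_some_iff, Option.ite_none_right_eq_some,
    Option.some.injEq]
  constructor
  · rintro ⟨m, hm, htag, rfl⟩
    rw [hm, ← htag]
  · exact fun h => ⟨_, h, rfl, rfl⟩

theorem phaseConfig_ne_none_iff [NeZero N] {d : Dir} :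
    phaseConfig p z n j d ≠ none ↔ ∃ m, z (p.2.val + n) (p.1.val + j) d = some m ∧
      phase (p.2.val + n) (p.1.val + j) m.1 = p := by
  rw [Option.ne_none_iff_exists']
  simp only [phaseConfig_eq_some_iff, phase_eq_iff]
  constructor
  · exact fun ⟨y, hy⟩ => ⟨_, hy, rfl⟩
  · rintro ⟨⟨_, y⟩, hm, rfl⟩
    exact ⟨y, hm⟩

theorem occupiedIn_iff_phaseConfig [NeZero N] :
    OccupiedIn p z (p.2.val + n) (p.1.val + j) ↔ ∃ d, phaseConfig p z n j d ≠ none := by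
  simp only [phaseConfig_ne_none_iff, OccupiedIn]

theorem emitsIn_iff_phaseConfig [NeZero N] :
    EmitsIn p z (p.2.val + n) (p.1.val + j) ↔
      ∃ d : Dir, phaseConfig p z (n + 1) (j + d.offset) d ≠ none := by
  simp only [phaseConfig_ne_none_iff, EmitsIn, add_assoc]

theorem payloads_eq_phaseConfig (h : HasTag (z (p.2.val + n) (p.1.val + j)) (tagAt n j)) :
    payloads (z (p.2.val + n) (p.1.val + j)) = phaseConfig p z n j := by
  funext d
  refine Option.ext fun y => ?_
  rw [phaseConfig_eq_some_iff, payloads, Option.map_eq_some_iff]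
  constructor
  · rintro ⟨m, hm, rfl⟩
    rw [hm, ← h.2 d m hm]
  · exact fun hm => ⟨_, hm, rfl⟩

theorem eq_tagAt_of_shiftTag {g : Tag N (N * N)} {d : Dir}
    (h : tagAt (n + 1) j = shiftTag g d) : g = tagAt n (j - d.offset) := by
  rw [eq_comm, shiftTag, ← eq_sub_iff_add_eq] at h
  simp [h, tagAt]

theorem tagAt_fst_val [NeZero N] : (tagAt (N := N) n j).1.val = (j % N).toNat := by
  have h := ZMod.val_intCast (n := N) j
  change ((j : ZMod N)).val = _
  omega

theorem tagAt_snd_val (θ : ℕ) (hn : n < N * N) :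
    (tagAt (N := N) (N * N * θ + n) j).2.val = n := by
  rw [tagAt, ZMod.val_natCast, Nat.mul_add_mod, Nat.mod_eq_of_lt hn]

theorem isLossyPeriod_phaseConfig [NeZero N] (hz : IsLossyOrbit machineRule z) (θ : ℕ) :
    IsLossyPeriod N fun n => phaseConfig p z (N * N * θ + n) := by
  intro n hn j d y hy
  have hmessage := phaseConfig_eq_some_iff.1 hy
  rw [← add_assoc (N * N * θ), ← add_assoc p.2.val] at hmessage
  obtain ⟨g, hg, hblock, htag⟩ := hasTag_of_machineRule (hz _ _ _ _ hmessage)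
  obtain rfl := eq_tagAt_of_shiftTag htag
  rwa [add_sub_assoc, payloads_eq_phaseConfig (by rwa [← add_sub_assoc]), tagAt_fst_val,
    tagAt_snd_val θ hn] at hblock

end PhaseConfig

/-- The step of the period in slot `e` at which the head is at position `w`. -/
def stepIndex (N e w : ℕ) : ℕ := e * N + headPos N e w

theorem stepIndex_lt {e w : ℕ} (he : e < N) (hw : w < N) : stepIndex N e w < N * N := by
  have hhead := headPos_lt (e := e) hw
  have hslot : (e + 1) * N ≤ N * N := Nat.mul_le_mul_right _ he
  rw [Nat.succ_mul] at hslot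
  unfold stepIndex
  omega

theorem natCast_stepIndex_next (hN : 2 ∣ N) {e w : ℕ} (hw : w < N) :
    (stepIndex N (nextSlot N e w) (nextHead N e w) : ZMod (N * N)) = stepIndex N e w + 1 := by
  have hwrap : ((N * N : ℕ) : ZMod (N * N)) = 0 := ZMod.natCast_self _
  by_cases hlast : e + 1 = N ∧ w = 0
  · obtain ⟨rfl, rfl⟩ := hlast
    have hodd : e % 2 = 1 := by omega
    have hindex : stepIndex (e + 1) e 0 + 1 = (e + 1) * (e + 1) := by
      rw [stepIndex, headPos, if_pos hodd, Nat.succ_mul]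
      omega
    rw [← Nat.cast_succ, Nat.succ_eq_add_one, hindex, hwrap]
    simp [stepIndex, nextSlot, nextHead, cyclicSucc, headPos, hodd]
  · rw [← Nat.cast_succ]
    congr 1
    unfold stepIndex nextSlot nextHead cyclicSucc headPos
    have := Nat.succ_mul e N
    split_ifs <;> grind

/-- The tag of a message sent by the simulated cell with address `A` in slot `e` with the head at
position `w`. -/
def tagOf (N A e w : ℕ) : Tag N (N * N) := (A, stepIndex N e w)

theorem blockRule_tagOf {A e w : ℕ} (hA : A < N) (he : e < N) (hw : w < N)
    (P : Dir → Option Payload) (d : Dir) :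
    blockRule N (tagOf N A e w).1.val (tagOf N A e w).2.val P d =
      localRule (ruleInput N A e w P) d := by
  have hhead := headPos_lt (e := e) hw
  rw [blockRule, slotRule, tagOf, ZMod.val_natCast_of_lt hA,
    ZMod.val_natCast_of_lt (stepIndex_lt he hw), stepIndex, div_slot hhead, mod_slot hhead,
    headPos_headPos hw]

theorem natCast_cyclicSucc (x : ℕ) : (cyclicSucc N x : ZMod N) = x + 1 := by
  unfold cyclicSucc
  split_ifs with h
  · rw [Nat.cast_zero, ← Nat.cast_succ, Nat.succ_eq_add_one, h, ZMod.natCast_self]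
  · exact Nat.cast_succ x

theorem natCast_cyclicPred [NeZero N] (x : ℕ) : (cyclicPred N x : ZMod N) = x - 1 := by
  have hpos := NeZero.one_le (n := N)
  unfold cyclicPred
  split_ifs with h
  · simp [Nat.cast_sub hpos, h]
  · rw [Nat.cast_sub (by omega), Nat.cast_one]

theorem tagOf_next [NeZero N] (hN : 2 ∣ N) {A e w : ℕ} (hw : w < N) (d : Dir) :
    tagOf N (nextTagDigits N A e w (.A d)) (nextTagDigits N A e w .E) (nextTagDigits N A e w .W) =
      shiftTag (tagOf N A e w) d := by
  refine Prod.ext ?_ (natCast_stepIndex_next hN hw)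
  cases d <;>
    simp [tagOf, shiftTag, nextTagDigits, natCast_cyclicSucc, natCast_cyclicPred, Dir.offset,
      sub_eq_add_neg]

end Machine

section Decoding

variable {N : ℕ}

open Classical in
/-- The simulated diagram of phase `p`: at time `θ` its cell `X` holds the messages encoded by the
block `X` at the start of period `θ` of the phase, if there are any. -/
noncomputable def decodePhase (p : Tag N (N * N)) (z : Diagram N (N * N) Payload) :
    Diagram N (N * N) Payload := fun θ X d =>
  if h : ∃ q : ℕ × ℕ × ℕ × (Dir → Option Payload),
      Encodes N (blockAt N (phaseConfig p z (N * N * θ)) X) q.1 q.2.1 q.2.2.1 q.2.2.2 then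
    (h.choose.2.2.2 d).map fun y => (tagOf N h.choose.1 h.choose.2.1 h.choose.2.2.1, y)
  else none

section

variable {p : Tag N (N * N)} {z : Diagram N (N * N) Payload} {θ : ℕ} {X : ℤ}

theorem decodePhase_of_encodes (hN : IsAdmissible N) {A e w : ℕ} {P : Dir → Option Payload}
    (h : Encodes N (blockAt N (phaseConfig p z (N * N * θ)) X) A e w P) (d : Dir) :
    decodePhase p z θ X d = (P d).map fun y => (tagOf N A e w, y) := by
  have hex : ∃ q : ℕ × ℕ × ℕ × (Dir → Option Payload),
      Encodes N (blockAt N (phaseConfig p z (N * N * θ)) X) q.1 q.2.1 q.2.2.1 q.2.2.2 :=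
    ⟨⟨A, e, w, P⟩, h⟩
  obtain ⟨hA, he, hw, hP⟩ := hex.choose_spec.unique hN h
  rw [decodePhase, dif_pos hex, hA, he, hw, hP]

theorem exists_encodes_of_decodePhase (hN : IsAdmissible N) {d : Dir}
    {m : Tag N (N * N) × Payload} (h : decodePhase p z θ X d = some m) :
    ∃ A e w P y, Encodes N (blockAt N (phaseConfig p z (N * N * θ)) X) A e w P ∧
      P d = some y ∧ m = (tagOf N A e w, y) := by
  by_cases hX : EncodesAt N (phaseConfig p z (N * N * θ)) X
  · obtain ⟨A, e, w, P, hP⟩ := hX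
    rw [decodePhase_of_encodes hN hP] at h
    obtain ⟨y, hy, rfl⟩ := Option.map_eq_some_iff.1 h
    exact ⟨A, e, w, P, y, hP, hy, rfl⟩
  · rw [decodePhase, dif_neg fun ⟨q, hq⟩ => hX ⟨_, _, _, _, hq⟩] at h
    exact absurd h (Option.some_ne_none m).symm

theorem occupied_decodePhase_iff (hN : IsAdmissible N) :
    Occupied (decodePhase p z) θ X ↔ EncodesAt N (phaseConfig p z (N * N * θ)) X := by
  constructor
  · rintro ⟨d, m, hm⟩
    obtain ⟨A, e, w, P, -, hP, -⟩ := exists_encodes_of_decodePhase hN hm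
    exact ⟨A, e, w, P, hP⟩
  · rintro ⟨A, e, w, P, hP⟩
    obtain ⟨d, y, hy⟩ := hP.exists_payload
    exact ⟨d, _, by rw [decodePhase_of_encodes hN hP, hy]; rfl⟩

theorem exists_phaseConfig_eq_letter (hN : IsAdmissible N) {d : Dir}
    {m : Tag N (N * N) × Payload} (h : decodePhase p z θ X d = some m) :
    ∃ A < N, ∃ e < N, ∃ w < N, ∃ y, m = (tagOf N A e w, y) ∧ ∀ a < N,
      phaseConfig p z (N * N * θ) (N * X + a) d = some (.letter (encodeLetter A e w y a)) := by
  obtain ⟨A, e, w, P, y, hP, hy, rfl⟩ := exists_encodes_of_decodePhase hN h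
  refine ⟨A, hP.address_lt, e, hP.slot_lt, w, hP.head_lt, y, rfl, fun a ha => ?_⟩
  exact (hP.eq_letter a ha d).trans (congrArg _ hy)

theorem isSubconfig_phaseConfig_succ (hN : IsAdmissible N) [NeZero N]
    (hz : IsLossyOrbit machineRule z) (p : Tag N (N * N)) (θ : ℕ) :
    IsSubconfig (phaseConfig p z (N * N * (θ + 1)))
      (payloadRun N (N * N) (phaseConfig p z (N * N * θ))) :=
  (isLossyPeriod_phaseConfig hz θ).isSubconfig_payloadRun hN (N * N) le_rfl

theorem machineRule_decodePhase (hN : IsAdmissible N) {A e w : ℕ} {P : Dir → Option Payload}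
    (h : Encodes N (blockAt N (phaseConfig p z (N * N * θ)) X) A e w P) (d : Dir) :
    machineRule (decodePhase p z θ X) d =
      (localRule (ruleInput N A e w P) d).map fun y => (shiftTag (tagOf N A e w) d, y) := by
  have htag : HasTag (decodePhase p z θ X) (tagOf N A e w) := by
    refine ⟨(occupied_decodePhase_iff hN).2 ⟨_, _, _, _, h⟩, fun d m hm => ?_⟩
    rw [decodePhase_of_encodes hN h] at hm
    obtain ⟨y, -, rfl⟩ := Option.map_eq_some_iff.1 hm
    rfl
  have hpayloads : payloads (decodePhase p z θ X) = P := by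
    funext d
    rw [payloads, decodePhase_of_encodes hN h, Option.map_map]
    exact Option.map_id'
  rw [machineRule_of_hasTag htag, hpayloads, blockRule_tagOf h.address_lt h.slot_lt h.head_lt]

theorem isLossyOrbit_decodePhase (hN : IsAdmissible N) [NeZero N] (p : Tag N (N * N))
    (z : Diagram N (N * N) Payload) (hz : IsLossyOrbit machineRule z) :
    IsLossyOrbit machineRule (decodePhase p z) := by
  intro θ X d m hm
  obtain ⟨A, hA, e, he, w, hw, y, rfl, hletter⟩ := exists_phaseConfig_eq_letter hN hm
  have hrun (a : ℕ) (ha : a < N) := isSubconfig_phaseConfig_succ hN hz p θ _ _ _ (hletter a ha)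
  by_cases hX : EncodesAt N (phaseConfig p z (N * N * θ)) (X - d.offset)
  · obtain ⟨A', e', w', P, hP⟩ := hX
    have hrule (a : ℕ) (ha : a < N) := Option.map_eq_some_iff.1
      ((payloadRun_period_of_encodes hN _ X d hP ha).symm.trans (hrun a ha))
    obtain ⟨y', hy', -⟩ := hrule A hA
    obtain ⟨hA', he', hw', rfl⟩ := encodeLetter_inj hN hA he hw (y := y) (y' := y') fun a ha => by
      obtain ⟨_, hy₁, hcode⟩ := hrule a ha
      obtain rfl := Option.some.inj (hy₁.symm.trans hy')
      exact (Payload.letter.inj hcode).symm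
    rw [machineRule_decodePhase hN hP, hy', Option.map_some,
      ← tagOf_next (Nat.dvd_trans ⟨2, rfl⟩ hN.four_dvd) hP.head_lt, ← hA', ← he', ← hw']
  · have hnone := hrun A hA
    rw [payloadRun_period_of_not_encodes hN _ X d hX hA] at hnone
    exact absurd hnone.symm (Option.some_ne_none _)

end

end Decoding

section SelfSimulation

variable {N : ℕ} {p : Tag N (N * N)} {z : Diagram N (N * N) Payload} {θ : ℕ} {X : ℤ}

theorem occupiedIn_of_occupied_decodePhase (hN : IsAdmissible N) [NeZero N]
    (h : Occupied (decodePhase p z) θ X) {a : ℕ} (ha : a < N) :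
    OccupiedIn p z (p.2.val + N * N * θ) (p.1.val + N * X + a) := by
  obtain ⟨d, m, hm⟩ := h
  obtain ⟨_, -, _, -, _, -, _, -, hletter⟩ := exists_phaseConfig_eq_letter hN hm
  rw [add_assoc, occupiedIn_iff_phaseConfig]
  exact ⟨d, Option.ne_none_iff_exists'.2 ⟨_, hletter a ha⟩⟩

theorem exists_phaseConfig_ne_none_of_emits (hN : IsAdmissible N)
    (h : Emits (decodePhase p z) θ X) : ∃ d : Dir, ∀ a < N,
      phaseConfig p z (N * N * θ + N * N) (N * (X + d.offset) + a) d ≠ none := by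
  obtain ⟨d, m, hm⟩ := h
  obtain ⟨_, -, _, -, _, -, _, -, hletter⟩ := exists_phaseConfig_eq_letter hN hm
  exact ⟨d, fun a ha => Option.ne_none_iff_exists'.2 ⟨_, hletter a ha⟩⟩

theorem exists_emitsIn_near_of_emits (hN : IsAdmissible N) [NeZero N]
    (hz : IsLossyOrbit machineRule z) (h : Emits (decodePhase p z) θ X) {τ : ℕ}
    (hτ : τ < N * N - N) {a : ℕ} (ha : a < N) :
    ∃ j, |j - (p.1.val + N * X + a)| ≤ 1 ∧ EmitsIn p z (p.2.val + N * N * θ + τ) j := by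
  obtain ⟨d, harrived⟩ := exists_phaseConfig_ne_none_of_emits hN h
  have hperiod := isLossyPeriod_phaseConfig (p := p) hz θ
  have hlength : (N - 1) * N + N = N * N := by
    rw [← Nat.succ_mul, Nat.succ_eq_add_one, Nat.sub_add_cancel NeZero.one_le]
  have hlaunch : ∀ a < N,
      blockAt N (phaseConfig p z (N * N * θ + (N - 1) * N)) X a .C ≠ none := by
    intro a ha
    have horigin := hperiod.origin_ne_none hN (N - 1) (Nat.sub_lt (NeZero.pos N) one_pos)
      (j := N * (X + d.offset) + a) (d := d) (by
        rw [Nat.sub_add_cancel NeZero.one_le, hlength]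
        exact harrived a ha)
    rwa [Nat.cast_sub NeZero.one_le, Nat.cast_one, sub_add_cancel,
      show (N : ℤ) * (X + d.offset) + a - N * d.offset = N * X + a by ring] at horigin
  obtain ⟨j, d', hj, hv⟩ :=
    hperiod.exists_ne_none_near hN hlaunch τ.succ_pos (by omega) ha
  refine ⟨p.1.val + j, ?_, ?_⟩
  · rwa [add_assoc, add_sub_add_left_eq_sub]
  · rw [add_assoc, emitsIn_iff_phaseConfig]
    exact ⟨d', hv⟩

theorem exists_emitsIn_launch_of_emits (hN : IsAdmissible N) [NeZero N]
    (hz : IsLossyOrbit machineRule z) (h : Emits (decodePhase p z) θ X) {k : ℕ} (hk : k < N) :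
    ∃ d : Dir, EmitsIn p z (p.2.val + N * N * θ + (N * N - k - 1))
      (p.1.val + (N * (X + d.offset) - (k + 1) * d.offset)) := by
  obtain ⟨d, harrived⟩ := exists_phaseConfig_ne_none_of_emits hN h
  have hlaunch := (isLossyPeriod_phaseConfig hz θ).launch_ne_none hN
    (j := N * (X + d.offset)) (by simpa using harrived 0 (NeZero.pos N)) k (by omega)
  have hpos : k < N * N := hk.trans_le (Nat.le_mul_self N)
  refine ⟨d, ?_⟩
  rw [add_assoc, emitsIn_iff_phaseConfig]
  refine ⟨d, ?_⟩
  rwa [show N * N * θ + (N * N - k - 1) + 1 = N * N * θ + (N * N - k) by omega,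
    show (N : ℤ) * (X + d.offset) - (k + 1) * d.offset + d.offset =
      N * (X + d.offset) - k * d.offset by ring]

theorem exists_emitsIn_block_of_emits (hN : IsAdmissible N) [NeZero N]
    (hz : IsLossyOrbit machineRule z) (h : Emits (decodePhase p z) θ X) {τ : ℕ} (hτ : τ < N * N) :
    ∃ j, p.1.val + N * (X - 1) ≤ j ∧ j < p.1.val + N * (X + 2) ∧
      EmitsIn p z (p.2.val + N * N * θ + τ) j := by
  have hlength := hN.length_le
  rw [mul_sub, mul_add]
  by_cases hlaunch : τ < N * N - N
  · obtain ⟨j, hj, hv⟩ := exists_emitsIn_near_of_emits hN hz h hlaunch (NeZero.pos N)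
    rw [abs_le] at hj
    exact ⟨j, by omega, by omega, hv⟩
  · obtain ⟨d, hv⟩ :=
      exists_emitsIn_launch_of_emits hN hz h (k := N * N - τ - 1) (by omega)
    rw [show N * N - (N * N - τ - 1) - 1 = τ by omega, mul_add] at hv
    refine ⟨_, ?_, ?_, hv⟩ <;> cases d <;> simp only [Dir.offset] <;> omega

theorem iverson_exists_le_sum {ι : Type*} [Fintype ι] (P : ι → Prop) :
    iverson (∃ i, P i) ≤ ∑ i, iverson (P i) := by
  by_cases h : ∃ i, P i
  · obtain ⟨i, hi⟩ := h
    calc iverson (∃ i, P i) ≤ 1 := iverson_le_one _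
      _ = iverson (P i) := (if_pos hi).symm
      _ ≤ ∑ i, iverson (P i) :=
        Finset.single_le_sum_of_canonicallyOrdered (f := fun i => iverson (P i)) (Finset.mem_univ i)
  · exact (if_neg h).trans_le (Nat.zero_le _)

theorem iverson_mono {P Q : Prop} (h : P → Q) : iverson P ≤ iverson Q := by
  by_cases hP : P
  · exact ((if_pos hP).trans (if_pos (h hP)).symm).le
  · exact (if_neg hP).trans_le (Nat.zero_le _)

theorem exists_encodesAt_of_phaseConfig_succ (hN : IsAdmissible N) [NeZero N]
    (hz : IsLossyOrbit machineRule z)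
    (h : ∃ a < N, ∃ d, phaseConfig p z (N * N * (θ + 1)) (N * X + a) d ≠ none) :
    ∃ d : Dir, EncodesAt N (phaseConfig p z (N * N * θ)) (X + d.offset) := by
  obtain ⟨a, ha, d, hv⟩ := h
  have hX : EncodesAt N (phaseConfig p z (N * N * θ)) (X - d.offset) := by
    by_contra hX
    exact (isSubconfig_phaseConfig_succ hN hz p θ).ne_none hv
      (payloadRun_period_of_not_encodes hN _ X d hX ha)
  cases d with
  | L => exact ⟨.R, by simpa [Dir.offset] using hX⟩
  | C => exact ⟨.C, by simpa [Dir.offset] using hX⟩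
  | R => exact ⟨.L, by simpa [Dir.offset, sub_eq_add_neg] using hX⟩

theorem sum_occupiedIn_le_of_isLossyOrbit (hN : IsAdmissible N) [NeZero N]
    (hz : IsLossyOrbit machineRule z) (p : Tag N (N * N)) (θ : ℕ) (X : ℤ) {a : ℕ} (ha : a < N) :
    ∑ τ ∈ Finset.range (N * N),
        iverson (OccupiedIn p z (p.2.val + N * N * (θ + 1) + τ) (p.1.val + N * X + a)) ≤
      (N * N - 25 * N) * iverson (Occupied (decodePhase p z) (θ + 1) X) +
        4 * N * ∑ d : Dir, (iverson (Occupied (decodePhase p z) (θ + 1) (X + d.offset)) +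
          iverson (Occupied (decodePhase p z) θ (X + d.offset))) := by
  have hcount := (isLossyPeriod_phaseConfig (p := p) hz (θ + 1)).sum_occupied_le hN X ha
  have hoccupied (τ : ℕ) :
      OccupiedIn p z (p.2.val + N * N * (θ + 1) + τ) (p.1.val + N * X + a) ↔
        ∃ d, phaseConfig p z (N * N * (θ + 1) + τ) (N * X + a) d ≠ none := by
    rw [add_assoc, add_assoc, occupiedIn_iff_phaseConfig]
  simp only [hoccupied, occupied_decodePhase_iff hN, Finset.sum_add_distrib]
  simp only [add_zero] at hcount
  have hnow := iverson_exists_le_sum fun d : Dir =>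
    EncodesAt N (phaseConfig p z (N * N * (θ + 1))) (X + d.offset)
  have hbefore := (iverson_mono (exists_encodesAt_of_phaseConfig_succ (X := X) hN hz (θ := θ)
    (p := p))).trans (iverson_exists_le_sum _)
  refine hcount.trans (Nat.add_le_add_left ?_ _)
  nlinarith

theorem selfSimulation_machineRule (hN : IsAdmissible N) [NeZero N] :
    SelfSimulation N (N * N) (25 * N) (4 * N) machineRule decodePhase where
  sixteen_le := by have := hN.length_le; omega
  four_dvd := hN.four_dvd
  two_dvd_period := (Nat.dvd_trans ⟨2, rfl⟩ hN.four_dvd).mul_right N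
  two_mul_le_period := Nat.mul_le_mul_right _ (by have := hN.length_le; omega)
  vacancy_le := Nat.mul_le_mul_right _ (by have := hN.length_le; omega)
  six_mul_lt_vacancy := by have := NeZero.pos N; omega
  tag_eq_add := by
    intro s d m hm
    obtain ⟨g, hg, -, htag⟩ := hasTag_of_machineRule hm
    exact ⟨hg.1, fun d' m' hm' => hg.2 d' m' hm' ▸ htag⟩
  isLossyOrbit_decode := isLossyOrbit_decodePhase hN
  occupiedIn_of_decode := fun _ _ _ _ h _ ha => occupiedIn_of_occupied_decodePhase hN h ha
  exists_emitsIn_block := fun _ _ hz _ _ h _ hτ => exists_emitsIn_block_of_emits hN hz h hτ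
  exists_emitsIn_near := fun _ _ hz _ _ h _ hτ _ ha =>
    exists_emitsIn_near_of_emits hN hz h hτ ha
  sum_occupiedIn_le := fun p _ hz θ X _ ha => sum_occupiedIn_le_of_isLossyOrbit hN hz p θ X ha

end SelfSimulation

/-! ### The automaton -/

section NeighborhoodMap

variable {α β : Type*}

/-- The global map of the cellular automaton in which a cell and its two neighbours are updated by
the rule `f`. The argument `d` of the rule is the neighbour from which messages travelling in
direction `d` arrive. -/
def neighborhoodMap (f : (Dir → α) → α) (x : ℤ → α) : ℤ → α := fun j => f fun d => x (j - d.offset)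

theorem continuous_neighborhoodMap [TopologicalSpace α] [DiscreteTopology α]
    (f : (Dir → α) → α) : Continuous (neighborhoodMap f) :=
  continuous_pi fun _ => (continuous_of_discreteTopology (f := f)).comp
    (continuous_pi fun _ => continuous_apply _)

theorem neighborhoodMap_shift (f : (Dir → α) → α) (x : ℤ → α) :
    neighborhoodMap f (fun i => x (i + 1)) = fun i => neighborhoodMap f x (i + 1) := by
  funext j
  refine congrArg f (funext fun d => congrArg x ?_)
  exact sub_add_eq_add_sub j d.offset 1

theorem semiconj_neighborhoodMap (e : α ≃ β) (f : (Dir → α) → α) :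
    Function.Semiconj (e ∘ ·) (neighborhoodMap f)
      (neighborhoodMap fun v => e (f (e.symm ∘ v))) := fun x => by
  funext j
  simp only [neighborhoodMap, Function.comp_def, Equiv.symm_apply_apply]

end NeighborhoodMap

section Automaton

variable {N : ℕ}

/-- The global map of the self-simulating automaton. -/
noncomputable def machineMap :
    (ℤ → CellState N (N * N) Payload) → ℤ → CellState N (N * N) Payload :=
  neighborhoodMap fun v d => machineRule (v d) d

theorem machineMap_apply (x : ℤ → CellState N (N * N) Payload) (j : ℤ) (d : Dir) :
    machineMap x j d = machineRule (x (j - d.offset)) d := rfl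

theorem isLossyOrbit_iterate (x : ℤ → CellState N (N * N) Payload) :
    IsLossyOrbit machineRule fun t => machineMap^[t] x := by
  intro t j d m h
  beta_reduce at h
  rwa [Function.iterate_succ_apply', machineMap_apply] at h

theorem machineRule_none (d : Dir) :
    machineRule (fun _ => none : CellState N (N * N) Payload) d = none := by
  refine dif_neg ?_
  rintro ⟨_, ⟨_, _, h⟩, _⟩
  exact Option.some_ne_none _ h.symm

theorem machineMap_none :
    machineMap (fun _ _ => none : ℤ → CellState N (N * N) Payload) = fun _ _ => none :=
  funext fun _ => funext fun d => machineRule_none d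

/-- The configuration with payloads `c` in which all messages have the tags of one phase, at time
`n` of that phase. -/
def taggedConfig (N n : ℕ) (c : PayloadConfig) : ℤ → CellState N (N * N) Payload := fun j d =>
  (c j d).map fun y => (tagAt n j, y)

theorem payloads_taggedConfig (n : ℕ) (c : PayloadConfig) (j : ℤ) :
    payloads (taggedConfig N n c j) = c j := by
  funext d
  rw [payloads, taggedConfig, Option.map_map]
  exact Option.map_id'

theorem hasTag_taggedConfig {n : ℕ} {c : PayloadConfig} {j : ℤ} (h : ∃ d y, c j d = some y) :
    HasTag (taggedConfig N n c j) (tagAt n j) := by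
  obtain ⟨d, y, hy⟩ := h
  refine ⟨⟨d, _, by rw [taggedConfig, hy]; rfl⟩, fun d' m hm => ?_⟩
  obtain ⟨_, -, rfl⟩ := Option.map_eq_some_iff.1 hm
  rfl

theorem exists_eq_some_or_eq_none {δ β : Type*} (s : δ → Option β) :
    (∃ d y, s d = some y) ∨ s = fun _ => none := by
  by_cases h : s = fun _ => none
  · exact .inr h
  · obtain ⟨d, hd⟩ := Function.ne_iff.1 h
    exact .inl ⟨d, Option.ne_none_iff_exists'.1 hd⟩

theorem machineMap_taggedConfig [NeZero N] (n : ℕ) (c : PayloadConfig) :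
    machineMap (taggedConfig N n c) = taggedConfig N (n + 1) (payloadStep N (n % (N * N)) c) := by
  funext j d
  rw [machineMap_apply, taggedConfig, payloadStep]
  rcases exists_eq_some_or_eq_none (c (j - d.offset)) with h | h
  · have htime : (tagAt (N := N) n (j - d.offset)).2.val = n % (N * N) := ZMod.val_natCast _ _
    have hnext : shiftTag (tagAt (N := N) n (j - d.offset)) d = tagAt (n + 1) j := by
      simp [shiftTag, tagAt]
    rw [machineRule_of_hasTag (hasTag_taggedConfig h), payloads_taggedConfig, tagAt_fst_val, htime,
      hnext]
  · have hempty : taggedConfig N n c (j - d.offset) = fun _ => none := by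
      simp [funext_iff, taggedConfig, h]
    rw [hempty, machineRule_none, blockRule, slotRule_none (fun _ => congrFun h _)]
    rfl

theorem iterate_machineMap_taggedConfig [NeZero N] (c : PayloadConfig) : ∀ n ≤ N * N,
    machineMap^[n] (taggedConfig N 0 c) = taggedConfig N n (payloadRun N n c)
  | 0, _ => rfl
  | n + 1, h => by
    rw [Function.iterate_succ_apply', iterate_machineMap_taggedConfig c n (by omega),
      machineMap_taggedConfig, Nat.mod_eq_of_lt (by omega)]
    rfl

theorem machineMap_period_taggedConfig [NeZero N] (c : PayloadConfig) :
    machineMap^[N * N] (taggedConfig N 0 c) = taggedConfig N 0 (payloadRun N (N * N) c) := by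
  rw [iterate_machineMap_taggedConfig c _ le_rfl]
  funext j d
  simp [taggedConfig, tagAt]

/-- Configurations in which all messages belong to one phase. -/
def IsTagged (x : ℤ → CellState N (N * N) Payload) : Prop := ∃ n c, x = taggedConfig N n c

theorem IsTagged.iterate_machineMap [NeZero N] {x : ℤ → CellState N (N * N) Payload}
    (h : IsTagged x) : ∀ n, IsTagged (machineMap^[n] x)
  | 0 => h
  | n + 1 => by
    obtain ⟨n', c, hc⟩ := h.iterate_machineMap n
    rw [Function.iterate_succ_apply', hc]
    exact ⟨_, _, machineMap_taggedConfig n' c⟩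

theorem IsTagged.hasTag_or_eq_none {x : ℤ → CellState N (N * N) Payload} (h : IsTagged x) (j : ℤ) :
    (∃ g, HasTag (x j) g) ∨ x j = fun _ => none := by
  obtain ⟨n, c, rfl⟩ := h
  refine (exists_eq_some_or_eq_none (c j)).imp (fun h => ⟨_, hasTag_taggedConfig h⟩) fun h => ?_
  simp [funext_iff, taggedConfig, h]

/-! ### The encoding of configurations -/

section TagDigits

/-- The address in a tag. -/
def tagAddress (g : Tag N (N * N)) : ℕ := g.1.val

/-- The slot of the step in a tag. -/
def tagSlot (g : Tag N (N * N)) : ℕ := g.2.val / N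

/-- The head position at the step in a tag. -/
def tagHead (g : Tag N (N * N)) : ℕ := headPos N (tagSlot g) (g.2.val % N)

variable [NeZero N] (g : Tag N (N * N))

theorem tagAddress_lt : tagAddress g < N := ZMod.val_lt _

theorem tagSlot_lt : tagSlot g < N := Nat.div_lt_of_lt_mul (ZMod.val_lt g.2)

theorem tagHead_lt : tagHead g < N := headPos_lt (Nat.mod_lt _ (NeZero.pos N))

theorem tagOf_digits : tagOf N (tagAddress g) (tagSlot g) (tagHead g) = g := by
  have hstep : stepIndex N (tagSlot g) (tagHead g) = g.2.val := by
    rw [stepIndex, tagHead, headPos_headPos (Nat.mod_lt _ (NeZero.pos N)), tagSlot,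
      Nat.div_add_mod']
  rw [tagOf, hstep, tagAddress, ZMod.natCast_zmod_val, ZMod.natCast_zmod_val]

end TagDigits

theorem digits_tagOf {A e w : ℕ} (hA : A < N) (he : e < N) (hw : w < N) :
    tagAddress (tagOf N A e w) = A ∧ tagSlot (tagOf N A e w) = e ∧ tagHead (tagOf N A e w) = w := by
  have hhead := headPos_lt (e := e) hw
  have hval : (tagOf N A e w).2.val = e * N + headPos N e w :=
    ZMod.val_natCast_of_lt (stepIndex_lt he hw)
  have hslot : tagSlot (tagOf N A e w) = e := by rw [tagSlot, hval, div_slot hhead]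
  exact ⟨ZMod.val_natCast_of_lt hA, hslot, by
    rw [tagHead, hslot, hval, mod_slot hhead, headPos_headPos hw]⟩

theorem nextTagDigits_lt {A e w : ℕ} (hA : A < N) (he : e < N) (hw : w < N) :
    ∀ k, nextTagDigits N A e w k < N
  | .A .L => cyclicPred_lt hA
  | .A .C => hA
  | .A .R => cyclicSucc_lt hA
  | .E => by
    have hsucc := cyclicSucc_lt he
    simp only [nextTagDigits, nextSlot]
    split_ifs <;> assumption
  | .W => by
    simp only [nextTagDigits, nextHead]
    split_ifs <;> omega

/-- The letter in cell `a` of a block encoding the message `m`. -/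
noncomputable def encodeMessage (m : Tag N (N * N) × Payload) (a : ℕ) : Letter :=
  encodeLetter (tagAddress m.1) (tagSlot m.1) (tagHead m.1) m.2 a

/-- The payloads of `encode x`. -/
noncomputable def encodeConfig (x : ℤ → CellState N (N * N) Payload) : PayloadConfig := fun j d =>
  (x (j / N) d).map fun m => .letter (encodeMessage m (j % N).toNat)

/-- The configuration in which the block `X` encodes the messages of cell `X` of `x`. -/
noncomputable def encode (x : ℤ → CellState N (N * N) Payload) :
    ℤ → CellState N (N * N) Payload :=
  taggedConfig N 0 (encodeConfig x)

theorem encodeConfig_block (x : ℤ → CellState N (N * N) Payload) (X : ℤ) {a : ℕ} (ha : a < N)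
    (d : Dir) :
    encodeConfig x (N * X + a) d = (x X d).map fun m => .letter (encodeMessage m a) := by
  have hblock : ((N : ℤ) * X + a) / N = X := by
    rw [Int.mul_add_ediv_left _ _ (by omega), Int.ediv_eq_zero_of_lt (by omega) (by omega),
      add_zero]
  rw [encodeConfig, toNat_emod_block ha, hblock]

theorem encodes_encodeConfig [NeZero N] {x : ℤ → CellState N (N * N) Payload} {X : ℤ}
    {g : Tag N (N * N)} (h : HasTag (x X) g) :
    Encodes N (blockAt N (encodeConfig x) X) (tagAddress g) (tagSlot g) (tagHead g)
      (payloads (x X)) where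
  address_lt := tagAddress_lt g
  slot_lt := tagSlot_lt g
  head_lt := tagHead_lt g
  exists_payload := by
    obtain ⟨⟨d, m, hm⟩, _⟩ := h
    exact ⟨d, m.2, by rw [payloads, hm]; rfl⟩
  eq_letter := fun a ha d => by
    rw [blockAt, encodeConfig_block x X ha, payloads]
    cases hm : x X d with
    | none => rfl
    | some m => rw [Option.map_some, Option.map_some, Option.map_some, encodeMessage, h.2 d m hm]

theorem not_encodes_encodeConfig [NeZero N] {x : ℤ → CellState N (N * N) Payload} {X : ℤ}
    (h : x X = fun _ => none) : ¬ EncodesAt N (encodeConfig x) X := by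
  rintro ⟨A, e, w, P, hP⟩
  obtain ⟨d, y, hy⟩ := hP.exists_payload
  have hletter := hP.eq_letter 0 (NeZero.pos N) d
  rw [hy, blockAt, encodeConfig_block x X (NeZero.pos N), h] at hletter
  exact Option.some_ne_none _ hletter.symm

theorem machineRule_map_encodeMessage (hN : IsAdmissible N) [NeZero N]
    {s : CellState N (N * N) Payload} {g : Tag N (N * N)} (h : HasTag s g) (d : Dir) (a : ℕ) :
    (machineRule s d).map (fun m => encodeMessage m a) =
      (localRule (ruleInput N (tagAddress g) (tagSlot g) (tagHead g) (payloads s)) d).map fun y =>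
        encodeLetter (nextTagDigits N (tagAddress g) (tagSlot g) (tagHead g) (.A d))
          (nextTagDigits N (tagAddress g) (tagSlot g) (tagHead g) .E)
          (nextTagDigits N (tagAddress g) (tagSlot g) (tagHead g) .W) y a := by
  have hlt := nextTagDigits_lt (tagAddress_lt g) (tagSlot_lt g) (tagHead_lt g)
  have hrule := blockRule_tagOf (tagAddress_lt g) (tagSlot_lt g) (tagHead_lt g) (payloads s) d
  have hnext := tagOf_next (A := tagAddress g) (e := tagSlot g)
    (Nat.dvd_trans ⟨2, rfl⟩ hN.four_dvd) (tagHead_lt g) d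
  rw [tagOf_digits] at hrule hnext
  obtain ⟨hA, he, hw⟩ := digits_tagOf (hlt (.A d)) (hlt .E) (hlt .W)
  rw [hnext] at hA he hw
  rw [machineRule_of_hasTag h, hrule, Option.map_map]
  simp only [Function.comp_def, encodeMessage, hA, he, hw]

theorem payloadRun_period_encodeConfig (hN : IsAdmissible N) [NeZero N]
    {x : ℤ → CellState N (N * N) Payload} (hx : IsTagged x) :
    payloadRun N (N * N) (encodeConfig x) = encodeConfig (machineMap x) := by
  funext j d
  have hpos : (0 : ℤ) < N := by exact_mod_cast NeZero.pos N
  obtain ⟨X, a, ha, rfl⟩ : ∃ (X : ℤ) (a : ℕ), a < N ∧ j = N * X + a := by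
    have hmod := Int.toNat_of_nonneg (Int.emod_nonneg j hpos.ne')
    exact ⟨j / N, (j % N).toNat, by have := Int.emod_lt_of_pos j hpos; omega,
      by rw [hmod, Int.mul_ediv_add_emod]⟩
  rw [encodeConfig_block _ X ha, machineMap_apply]
  rcases hx.hasTag_or_eq_none (X - d.offset) with ⟨g, hg⟩ | hempty
  · have hmap := congrArg (Option.map Payload.letter) (machineRule_map_encodeMessage hN hg d a)
    rw [Option.map_map, Option.map_map] at hmap
    exact (payloadRun_period_of_encodes hN _ X d (encodes_encodeConfig hg) ha).trans hmap.symm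
  · rw [payloadRun_period_of_not_encodes hN _ X d (not_encodes_encodeConfig hempty) ha, hempty,
      machineRule_none]
    rfl

theorem machineMap_period_encode (hN : IsAdmissible N) [NeZero N]
    {x : ℤ → CellState N (N * N) Payload} (hx : IsTagged x) :
    machineMap^[N * N] (encode x) = encode (machineMap x) := by
  rw [encode, machineMap_period_taggedConfig, payloadRun_period_encodeConfig hN hx, encode]

theorem machineMap_periods_encode (hN : IsAdmissible N) [NeZero N]
    {x : ℤ → CellState N (N * N) Payload} (hx : IsTagged x) :
    ∀ i, machineMap^[N * N * i] (encode x) = encode (machineMap^[i] x)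
  | 0 => rfl
  | i + 1 => by
    rw [Nat.mul_succ, add_comm, Function.iterate_add_apply, machineMap_periods_encode hN hx i,
      machineMap_period_encode hN (hx.iterate_machineMap i), Function.iterate_succ_apply']

theorem IsTagged.iterate_encode {x : ℤ → CellState N (N * N) Payload} (h : IsTagged x) :
    ∀ k, IsTagged (encode^[k] x)
  | 0 => h
  | k + 1 => by
    rw [Function.iterate_succ_apply']
    exact ⟨0, _, rfl⟩

theorem iterate_machineMap_iterate_encode (hN : IsAdmissible N) [NeZero N]
    {x : ℤ → CellState N (N * N) Payload} (hx : IsTagged x) :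
    ∀ k, machineMap^[(N * N) ^ k] (encode^[k] x) = encode^[k] (machineMap x)
  | 0 => rfl
  | k + 1 => by
    rw [Function.iterate_succ_apply', pow_succ', machineMap_periods_encode hN (hx.iterate_encode k),
      iterate_machineMap_iterate_encode hN hx k, Function.iterate_succ_apply']

/-! ### Dense configurations at arbitrarily late times -/

/-- Configurations with a message in every cell. -/
def IsFull (x : ℤ → CellState N (N * N) Payload) : Prop := ∀ j, x j ≠ fun _ => none

theorem IsFull.encode {x : ℤ → CellState N (N * N) Payload} (h : IsFull x) :
    IsFull (encode x) := by
  intro j hj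
  refine h (j / N) (funext fun d => ?_)
  have hd := congrFun hj d
  rwa [SelfSimulatingCA.encode, taggedConfig, encodeConfig, Option.map_eq_none_iff,
    Option.map_eq_none_iff] at hd

theorem IsFull.iterate_encode {x : ℤ → CellState N (N * N) Payload} (h : IsFull x) :
    ∀ k, IsFull (SelfSimulatingCA.encode^[k] x)
  | 0 => h
  | k + 1 => by
    rw [Function.iterate_succ_apply']
    exact (h.iterate_encode k).encode

/-- The payloads with the same idle body in every cell. -/
def idleConfig : PayloadConfig := fun _ d => if d = .C then
  some (.body (⟨fun _ => false, fun _ => false, fun _ => false, fun _ => false, fun _ => false⟩,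
    none)) else none

/- The tags say that the first slot has already begun, so the bodies are kept for one step. -/
theorem isFull_machineMap_idleConfig (hN : 1 < N) :
    IsFull (machineMap (taggedConfig N 1 idleConfig)) := by
  have : NeZero N := ⟨by omega⟩
  have hstep : 1 % (N * N) = 0 * N + (0 + 1) := by
    rw [Nat.mod_eq_of_lt (by nlinarith), zero_mul]
  intro j hj
  have hcenter := congrFun hj .C
  rw [machineMap_taggedConfig, taggedConfig, Option.map_eq_none_iff, payloadStep, hstep,
    blockRule_eq_slotRule hN, slotRule_start_succ] at hcenter
  simp [stay, idleConfig, bodyOf] at hcenter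

theorem exists_isFull_iterate (hN : IsAdmissible N) [NeZero N] (n : ℕ) :
    ∃ x : ℤ → CellState N (N * N) Payload, IsFull (machineMap^[n] x) := by
  have hlength := hN.length_le
  have hlate : n ≤ (N * N) ^ n := (Nat.lt_pow_self (by nlinarith)).le
  refine ⟨machineMap^[(N * N) ^ n - n] (encode^[n] (taggedConfig N 1 idleConfig)), ?_⟩
  rw [← Function.iterate_add_apply, Nat.add_sub_cancel' hlate,
    iterate_machineMap_iterate_encode hN ⟨1, idleConfig, rfl⟩]
  exact (isFull_machineMap_idleConfig (by omega)).iterate_encode n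

theorem exists_sum_iverson_machineMap_le (hN : IsAdmissible N) [NeZero N] {ε : ℝ} (hε : 0 < ε) :
    ∃ C : ℝ, ∀ (x : ℤ → CellState N (N * N) Payload) (j : ℤ) (W : ℕ),
      ∑ t ∈ Finset.range W, (iverson (machineMap^[t] x j ≠ fun _ => none) : ℝ) ≤ ε * W + C := by
  obtain ⟨C, hC⟩ := (selfSimulation_machineRule hN).exists_occupationTime_le hε
  refine ⟨C, fun x j W => ?_⟩
  have hoccupied (t : ℕ) : (machineMap^[t] x j ≠ fun _ => none) ↔
      Occupied (fun t => machineMap^[t] x) t j := by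
    simp only [Function.ne_iff, Option.ne_none_iff_exists', Occupied]
  simp only [hoccupied]
  exact_mod_cast hC _ (isLossyOrbit_iterate x) j W

end Automaton

theorem exists_isAdmissible : ∃ N, IsAdmissible N :=
  ⟨4 * (program.length + payloadCount + 60), ⟨_, rfl⟩, by omega, by omega⟩

theorem exists_equiv_fin_succ (X : Type*) [Finite X] [Nonempty X] :
    ∃ m, Nonempty (X ≃ Fin (m + 1)) := by
  obtain ⟨n, ⟨e⟩⟩ := Finite.exists_equiv_fin X
  obtain _ | m := n
  · exact (e (Classical.arbitrary X)).elim0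
  · exact ⟨m, ⟨e⟩⟩

theorem indicator_one_eq_iverson {X : Type*} (A : Set X) (x : X) :
    A.indicator (1 : X → ℝ) x = iverson (x ∈ A) := by
  classical
  rw [iverson, Set.indicator_apply]
  split_ifs <;> simp

end SelfSimulatingCA

open SelfSimulatingCA

/-- There exists a cellular automaton with a quiescent state which is
uniquely ergodic but not asymptotically nilpotent in density. -/
theorem exists_uniquelyErgodic_not_AND_CA :
    ∃ (m : ℕ) (B : Fin (m + 1)) (Φ : (ℤ → Fin (m + 1)) → (ℤ → Fin (m + 1))),
      Continuous Φ ∧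
      (∀ x : ℤ → Fin (m + 1), Φ (fun i => x (i + 1)) = fun i => Φ x (i + 1)) ∧
      Φ (fun _ => B) = (fun _ => B) ∧
      (∃! μ : Measure (ℤ → Fin (m + 1)), IsProbabilityMeasure μ ∧
          ∀ A : Set (ℤ → Fin (m + 1)), MeasurableSet A → μ (Φ ⁻¹' A) = μ A) ∧
      ¬ (∀ ε : ℝ, 0 < ε → ∃ n : ℕ, ∀ x : ℤ → Fin (m + 1),
          besicovitchDist (Φ^[n] x) (fun _ => B) < ε) := by
  obtain ⟨N, hN⟩ := exists_isAdmissible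
  have : NeZero N := ⟨by have := hN.length_le; omega⟩
  have : Nonempty (CellState N (N * N) Payload) := ⟨fun _ => none⟩
  obtain ⟨m, ⟨E⟩⟩ := exists_equiv_fin_succ (CellState N (N * N) Payload)
  set Φ := neighborhoodMap fun v => E fun d => machineRule ((E.symm ∘ v) d) d
  have hconj : Function.Semiconj (E ∘ ·) machineMap Φ := semiconj_neighborhoodMap E _
  have hcont : Continuous Φ := continuous_neighborhoodMap _
  have hquiescent : Φ (fun _ => E fun _ => none) = fun _ => E fun _ => none :=
    (hconj fun _ _ => none).symm.trans (congrArg (E ∘ ·) machineMap_none)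
  refine ⟨m, E fun _ => none, Φ, hcont, neighborhoodMap_shift _, hquiescent,
    existsUnique_invariant_of_sum_indicator_le hcont.measurable hquiescent fun j ε hε => ?_,
    fun hnilpotent => ?_⟩
  · obtain ⟨C, hC⟩ := exists_sum_iverson_machineMap_le hN hε
    refine ⟨C, fun y W => ?_⟩
    obtain ⟨x, rfl⟩ := E.surjective.comp_left y
    simpa [indicator_one_eq_iverson, ← (hconj.iterate_right _).eq] using hC x j W
  · obtain ⟨n, hn⟩ := hnilpotent 1 one_pos
    obtain ⟨x, hx⟩ := exists_isFull_iterate hN n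
    refine (hn (E ∘ x)).ne (besicovitchDist_eq_one_of_forall_ne fun j => ?_)
    rw [← (hconj.iterate_right n).eq]
    exact E.injective.ne (hx j)
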